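/- arXiv:2507.11672 — 8 statements merged into one kernel-verified Lean document; each statement's English description precedes it below -/
import Mathlib

section
/- Let M = ∏_{i=1}^{K} p_i^{n_i} with p_1, …, p_K distinct primes and n_i ≥ 1, let S be a set of divisors of M each at least 2, and let A : ℤ_M → ℤ be an integer-weighted multiset with Φ_s(X) ∣ A(X) for all s ∈ S. For each i set EXP_i(S) := {α ≥ 1 : ∃ s ∈ S with p_i^α ∥ s} and E_i := #EXP_i(S), and let M' := ∏_{i=1}^{K} p_i^{E_i}. Then there exists A' : ℤ_{M'} → ℤ such that: (i) the total mass of A' equals the total mass of A; (ii) for every N ∈ S, Φ_{N'}(X) ∣ A'(X), where N' := ∏_{i=1}^{K} p_i^{ℓ_i} and ℓ_i := #{β ∈ EXP_i(S) : β ≤ v_{p_i}(N)} with v_{p_i}(N) the p_i-adic valuation of N. Moreover, if A has nonnegative weights and positive total mass, then A' can be taken with nonnegative weights and positive total mass. -/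
open Polynomial

/-- Mask polynomial of an integer-weighted multiset on `ZMod M`:
`A(X) = ∑_{x ∈ ℤ_M} w(x) · X^{x.val}`. -/
noncomputable def zwmaskPoly (M : ℕ) (w : ZMod M → ℤ) : Polynomial ℤ :=
  ∑ i ∈ Finset.range M, C (w (i : ZMod M)) * X ^ i

/-- Total mass `∑_x w(x)` of an integer-weighted multiset on `ZMod M`. -/
def zwmass (M : ℕ) (w : ZMod M → ℤ) : ℤ :=
  ∑ i ∈ Finset.range M, w (i : ZMod M)

/-- The exponent set `EXP_p(S) = {α ≥ 1 : ∃ s ∈ S with p^α ∥ s}`. -/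
def ExpSet (S : Finset ℕ) (p : ℕ) : Set ℕ :=
  {α : ℕ | 1 ≤ α ∧ ∃ s ∈ S, p ^ α ∣ s ∧ ¬ p ^ (α + 1) ∣ s}


/-- The compressed digit map: keep the digits at positions `β - 1`, `β ∈ E`. -/
def digT (E : Finset ℕ) (p x : ℕ) : ℕ :=
  ∑ β ∈ E, (x / p ^ (β - 1) % p) * p ^ (E.filter (· < β)).card

theorem dig_same (p β d x : ℕ) (hp : 0 < p) (hβ : 1 ≤ β) (h : p ^ β ∣ d) :
    (x + d) / p ^ (β - 1) % p = x / p ^ (β - 1) % p := by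
  obtain ⟨e, rfl⟩ := h
  obtain ⟨b, rfl⟩ : ∃ b, β = b + 1 := ⟨β - 1, by omega⟩
  have : x + p ^ (b + 1) * e = x + p ^ b * (p * e) := by ring
  rw [Nat.add_sub_cancel, this, Nat.add_mul_div_left _ _ (pow_pos hp b), Nat.add_mul_mod_self_left]

theorem digT_same (E : Finset ℕ) (hE : ∀ β ∈ E, 1 ≤ β) (p a d : ℕ) (hp : 0 < p) (η : ℂ)
    (hη : η ^ (p ^ (E.filter (· ≤ a)).card) = 1) (hd : p ^ a ∣ d) (x : ℕ) :
    η ^ digT E p (x + d) = η ^ digT E p x := by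
  unfold digT
  rw [← Finset.prod_pow_eq_pow_sum, ← Finset.prod_pow_eq_pow_sum]
  refine Finset.prod_congr rfl fun β hβ => ?_
  by_cases h : β ≤ a
  · rw [dig_same p β d x hp (hE β hβ) ((pow_dvd_pow p h).trans hd)]
  · have h1 : (E.filter (· ≤ a)).card ≤ (E.filter (· < β)).card := by
      apply Finset.card_le_card
      intro y hy
      simp only [Finset.mem_filter] at hy ⊢
      exact ⟨hy.1, by omega⟩
    have h2 : η ^ (p ^ (E.filter (· < β)).card) = 1 := by
      obtain ⟨e, he⟩ := pow_dvd_pow p h1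
      rw [he, pow_mul, hη, one_pow]
    rw [pow_mul', pow_mul', h2, one_pow, one_pow]

theorem digT_shift (E : Finset ℕ) (hE : ∀ β ∈ E, 1 ≤ β) (p a c : ℕ) (hp : p.Prime) (ha : a ∈ E)
    (η : ℂ) (hη : IsPrimitiveRoot η (p ^ (E.filter (· ≤ a)).card)) (hc : ¬ p ∣ c) :
    ∃ ω : ℂ, ω ≠ 1 ∧ ∀ x, η ^ digT E p (x + p ^ (a - 1) * c) = ω * η ^ digT E p x := by
  set r := (E.filter (· < a)).card with hr
  have hl : (E.filter (· ≤ a)).card = r + 1 := by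
    have : E.filter (· ≤ a) = insert a (E.filter (· < a)) := by
      ext y
      simp only [Finset.mem_filter, Finset.mem_insert]
      constructor
      · rintro ⟨h1, h2⟩
        rcases h2.eq_or_lt with h | h
        · exact Or.inl h
        · exact Or.inr ⟨h1, h⟩
      · rintro (rfl | h)
        · exact ⟨ha, le_rfl⟩
        · exact ⟨h.1, h.2.le⟩
    rw [this, Finset.card_insert_of_notMem (by simp)]
  rw [hl] at hη
  have hθ : IsPrimitiveRoot (η ^ p ^ r) p := hη.pow (pow_pos hp.pos _) (pow_succ p r)
  refine ⟨(η ^ p ^ r) ^ c, fun h => hc (hθ.dvd_of_pow_eq_one c h), fun x => ?_⟩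
  unfold digT
  rw [← Finset.prod_pow_eq_pow_sum, ← Finset.prod_pow_eq_pow_sum,
    ← Finset.mul_prod_erase _ _ ha, ← Finset.mul_prod_erase E
      (fun β => η ^ (x / p ^ (β - 1) % p * p ^ (E.filter (· < β)).card)) ha, ← mul_assoc]
  congr 1
  · rw [← hr, Nat.add_mul_div_left _ _ (pow_pos hp.pos _)]
    have key : ∀ m, η ^ (m % p * p ^ r) = (η ^ p ^ r) ^ m := by
      intro m
      rw [mul_comm, pow_mul]
      conv_rhs => rw [← Nat.mod_add_div m p, pow_add, pow_mul, hθ.pow_eq_one, one_pow, mul_one]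
    rw [key, key, pow_add, mul_comm]
  · refine Finset.prod_congr rfl fun β hβ => ?_
    rw [Finset.mem_erase] at hβ
    rcases lt_or_gt_of_ne hβ.1 with h | h
    · rw [dig_same p β _ x hp.pos (hE β hβ.2)
        ((pow_dvd_pow p (by omega : β ≤ a - 1)).trans (dvd_mul_right _ _))]
    · have h1 : r + 1 ≤ (E.filter (· < β)).card := by
        rw [← hl]
        apply Finset.card_le_card
        intro y hy
        simp only [Finset.mem_filter] at hy ⊢
        exact ⟨hy.1, by omega⟩
      have h2 : η ^ (p ^ (E.filter (· < β)).card) = 1 := by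
        obtain ⟨e, he⟩ := pow_dvd_pow p h1
        rw [he, pow_mul, hη.pow_eq_one, one_pow]
      rw [pow_mul', pow_mul', h2, one_pow, one_pow]

theorem stdAddChar_prim (N : ℕ) [NeZero N] (k : ZMod N) (hk : k.val.Coprime N) :
    IsPrimitiveRoot (ZMod.stdAddChar k : ℂ) N := by
  have h := ZMod.stdAddChar_coe (N := N) (k.val : ℤ)
  rw [Int.cast_natCast, ZMod.natCast_zmod_val] at h
  rw [h]
  have h2 := Complex.isPrimitiveRoot_exp_of_coprime k.val N (NeZero.ne N) hk
  convert h2 using 2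
  push_cast
  ring

theorem fourier_key (M N : ℕ) (hN : N ≠ 0) (w : ZMod M → ℤ)
    (hdvd : cyclotomic N ℤ ∣ zwmaskPoly M w) (g : ZMod N → ℂ)
    (hg : ∀ q : ℕ, q.Prime → q ∣ N → ∃ ω : ℂ, ω ≠ 1 ∧ ∀ x, g (x + (N / q : ℕ)) = ω * g x) :
    ∑ i ∈ Finset.range M, (w (i : ZMod M) : ℂ) * g (i : ZMod N) = 0 := by
  have : NeZero N := ⟨hN⟩
  have hinv : ∀ y : ZMod N, g y = (N : ℂ)⁻¹ * ∑ k, ZMod.stdAddChar (k * y) * ZMod.dft g k := by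
    intro y
    have h := ZMod.invDFT_apply (ZMod.dft g) y
    rw [LinearEquiv.symm_apply_apply] at h
    simpa [smul_eq_mul] using h
  have hz : ∀ k : ZMod N, ZMod.dft g k *
      ∑ i ∈ Finset.range M, (w (i : ZMod M) : ℂ) * ZMod.stdAddChar (k * (i : ZMod N)) = 0 := by
    intro k
    by_cases hk : k.val.Coprime N
    · have hp := stdAddChar_prim N k hk
      have h0 : aeval (ZMod.stdAddChar k : ℂ) (zwmaskPoly M w) = 0 := by
        obtain ⟨Q, hQ⟩ := hdvd
        rw [hQ, map_mul]
        have : aeval (ZMod.stdAddChar k : ℂ) (cyclotomic N ℤ) = 0 := by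
          rw [aeval_def, eval₂_eq_eval_map, map_cyclotomic]
          exact hp.isRoot_cyclotomic (Nat.pos_of_ne_zero hN)
        rw [this, zero_mul]
      have h1 : ∑ i ∈ Finset.range M, (w (i : ZMod M) : ℂ) * ZMod.stdAddChar (k * (i : ZMod N))
          = aeval (ZMod.stdAddChar k : ℂ) (zwmaskPoly M w) := by
        unfold zwmaskPoly
        rw [map_sum]
        refine Finset.sum_congr rfl fun i _ => ?_
        rw [mul_comm k, ← nsmul_eq_mul, AddChar.map_nsmul_eq_pow]
        simp
      rw [h1, h0, mul_zero]
    · obtain ⟨q, hq, hqk, hqN⟩ := Nat.Prime.not_coprime_iff_dvd.mp hk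
      obtain ⟨ω, hω, hsh⟩ := hg q hq hqN
      have hk0 : ((N / q : ℕ) : ZMod N) * k = 0 := by
        have : k = (k.val : ZMod N) := by simp
        rw [this, ← Nat.cast_mul, ZMod.natCast_eq_zero_iff]
        obtain ⟨e, he⟩ := hqk
        refine ⟨e, ?_⟩
        rw [he, ← mul_assoc, Nat.div_mul_cancel hqN]
      have h1 : ZMod.dft g k = ω * ZMod.dft g k := by
        rw [ZMod.dft_apply]
        conv_lhs => rw [← Equiv.sum_comp (Equiv.addRight ((N / q : ℕ) : ZMod N))]
        rw [Finset.mul_sum]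
        refine Finset.sum_congr rfl fun x _ => ?_
        rw [Equiv.coe_addRight, hsh, add_mul, hk0, add_zero, smul_eq_mul, smul_eq_mul]
        ring
      have h2 : (1 - ω) * ZMod.dft g k = 0 := by
        rw [sub_mul, one_mul, ← h1, sub_self]
      rcases mul_eq_zero.mp h2 with h | h
      · exact absurd (sub_eq_zero.mp h).symm hω
      · rw [h, zero_mul]
  have : ∑ i ∈ Finset.range M, (w (i : ZMod M) : ℂ) * g (i : ZMod N) =
      (N : ℂ)⁻¹ * ∑ k : ZMod N, ZMod.dft g k *
        ∑ i ∈ Finset.range M, (w (i : ZMod M) : ℂ) * ZMod.stdAddChar (k * (i : ZMod N)) := by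
    simp_rw [Finset.mul_sum]
    rw [Finset.sum_comm]
    refine Finset.sum_congr rfl fun i _ => ?_
    rw [hinv, Finset.mul_sum, Finset.mul_sum]
    refine Finset.sum_congr rfl fun k _ => ?_
    ring
  rw [this, Finset.sum_eq_zero fun k _ => hz k, mul_zero]

theorem fourier_key_nat (M N : ℕ) (hN : N ≠ 0) (w : ZMod M → ℤ)
    (hdvd : cyclotomic N ℤ ∣ zwmaskPoly M w) (F : ℕ → ℂ) (hF : ∀ x, F (x + N) = F x)
    (hg : ∀ q : ℕ, q.Prime → q ∣ N → ∃ ω : ℂ, ω ≠ 1 ∧ ∀ x, F (x + N / q) = ω * F x) :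
    ∑ i ∈ Finset.range M, (w (i : ZMod M) : ℂ) * F i = 0 := by
  have : NeZero N := ⟨hN⟩
  have hval : ∀ x : ℕ, F ((x : ZMod N).val) = F x := by
    intro x
    rw [ZMod.val_natCast]
    exact Function.Periodic.map_mod_nat hF x
  have h := fourier_key M N hN w hdvd (fun x => F x.val) (by
    intro q hq hqN
    obtain ⟨ω, h1, h2⟩ := hg q hq hqN
    refine ⟨ω, h1, fun x => ?_⟩
    have : x + ((N / q : ℕ) : ZMod N) = ((x.val + N / q : ℕ) : ZMod N) := by simp
    rw [this, hval, h2])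
  simpa only [hval] using h

/-- Pushforward of a weight. -/
def pushW (M M' : ℕ) (T : ℕ → ℕ) (w : ZMod M → ℤ) : ZMod M' → ℤ :=
  fun y => ∑ x ∈ (Finset.range M).filter (fun x => T x % M' = y.val), w (x : ZMod M)

theorem push_sum (M M' : ℕ) (hM' : 0 < M') (T : ℕ → ℕ) (w : ZMod M → ℤ) (φ : ℕ → ℂ) :
    ∑ i ∈ Finset.range M', (pushW M M' T w (i : ZMod M') : ℂ) * φ i =
      ∑ x ∈ Finset.range M, (w (x : ZMod M) : ℂ) * φ (T x % M') := by
  rw [← Finset.sum_fiberwise_of_maps_to (s := Finset.range M) (t := Finset.range M')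
    (g := fun x => T x % M') (fun x _ => Finset.mem_range.mpr (Nat.mod_lt _ hM'))]
  refine Finset.sum_congr rfl fun i hi => ?_
  unfold pushW
  rw [ZMod.val_natCast, Nat.mod_eq_of_lt (Finset.mem_range.mp hi)]
  push_cast
  rw [Finset.sum_mul]
  refine Finset.sum_congr rfl fun x hx => ?_
  rw [(Finset.mem_filter.mp hx).2]

theorem expSet_finite (S : Finset ℕ) (hS : ∀ s ∈ S, 2 ≤ s) (p : ℕ) (hp : p.Prime) :
    (ExpSet S p).Finite := by
  refine (Finset.finite_toSet (Finset.range (S.sup id + 1))).subset ?_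
  rintro α ⟨_, s, hs, h1, _⟩
  have h2 : p ^ α ≤ s := Nat.le_of_dvd (by have := hS s hs; omega) h1
  have h3 : α < p ^ α := Nat.lt_pow_self hp.one_lt
  have h4 : s ≤ S.sup id := Finset.le_sup (f := id) hs
  simp only [Finset.coe_range, Set.mem_Iio]
  omega

/-- Proposition 4.1 (Truncations). -/
theorem truncation (K : ℕ) (p n : Fin K → ℕ) (hp : ∀ i, (p i).Prime)
    (hn : ∀ i, 1 ≤ n i) (hinj : Function.Injective p)
    (M : ℕ) (hM : M = ∏ i, p i ^ n i)
    (S : Finset ℕ) (hSdvd : ∀ s ∈ S, s ∣ M ∧ 2 ≤ s)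
    (w : ZMod M → ℤ)
    (hdvd : ∀ s ∈ S, cyclotomic s ℤ ∣ zwmaskPoly M w)
    (M' : ℕ) (hM' : M' = ∏ i, p i ^ Set.ncard (ExpSet S (p i))) :
    ∃ w' : ZMod M' → ℤ,
      zwmass M' w' = zwmass M w ∧
      (∀ N ∈ S, cyclotomic
          (∏ i, p i ^ Set.ncard {β ∈ ExpSet S (p i) | β ≤ N.factorization (p i)}) ℤ ∣
        zwmaskPoly M' w') ∧
      ((∀ x, 0 ≤ w x) → 0 < zwmass M w → ((∀ x, 0 ≤ w' x) ∧ 0 < zwmass M' w')) := by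
  classical
  have hfin : ∀ i, (ExpSet S (p i)).Finite := fun i =>
    expSet_finite S (fun s hs => (hSdvd s hs).2) (p i) (hp i)
  set E : Fin K → Finset ℕ := fun i => (hfin i).toFinset with hEdef
  have hE1 : ∀ i, ∀ β ∈ E i, 1 ≤ β := fun i β hβ => ((hfin i).mem_toFinset.mp hβ).1
  have hEc : ∀ i, Set.ncard (ExpSet S (p i)) = (E i).card := fun i =>
    Set.ncard_eq_toFinset_card _ (hfin i)
  have hLc : ∀ i a, Set.ncard {β ∈ ExpSet S (p i) | β ≤ a} = ((E i).filter (· ≤ a)).card := by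
    intro i a
    rw [← Set.ncard_coe_finset]
    congr 1
    ext y
    simp [hEdef]
  simp only [hEc] at hM'
  simp only [hLc]
  have hM'pos : 0 < M' := by
    rw [hM']
    exact Finset.prod_pos fun i _ => pow_pos (hp i).pos _
  set c : Fin K → ℕ := fun i => ∏ j ∈ Finset.univ.erase i, p j ^ (E j).card with hc
  set T : ℕ → ℕ := fun x => ∑ i, c i * digT (E i) (p i) x with hT
  have hmass : zwmass M' (pushW M M' T w) = zwmass M w := by
    have h := push_sum M M' hM'pos T w (fun _ => 1)
    simp only [mul_one] at h
    unfold zwmass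
    exact_mod_cast h
  refine ⟨pushW M M' T w, hmass, ?_, ?_⟩
  · intro N hN
    set ℓ : Fin K → ℕ := fun i => ((E i).filter (· ≤ N.factorization (p i))).card with hℓ
    have hN2 := (hSdvd N hN).2
    have hN0 : N ≠ 0 := by omega
    set N' := ∏ i, p i ^ ℓ i with hN'
    have hN'pos : 0 < N' := Finset.prod_pos fun i _ => pow_pos (hp i).pos _
    have hN'M' : N' ∣ M' := by
      rw [hM']
      exact Finset.prod_dvd_prod_of_dvd _ _ fun i _ =>
        pow_dvd_pow _ (Finset.card_le_card (Finset.filter_subset _ _))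
    obtain ⟨ζ, hζ⟩ : ∃ ζ : ℂ, IsPrimitiveRoot ζ N' := ⟨_, Complex.isPrimitiveRoot_exp N' hN'pos.ne'⟩
    have hη : ∀ i, IsPrimitiveRoot (ζ ^ c i) (p i ^ ℓ i) := by
      intro i
      set r := ∏ j ∈ Finset.univ.erase i, p j ^ ℓ j with hr
      have hrc : r ∣ c i := Finset.prod_dvd_prod_of_dvd _ _ fun j _ =>
        pow_dvd_pow _ (Finset.card_le_card (Finset.filter_subset _ _))
      have hNr : N' = r * p i ^ ℓ i := by
        rw [hN', ← Finset.mul_prod_erase _ _ (Finset.mem_univ i), mul_comm]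
      have hcop : (c i).Coprime (p i) := by
        refine Nat.Coprime.prod_left fun j hj => Nat.Coprime.pow_left _ ?_
        rw [Nat.coprime_primes (hp j) (hp i)]
        exact fun h => (Finset.mem_erase.mp hj).1 (hinj h)
      obtain ⟨u, hu⟩ := hrc
      have hucop : u.Coprime (p i ^ ℓ i) := by
        refine Nat.Coprime.pow_right _ (Nat.Coprime.coprime_dvd_left ?_ hcop)
        exact ⟨r, by rw [hu, mul_comm]⟩
      rw [hu, pow_mul]
      exact (hζ.pow hN'pos hNr).pow_of_coprime u hucop
    have hFprod : ∀ x, ζ ^ T x = ∏ i, (ζ ^ c i) ^ digT (E i) (p i) x := by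
      intro x
      rw [hT]
      simp only [← pow_mul]
      rw [Finset.prod_pow_eq_pow_sum]
    have hsum : ∑ x ∈ Finset.range M, (w (x : ZMod M) : ℂ) * ζ ^ T x = 0 := by
      refine fourier_key_nat M N hN0 w (hdvd N hN) (fun x => ζ ^ T x) ?_ ?_
      · intro x
        simp only [hFprod]
        refine Finset.prod_congr rfl fun i _ => ?_
        exact digT_same (E i) (hE1 i) (p i) (N.factorization (p i)) N (hp i).pos _
          (hη i).pow_eq_one (Nat.ordProj_dvd N (p i)) x
      · intro q hq hqN
        obtain ⟨i, hi⟩ : ∃ i, q = p i := by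
          have h1 : q ∣ ∏ i, p i ^ n i := hM ▸ hqN.trans (hSdvd N hN).1
          obtain ⟨i, _, h2⟩ := (Prime.dvd_finsetProd_iff hq.prime _).mp h1
          exact ⟨i, (Nat.prime_dvd_prime_iff_eq hq (hp i)).mp (hq.dvd_of_dvd_pow h2)⟩
        subst hi
        set a := N.factorization (p i) with ha
        have ha1 : 1 ≤ a := (hp i).factorization_pos_of_dvd hN0 hqN
        have hnd : ¬ p i ^ (a + 1) ∣ N := Nat.pow_succ_factorization_not_dvd hN0 (hp i)
        have haE : a ∈ E i := (hfin i).mem_toFinset.mpr ⟨ha1, N, hN, Nat.ordProj_dvd N (p i), hnd⟩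
        obtain ⟨m, hm⟩ : p i ^ a ∣ N := Nat.ordProj_dvd N (p i)
        have hpm : ¬ p i ∣ m := by
          rintro ⟨e, rfl⟩
          exact hnd ⟨e, by rw [hm]; ring⟩
        have hdiv : N / p i = p i ^ (a - 1) * m := by
          refine Nat.div_eq_of_eq_mul_right (hp i).pos ?_
          rw [← mul_assoc, ← pow_succ', Nat.sub_add_cancel ha1]
          exact hm
        obtain ⟨ω, hω, hsh⟩ := digT_shift (E i) (hE1 i) (p i) a m (hp i) haE (ζ ^ c i) (hη i) hpm
        refine ⟨ω, hω, fun x => ?_⟩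
        simp only [hFprod]
        rw [← Finset.mul_prod_erase _ _ (Finset.mem_univ i),
          ← Finset.mul_prod_erase Finset.univ (fun j => (ζ ^ c j) ^ digT (E j) (p j) x)
            (Finset.mem_univ i), ← mul_assoc]
        congr 1
        · rw [hdiv, hsh]
        · refine Finset.prod_congr rfl fun j hj => ?_
          refine digT_same (E j) (hE1 j) (p j) (N.factorization (p j)) _ (hp j).pos _
            (hη j).pow_eq_one ?_ x
          have hcop : (p j ^ N.factorization (p j)).Coprime (p i) := by
            refine Nat.Coprime.pow_left _ ?_
            rw [Nat.coprime_primes (hp j) (hp i)]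
            exact fun h => (Finset.mem_erase.mp hj).1 (hinj h)
          refine hcop.dvd_of_dvd_mul_left ?_
          rw [Nat.mul_div_cancel' hqN]
          exact Nat.ordProj_dvd N (p j)
    have hζM' : ζ ^ M' = 1 := (hζ.pow_eq_one_iff_dvd M').mpr hN'M'
    have hz : aeval ζ (zwmaskPoly M' (pushW M M' T w)) = 0 := by
      have h := push_sum M M' hM'pos T w (fun k => ζ ^ k)
      have hmod : ∀ m, ζ ^ (m % M') = ζ ^ m := fun m => by
        conv_rhs => rw [← Nat.mod_add_div m M', pow_add, pow_mul, hζM', one_pow, mul_one]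
      simp only [hmod] at h
      rw [hsum] at h
      rw [← h]
      unfold zwmaskPoly
      rw [map_sum]
      refine Finset.sum_congr rfl fun i _ => ?_
      rw [map_mul, map_pow, aeval_X, aeval_C]
      simp
    rw [cyclotomic_eq_minpoly hζ hN'pos]
    exact minpoly.isIntegrallyClosed_dvd (hζ.isIntegral hN'pos) hz
  · intro hw hpos
    refine ⟨fun x => Finset.sum_nonneg fun y _ => hw _, ?_⟩
    rw [hmass]
    exact hpos
end

section
/- Let M = ∏_{i=1}^{K} p_i^{n_i} with p_1, …, p_K distinct primes and n_i ≥ 1, and let 1 ≤ α_i ≤ n_i for each i; set N := ∏_{i=1}^{K} p_i^{n_i − α_i + 1}. Let A : ℤ_M → ℤ be an integer-weighted multiset such that Φ_L(X) ∣ A(X) for every L with N ∣ L ∣ M. Then there exist polynomials P_1, …, P_K ∈ ℤ[X] such that A(X) ≡ P_1(X)·F_{1,α_1}(X) + ⋯ + P_K(X)·F_{K,α_K}(X) (mod X^M − 1), where F_{i,α}(X) := ∑_{j=0}^{p_i^α − 1} X^{j·M/p_i^α}. Moreover, if K = 2 and A has nonnegative weights, then P_1 and P_2 may be chosen with nonnegative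 coefficients. -/
open Polynomial

/-- The long fiber polynomial `F_{q,α}(X) = ∑_{j=0}^{q^α - 1} X^{j·M/q^α}`. -/
noncomputable def longFiber (M q α : ℕ) : Polynomial ℤ :=
  ∑ j ∈ Finset.range (q ^ α), X ^ (j * (M / q ^ α))

namespace LFD

/-- iterated differences -/
def D {G : Type*} [AddCommGroup G] {ι : Type*} (h : ι → G) : List ι → (G → ℤ) → (G → ℤ)
  | [], f => f
  | i :: l, f => D h l (fun x => f (x - h i) - f x)

section
variable {G : Type*} [AddCommGroup G] {ι : Type*} (h : ι → G)

lemma D_sub (l : List ι) : ∀ f g : G → ℤ,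
    D h l (fun x => f x - g x) = fun x => D h l f x - D h l g x := by
  induction l with
  | nil => intro f g; rfl
  | cons i l ih =>
    intro f g
    simp only [D]
    rw [← ih]
    congr 1
    funext x
    ring

lemma D_comp (l : List ι) (π : G → G) (hπ : ∀ j ∈ l, ∀ x, π (x - h j) = π x - h j) :
    ∀ f : G → ℤ, D h l (fun x => f (π x)) = fun x => D h l f (π x) := by
  induction l with
  | nil => intro f; rfl
  | cons i l ih =>
    intro f
    simp only [D]
    rw [← ih (fun j hj => hπ j (List.mem_cons_of_mem _ hj))]
    congr 1
    funext x
    rw [hπ i (List.mem_cons_self)]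

lemma D_cons (i : ι) (l : List ι) (f : G → ℤ) :
    D h (i :: l) f = fun x => D h l f (x - h i) - D h l f x := by
  simp only [D]
  rw [D_sub h l (fun x => f (x - h i)) f,
    D_comp h l (fun x => x - h i) (fun j _ x => by abel)]

lemma inv_zsmul {f : G → ℤ} {a : G} (hf : ∀ x, f (x - a) = f x) (x y : G)
    (hy : x - y ∈ AddSubgroup.zmultiples a) : f y = f x := by
  obtain ⟨k, hk⟩ := AddSubgroup.mem_zmultiples_iff.1 hy
  have key : ∀ (n : ℕ) z, f (z - n • a) = f z := by
    intro n
    induction n with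
    | zero => simp
    | succ n ih => intro z; rw [succ_nsmul, ← sub_sub, hf, ih]
  obtain ⟨n, rfl | rfl⟩ := Int.eq_nat_or_neg k
  · have : y = x - n • a := by rw [natCast_zsmul] at hk; rw [hk]; abel
    rw [this, key]
  · have : x = y - n • a := by
      rw [neg_smul, natCast_zsmul] at hk
      have : n • a = y - x := by rw [← neg_neg (n • a), hk]; abel
      rw [this]; abel
    rw [this, key]

lemma decomp (π : ι → G → G) (h1 : ∀ i x, π i (x - h i) = π i x)
    (h2 : ∀ i j, i ≠ j → ∀ x, π i (x - h j) = π i x - h j)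
    (h3 : ∀ i x, x - π i x ∈ AddSubgroup.zmultiples (h i)) (l : List ι) :
    l.Nodup → ∀ f : G → ℤ, (∀ x, D h l f x = 0) →
    ∃ g : ι → G → ℤ, (∀ i x, g i (x - h i) = g i x) ∧
      ∀ x, f x = (l.map (fun i => g i x)).sum := by
  classical
  induction l with
  | nil => intro _ f hf; exact ⟨fun _ _ => 0, by simp, by simpa [D] using hf⟩
  | cons i l ih =>
    intro hl f hf
    rw [List.nodup_cons] at hl
    rw [D_cons] at hf
    obtain ⟨g, hg, hs⟩ := ih hl.2 (fun x => f x - f (π i x)) (by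
      intro x
      rw [D_sub h l f (fun x => f (π i x)), D_comp h l (π i)]
      · have := inv_zsmul (f := D h l f) (a := h i) (fun x => by linarith [hf x]) x (π i x) (h3 i x)
        simp [this]
      · intro j hj x
        exact h2 i j (by rintro rfl; exact hl.1 hj) x)
    refine ⟨Function.update g i (fun x => f (π i x)), ?_, ?_⟩
    · intro j x
      by_cases hj : j = i
      · subst hj; simp [h1]
      · simp [Function.update_of_ne hj, hg]
    · intro x
      have : (l.map (fun j => Function.update g i (fun x => f (π i x)) j x))
          = l.map (fun j => g j x) := by
        apply List.map_congr_left
        intro j hj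
        rw [Function.update_of_ne (by rintro rfl; exact hl.1 hj)]
      rw [List.map_cons, List.sum_cons, this, ← hs x]
      simp
end

lemma coeff_mask (M : ℕ) (w : ZMod M → ℤ) (k : ℕ) (hk : k < M) :
    (zwmaskPoly M w).coeff k = w k := by
  simp [zwmaskPoly, finsetSum_coeff, coeff_C_mul, coeff_X_pow, hk]

lemma mask_eq_zero (M : ℕ) [NeZero M] (w : ZMod M → ℤ)
    (hd : (X ^ M - 1 : ℤ[X]) ∣ zwmaskPoly M w) : ∀ x, w x = 0 := by
  have hM : 0 < M := NeZero.pos M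
  have hmon : (X ^ M - 1 : ℤ[X]).Monic := by
    simpa using monic_X_pow_sub_C (1 : ℤ) hM.ne'
  have h0 : zwmaskPoly M w = 0 := by
    apply eq_zero_of_dvd_of_degree_lt hd
    have : (X ^ M - 1 : ℤ[X]).degree = M := by
      simpa using degree_X_pow_sub_C hM (1 : ℤ)
    rw [this, degree_lt_iff_coeff_zero]
    intro k hk
    simp only [zwmaskPoly, finsetSum_coeff, coeff_C_mul, coeff_X_pow]
    apply Finset.sum_eq_zero
    intro i hi
    rw [Finset.mem_range] at hi
    rw [if_neg (by omega)]; simp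
  intro x
  have := coeff_mask M w x.val (ZMod.val_lt x)
  rw [h0] at this
  simpa using this.symm

lemma mask_sub (M : ℕ) (f g : ZMod M → ℤ) :
    zwmaskPoly M (fun x => f x - g x) = zwmaskPoly M f - zwmaskPoly M g := by
  simp [zwmaskPoly, sub_mul, Finset.sum_sub_distrib]

lemma mask_shift_one (M : ℕ) [NeZero M] (w : ZMod M → ℤ) :
    (X ^ M - 1 : ℤ[X]) ∣ zwmaskPoly M w * X - zwmaskPoly M (fun x => w (x - 1)) := by
  obtain ⟨m, rfl⟩ : ∃ m, M = m + 1 := ⟨M - 1, by have := NeZero.pos M; omega⟩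
  refine ⟨C (w (m : ZMod (m+1))), ?_⟩
  unfold zwmaskPoly
  rw [Finset.sum_range_succ, Finset.sum_range_succ' (n := m)]
  have : ((0:ℕ) : ZMod (m+1)) - 1 = (m : ZMod (m+1)) := by
    have : ((m + 1 : ℕ) : ZMod (m+1)) = 0 := ZMod.natCast_self _
    push_cast at this
    push_cast
    linear_combination -this
  beta_reduce
  rw [this, add_mul, Finset.sum_mul]
  simp only [Nat.cast_add, Nat.cast_one, add_sub_cancel_right]
  simp only [pow_succ, mul_assoc]
  ring

lemma mask_shift (M : ℕ) [NeZero M] (h : ℕ) : ∀ (w : ZMod M → ℤ),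
    (X ^ M - 1 : ℤ[X]) ∣ zwmaskPoly M w * X ^ h - zwmaskPoly M (fun x => w (x - h)) := by
  induction h with
  | zero => intro w; simp
  | succ h ih =>
    intro w
    have h1 := (ih w).mul_right X
    have h2 := mask_shift_one M (fun x => w (x - h))
    convert dvd_add h1 h2 using 1
    have : (fun x : ZMod M => w (x - 1 - h)) = fun x => w (x - ((h + 1 : ℕ) : ZMod M)) := by
      funext x; congr 1; push_cast; ring
    rw [this]
    ring

lemma mask_D (M : ℕ) [NeZero M] {ι : Type*} (h : ι → ℕ) (l : List ι) : ∀ (w : ZMod M → ℤ),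
    (X ^ M - 1 : ℤ[X]) ∣ zwmaskPoly M w * (l.map (fun i => (X ^ h i - 1 : ℤ[X]))).prod
      - zwmaskPoly M (D (fun i => (h i : ZMod M)) l w) := by
  induction l with
  | nil => intro w; simp [D]
  | cons i l ih =>
    intro w
    have h1 := ih (fun x => w (x - h i) - w x)
    have h2 := (mask_shift M (h i) w).mul_right (l.map (fun i => (X ^ h i - 1 : ℤ[X]))).prod
    rw [mask_sub M (fun x => w (x - h i)) w] at h1
    convert dvd_add h1 h2 using 1
    simp only [D, List.map_cons, List.prod_cons]
    ring

lemma mask_fiber (M q r : ℕ) (hq : 0 < q) (hM : M = q * r) (g : ZMod M → ℤ)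
    (hg : ∀ x, g (x - r) = g x) (α p : ℕ) (hp : p ^ α = q) :
    zwmaskPoly M g = (∑ a ∈ Finset.range r, C (g a) * X ^ a) * longFiber M p α := by
  have hdiv : M / p ^ α = r := by rw [hp, hM, Nat.mul_div_cancel_left _ hq]
  unfold longFiber zwmaskPoly
  rw [hdiv, hp]
  have key : ∀ (j a : ℕ), g ((j * r + a : ℕ) : ZMod M) = g a := by
    intro j a
    induction j with
    | zero => simp
    | succ j ih =>
      rw [← ih, ← hg]; congr 1; push_cast; ring
  have : ∀ k, ∑ i ∈ Finset.range (k * r), C (g (i : ZMod M)) * X ^ i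
      = (∑ a ∈ Finset.range r, C (g a) * X ^ a) * ∑ j ∈ Finset.range k, (X : ℤ[X]) ^ (j * r) := by
    intro k
    induction k with
    | zero => simp
    | succ k ih =>
      rw [Finset.sum_range_succ, mul_add, ← ih, add_mul, one_mul, Finset.sum_range_add,
        Finset.sum_mul]
      congr 1
      apply Finset.sum_congr rfl
      intro a _
      rw [key, pow_add]; ring
  rw [← this q, ← hM]

lemma cyc_prod_dvd (M : ℕ) (hM : 0 < M) (B : ℤ[X])
    (hB : ∀ L, L ∣ M → cyclotomic L ℤ ∣ B) : (X ^ M - 1 : ℤ[X]) ∣ B := by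
  rw [← prod_cyclotomic_eq_X_pow_sub_one hM]
  apply Finset.prod_dvd_of_isRelPrime
  · intro a ha b hb hab
    have ha' : 0 < a := Nat.pos_of_mem_divisors ha
    have hb' : 0 < b := Nat.pos_of_mem_divisors hb
    have ia := cyclotomic.irreducible ha'
    have ib := cyclotomic.irreducible hb'
    refine (ia.isRelPrime_iff_not_dvd).2 fun hd => hab ?_
    have := (ia.associated_of_dvd ib hd)
    exact cyclotomic_injective (R := ℤ)
      (eq_of_monic_of_associated (cyclotomic.monic _ _) (cyclotomic.monic _ _) this)
  · intro L hL
    exact hB L (Nat.dvd_of_mem_divisors hL)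

/-- coordinate map -/
def cc (M m E : ℕ) (x : ZMod M) : ZMod M := ((m * E * (x.val / m) : ℕ) : ZMod M)

lemma cc_nat (M m Q E : ℕ) (hM : M = m * Q) (hm : 0 < m) (a : ℕ) :
    cc M m E (a : ZMod M) = ((m * E * (a / m) : ℕ) : ZMod M) := by
  unfold cc
  rw [ZMod.val_natCast]
  have h1 : a / m = (a % M) / m + Q * (a / M) := by
    conv_lhs => rw [← Nat.mod_add_div a M]
    rw [show M * (a / M) = m * (Q * (a / M)) by
      conv_lhs => rw [hM]
      rw [hM]; ring]
    rw [Nat.add_mul_div_left _ _ hm]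
  rw [h1]
  have h2 : m * E * ((a % M) / m + Q * (a / M)) = m * E * ((a % M) / m) + M * (E * (a / M)) := by
    generalize a / M = u
    generalize (a % M) / m = v
    rw [hM]; ring
  rw [h2, Nat.cast_add, Nat.cast_mul M]
  simp

lemma cc_add (M m Q E s : ℕ) [NeZero M] (hM : M = m * Q) (hm : 0 < m) (x : ZMod M) :
    cc M m E (x + ((m * s : ℕ) : ZMod M)) = cc M m E x + ((m * E * s : ℕ) : ZMod M) := by
  obtain ⟨a, rfl⟩ := ZMod.natCast_zmod_surjective x
  rw [← Nat.cast_add, cc_nat M m Q E hM hm, cc_nat M m Q E hM hm, Nat.add_mul_div_left _ _ hm,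
    ← Nat.cast_add, mul_add]

end LFD

open LFD in
/-- Proposition 6.3 (Long fiber decomposition). -/
theorem long_fiber_decomposition (K : ℕ) (p n : Fin K → ℕ) (hp : ∀ i, (p i).Prime)
    (hn : ∀ i, 1 ≤ n i) (hinj : Function.Injective p)
    (α : Fin K → ℕ) (hα1 : ∀ i, 1 ≤ α i) (hα2 : ∀ i, α i ≤ n i)
    (M N : ℕ) (hM : M = ∏ i, p i ^ n i) (hN : N = ∏ i, p i ^ (n i - α i + 1))
    (w : ZMod M → ℤ)
    (hdvd : ∀ L : ℕ, N ∣ L → L ∣ M → cyclotomic L ℤ ∣ zwmaskPoly M w) :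
    (∃ P : Fin K → Polynomial ℤ,
      (X ^ M - 1) ∣ (zwmaskPoly M w - ∑ i, P i * longFiber M (p i) (α i))) ∧
    (K = 2 → (∀ x, 0 ≤ w x) → ∃ P : Fin K → Polynomial ℤ,
      (∀ i j, 0 ≤ (P i).coeff j) ∧
      (X ^ M - 1) ∣ (zwmaskPoly M w - ∑ i, P i * longFiber M (p i) (α i))) := by
  classical
  have hcop : ∀ i j, i ≠ j → ∀ a b, Nat.Coprime (p i ^ a) (p j ^ b) := fun i j hij a b =>
    Nat.Coprime.pow _ _ ((Nat.coprime_primes (hp i) (hp j)).2 fun h => hij (hinj h))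
  set m : ℕ := ∏ i, p i ^ (n i - α i) with hm
  set s : Fin K → ℕ := fun i => ∏ j ∈ Finset.univ.erase i, p j ^ α j with hs
  set Q : ℕ := ∏ i, p i ^ α i with hQ
  have hmpos : 0 < m := Finset.prod_pos fun i _ => pow_pos (hp i).pos _
  have hMpos : 0 < M := hM ▸ Finset.prod_pos fun i _ => pow_pos (hp i).pos _
  have : NeZero M := ⟨hMpos.ne'⟩
  have hMQ : M = m * Q := by
    rw [hM, hm, hQ, ← Finset.prod_mul_distrib]
    refine Finset.prod_congr rfl fun i _ => ?_
    rw [← pow_add, Nat.sub_add_cancel (hα2 i)]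
  have hQs : ∀ i, Q = p i ^ α i * s i := fun i =>
    (Finset.mul_prod_erase Finset.univ (fun j => p j ^ α j) (Finset.mem_univ i)).symm
  have hMs : ∀ i, M = p i ^ α i * (m * s i) := fun i => by rw [hMQ, hQs i]; ring
  have hE : ∀ i, ∃ E : ℕ, s i ∣ E ∧ E ≡ 1 [MOD p i ^ α i] := by
    intro i
    have hc : Nat.Coprime (s i) (p i ^ α i) := by
      apply Nat.Coprime.prod_left
      intro j hj
      exact hcop j i (Finset.ne_of_mem_erase hj) _ _
    obtain ⟨E, h1, h2⟩ := Nat.chineseRemainder hc 0 1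
    exact ⟨E, (Nat.modEq_zero_iff_dvd).1 h1, h2⟩
  choose E hE1 hE2 using hE
  set h : Fin K → ZMod M := fun i => ((m * s i : ℕ) : ZMod M) with hh
  set π : Fin K → ZMod M → ZMod M := fun i x => x - cc M m (E i) x with hπ
  have cadd : ∀ i j x, cc M m (E i) (x + h j) = cc M m (E i) x + ((m * E i * s j : ℕ) : ZMod M) :=
    fun i j x => cc_add M m Q (E i) (s j) hMQ hmpos x
  have e1 : ∀ i, ((m * E i * s i : ℕ) : ZMod M) = h i := by
    intro i
    rw [hh]
    rw [ZMod.natCast_eq_natCast_iff]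
    have := (hE2 i).mul_left' (m * s i)
    rw [mul_comm (m * s i) (p i ^ α i), ← hMs i] at this
    convert this using 1 <;> ring
  have e2 : ∀ i j, i ≠ j → ((m * E i * s j : ℕ) : ZMod M) = 0 := by
    intro i j hij
    rw [ZMod.natCast_eq_zero_iff, hMs j]
    have : p j ^ α j ∣ E i := dvd_trans
      (Finset.dvd_prod_of_mem (fun j => p j ^ α j) (Finset.mem_erase.2 ⟨hij.symm, Finset.mem_univ j⟩))
      (hE1 i)
    rw [show m * E i * s j = E i * (m * s j) by ring]
    exact mul_dvd_mul_right this _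
  have h1 : ∀ i x, π i (x - h i) = π i x := by
    intro i x
    have := cadd i i (x - h i)
    rw [sub_add_cancel, e1] at this
    simp only [hπ]
    rw [this]; abel
  have h2 : ∀ i j, i ≠ j → ∀ x, π i (x - h j) = π i x - h j := by
    intro i j hij x
    have := cadd i j (x - h j)
    rw [sub_add_cancel, e2 i j hij] at this
    simp only [hπ]
    rw [this]; abel
  have h3 : ∀ i x, x - π i x ∈ AddSubgroup.zmultiples (h i) := by
    intro i x
    obtain ⟨t, ht⟩ := hE1 i
    rw [AddSubgroup.mem_zmultiples_iff]
    refine ⟨((t * (x.val / m) : ℕ) : ℤ), ?_⟩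
    simp only [hπ, hh, cc, sub_sub_cancel]
    rw [natCast_zsmul, nsmul_eq_mul, ← Nat.cast_mul, ht]
    congr 1; ring
  -- vanishing of the iterated difference
  have hD : ∀ x, D h Finset.univ.toList w x = 0 := by
    apply mask_eq_zero
    have hd := mask_D M (fun i => m * s i) (Finset.univ : Finset (Fin K)).toList w
    refine (dvd_sub_right ?_).1 hd
    apply cyc_prod_dvd M hMpos
    intro L hL
    by_cases hNL : N ∣ L
    · exact (hdvd L hNL hL).mul_right _
    · obtain ⟨i, hi⟩ : ∃ i, ¬ p i ^ (n i - α i + 1) ∣ L := by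
        by_contra hcon
        push Not at hcon
        apply hNL
        rw [hN]
        exact Finset.prod_dvd_of_isRelPrime
          (fun i _ j _ hij => Nat.coprime_iff_isRelPrime.1 (hcop i j hij _ _)) (fun i _ => hcon i)
      apply Dvd.dvd.mul_left
      refine dvd_trans ?_ (List.dvd_prod (List.mem_map_of_mem (Finset.mem_toList.2 (Finset.mem_univ i))))
      refine dvd_trans (cyclotomic.dvd_X_pow_sub_one L ℤ) ?_
      have hLpos : L ≠ 0 := (Nat.pos_of_dvd_of_pos hL hMpos).ne'
      obtain ⟨a, L', hL', rfl⟩ := Nat.exists_eq_pow_mul_and_not_dvd hLpos (p i) (hp i).ne_one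
      have ha : a ≤ n i - α i := by
        by_contra hlt
        exact hi ((pow_dvd_pow _ (by omega)).mul_right _)
      have hc : ∀ b, Nat.Coprime (p i ^ b) L' := fun b =>
        Nat.Coprime.pow_left _ (((hp i).coprime_iff_not_dvd).2 hL')
      have hdv : p i ^ a * L' ∣ m * s i := by
        apply (hc a).mul_dvd_of_dvd_of_dvd
        · exact ((pow_dvd_pow _ ha).trans
            (Finset.dvd_prod_of_mem (fun i => p i ^ (n i - α i)) (Finset.mem_univ i))).mul_right _
        · have := (Dvd.intro_left _ rfl : L' ∣ p i ^ a * L').trans hL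
          rw [hMs i] at this
          exact (hc (α i)).symm.dvd_of_dvd_mul_left this
      obtain ⟨c, hc⟩ := hdv
      rw [hc, pow_mul X (p i ^ a * L') c]
      exact sub_one_dvd_pow_sub_one _ _
  obtain ⟨g, hg, hsum⟩ := decomp h π h1 h2 h3 Finset.univ.toList (Finset.nodup_toList _) w hD
  have hsum' : ∀ x, w x = ∑ i, g i x := fun x => by rw [hsum x, Finset.sum_map_toList]
  have fin : ∀ g : Fin K → ZMod M → ℤ, (∀ i x, g i (x - h i) = g i x) → (∀ x, w x = ∑ i, g i x) →
      (X ^ M - 1 : ℤ[X]) ∣ (zwmaskPoly M w - ∑ i,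
        (∑ a ∈ Finset.range (m * s i), C (g i a) * X ^ a) * longFiber M (p i) (α i)) := by
    intro g hg hsum
    have : zwmaskPoly M w = ∑ i, zwmaskPoly M (g i) := by
      unfold zwmaskPoly
      rw [Finset.sum_comm]
      refine Finset.sum_congr rfl fun a _ => ?_
      rw [hsum, map_sum, Finset.sum_mul]
    rw [this, ← Finset.sum_sub_distrib]
    refine Finset.dvd_sum fun i _ => ?_
    rw [mask_fiber M (p i ^ α i) (m * s i) (pow_pos (hp i).pos _) (hMs i) (g i) (hg i) (α i) (p i) rfl]
    simp
  refine ⟨⟨_, fin g hg hsum'⟩, ?_⟩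
  intro hK hw
  subst hK
  let u : ZMod M → ℤ := fun x => Finset.univ.inf' Finset.univ_nonempty
    (fun t : ZMod M => g 1 (x + t * h 0))
  have u1 : ∀ x, u (x - h 1) = u x := by
    intro x
    simp only [u]
    congr 1; funext t
    rw [← hg 1 (x + t * h 0)]
    congr 1; abel
  have u_le : ∀ x t, u x ≤ g 1 (x + t * h 0) := fun x t =>
    Finset.inf'_le _ (Finset.mem_univ t)
  have u_ex : ∀ x, ∃ t, u x = g 1 (x + t * h 0) := fun x => by
    obtain ⟨t, _, ht⟩ := Finset.exists_mem_eq_inf' (Finset.univ_nonempty (α := ZMod M))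
      (fun t : ZMod M => g 1 (x + t * h 0))
    exact ⟨t, ht⟩
  have u0 : ∀ x, u (x - h 0) = u x := by
    intro x
    apply le_antisymm
    · obtain ⟨t, ht⟩ := u_ex x
      rw [ht]
      have := u_le (x - h 0) (t + 1)
      rwa [show x - h 0 + (t + 1) * h 0 = x + t * h 0 by ring] at this
    · obtain ⟨t, ht⟩ := u_ex (x - h 0)
      rw [ht]
      have := u_le x (t - 1)
      rwa [show x + (t - 1) * h 0 = x - h 0 + t * h 0 by ring] at this
  have g0t : ∀ x t, g 0 (x + t * h 0) = g 0 x := by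
    intro x t
    apply inv_zsmul (hg 0)
    rw [AddSubgroup.mem_zmultiples_iff]
    refine ⟨-(t.val : ℤ), ?_⟩
    rw [zsmul_eq_mul]
    push_cast
    rw [ZMod.natCast_zmod_val]
    ring
  let g' : Fin 2 → ZMod M → ℤ := ![fun x => g 0 x + u x, fun x => g 1 x - u x]
  refine ⟨_, ?_, fin g' ?_ ?_⟩
  · have hnn : ∀ i x, 0 ≤ g' i x := by
      intro i x
      fin_cases i
      · obtain ⟨t, ht⟩ := u_ex x
        have := hw (x + t * h 0)
        rw [hsum', Fin.sum_univ_two, g0t, ← ht] at this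
        simpa [g'] using this
      · have := u_le x 0
        simp at this
        simpa [g'] using this
    intro i j
    simp only [finsetSum_coeff, coeff_C_mul, coeff_X_pow]
    refine Finset.sum_nonneg fun a _ => mul_nonneg (hnn i _) ?_
    split_ifs <;> simp
  · intro i x
    fin_cases i
    · simp [g', hg, u0]
    · simp [g', hg, u1]
  · intro x
    rw [hsum', Fin.sum_univ_two, Fin.sum_univ_two]
    simp [g']
end

section
/- Let M = p^{n_1} q^{n_2} with p, q distinct primes, let S be a nonempty set of divisors of M each at least 2, and let A : ℤ_M → ℕ be a multiset with positive total mass such that Φ_s(X) ∣ A(X) for all s ∈ S. If #EXP_p(S) ≤ 2 or #EXP_q(S) ≤ 2, then |A| ≥ FIB(S). -/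
open Polynomial

/-- The mask polynomial of a finite set of natural numbers: `A(X) = ∑_{a ∈ A} X^a`. -/
noncomputable def maskPoly (A : Finset ℕ) : Polynomial ℤ := ∑ a ∈ A, X ^ a

/-- The fiber polynomial `F^N_p(X) = 1 + X^{N/p} + ⋯ + X^{(p-1)N/p}`. -/
noncomputable def fiberPoly (N p : ℕ) : Polynomial ℤ :=
  ∑ j ∈ Finset.range p, X ^ (j * (N / p))

/-- A finite set `A ⊆ ℕ` is fibered on scale `N` if some prime `p ∣ N` has
`F^N_p(X) ∣ A(X)`. -/
def IsFibered (A : Finset ℕ) (N : ℕ) : Prop :=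
  ∃ p : ℕ, p.Prime ∧ p ∣ N ∧ fiberPoly N p ∣ maskPoly A

/-- `FIB(S)`: the minimal size of a nonempty finite `A ⊆ ℕ` fibered on each scale `s ∈ S`. -/
noncomputable def FIBs (S : Finset ℕ) : ℕ :=
  sInf {k | ∃ A : Finset ℕ, A.Nonempty ∧ A.card = k ∧ ∀ s ∈ S, IsFibered A s}

/-- Mask polynomial of a multiset (weight function) on `ZMod M`:
`A(X) = ∑_{x ∈ ℤ_M} w(x) · X^{x.val}`. -/
noncomputable def wmaskPoly (M : ℕ) (w : ZMod M → ℕ) : Polynomial ℤ :=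
  ∑ i ∈ Finset.range M, C ((w (i : ZMod M)) : ℤ) * X ^ i

/-- Total mass `∑_x w(x)` of a multiset on `ZMod M`. -/
def wmass (M : ℕ) (w : ZMod M → ℕ) : ℕ :=
  ∑ i ∈ Finset.range M, w (i : ZMod M)

/-! ### The abstract argument -/

section Abs
variable {V : Type*} [AddCommGroup V]

/-- Recursive description of the tree of fibers: along the list of levels. -/
def Good (q : ℕ) (mass : V →+ ℤ) (pos : AddSubmonoid V) (D D' : AddSubgroup V)
    (Z X Y : ℕ → Bool) : List ℕ → V → Prop
  | [], v => v ∈ pos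
  | b :: ts, v => ∃ f : Fin q → V, v = ∑ c, f c ∧
      (∀ c, Good q mass pos D D' Z X Y ts (f c)) ∧
      (Z b = true → ∀ c c', mass (f c) = mass (f c')) ∧
      (X b = true → ∀ c c', f c - f c' ∈ D) ∧
      (Y b = true → ∀ c c', f c - f c' ∈ D')

variable {p q : ℕ} {mass : V →+ ℤ} {pos : AddSubmonoid V} {D D' : AddSubgroup V}
  {Z X Y : ℕ → Bool}

theorem Good.swap {ts : List ℕ} {v : V} (h : Good q mass pos D D' Z X Y ts v) :
    Good q mass pos D' D Z Y X ts v := by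
  induction ts generalizing v with
  | nil => exact h
  | cons b ts ih =>
    obtain ⟨f, h1, h2, h3, h4, h5⟩ := h
    exact ⟨f, h1, fun c => ih (h2 c), h3, h5, h4⟩

theorem Good.mem_pos {ts : List ℕ} {v : V} (h : Good q mass pos D D' Z X Y ts v) :
    v ∈ pos := by
  induction ts generalizing v with
  | nil => exact h
  | cons b ts ih =>
    obtain ⟨f, h1, h2, -⟩ := h
    rw [h1]
    exact AddSubmonoid.sum_mem _ fun c _ => ih (h2 c)

theorem Good.dvd_mass {ts : List ℕ} {v : V} (h : Good q mass pos D D' Z X Y ts v) :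
    (q : ℤ) ^ (ts.countP Z) ∣ mass v := by
  induction ts generalizing v with
  | nil => simp
  | cons b ts ih =>
    obtain ⟨f, h1, h2, h3, -⟩ := h
    rw [h1, map_sum]
    by_cases hz : Z b = true
    · rw [List.countP_cons_of_pos hz]
      rcases isEmpty_or_nonempty (Fin q) with he | ⟨⟨c0⟩⟩
      · simp
      · rw [Finset.sum_congr rfl (fun c _ => h3 hz c c0)]
        simp only [Finset.sum_const, Finset.card_univ, Fintype.card_fin, nsmul_eq_mul]
        rw [pow_succ, mul_comm]
        exact mul_dvd_mul dvd_rfl (ih (h2 c0))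
    · rw [List.countP_cons_of_neg hz]
      exact Finset.dvd_sum fun c _ => ih (h2 c)

theorem exists_min_child (hq : 0 < q) (m : Fin q → ℤ) : ∃ c0, ∀ c, m c0 ≤ m c := by
  have : Nonempty (Fin q) := ⟨⟨0, hq⟩⟩
  exact Finite.exists_min m

theorem card_mul_le_sum (m : Fin q → ℤ) (c0 : Fin q) (h : ∀ c, m c0 ≤ m c) :
    (q : ℤ) * m c0 ≤ ∑ c, m c := by
  have := Finset.sum_le_sum (s := Finset.univ) (fun c _ => h c)
  simpa using this

theorem Good.decomp (hp : p.Prime) (hq : 0 < q) (hpq : Nat.Coprime p q)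
    (hpos : ∀ v ∈ pos, 0 ≤ mass v)
    (hD' : ∀ v ∈ D', (p : ℤ) ∣ mass v)
    {ts : List ℕ} {v : V} (h : Good q mass pos D D' Z X Y ts v)
    (hlt : mass v < p * (q : ℤ) ^ (ts.countP (fun b => Z b || Y b))) :
    ∃ g h, v = g + h ∧ g ∈ D' ∧ h ∈ pos ∧ 0 ≤ mass g ∧
      (q : ℤ) ^ (ts.countP (fun b => Z b || Y b)) ∣ mass h := by
  have hqz : (0 : ℤ) < q := by exact_mod_cast hq
  induction ts generalizing v with
  | nil => exact ⟨0, v, by simp, D'.zero_mem, h, by simp, by simp⟩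
  | cons b ts ih =>
    obtain ⟨f, h1, h2, h3, h4, h5⟩ := h
    have hf0 : ∀ c, 0 ≤ mass (f c) := fun c => hpos _ (h2 c).mem_pos
    have hle : ∀ c, mass (f c) ≤ mass v := by
      intro c
      rw [h1, map_sum]
      exact Finset.single_le_sum (f := fun c => mass (f c)) (fun c _ => hf0 c) (Finset.mem_univ c)
    set e := ts.countP (fun b => Z b || Y b) with he
    by_cases hz : Z b = true
    · rw [List.countP_cons_of_pos (by simp [hz])] at hlt ⊢
      have hc : ∀ c, mass v = q * mass (f c) := by
        intro c
        rw [h1, map_sum, Finset.sum_congr rfl (fun c' _ => h3 hz c' c)]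
        simp
      have hlt' : ∀ c, mass (f c) < p * (q : ℤ) ^ e := by
        intro c
        have := hc c
        rw [← he, pow_succ] at hlt
        have h6 : (q : ℤ) * mass (f c) < q * (p * (q : ℤ) ^ e) := by rw [← this]; linarith
        exact lt_of_mul_lt_mul_left h6 hqz.le
      choose g k hgk hg hk hg0 hkd using fun c => ih (h2 c) (hlt' c)
      refine ⟨∑ c, g c, ∑ c, k c, ?_, AddSubgroup.sum_mem _ fun c _ => hg c,
        AddSubmonoid.sum_mem _ fun c _ => hk c, ?_, ?_⟩
      · rw [h1, ← Finset.sum_add_distrib]; exact Finset.sum_congr rfl fun c _ => hgk c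
      · rw [map_sum]; exact Finset.sum_nonneg fun c _ => hg0 c
      · rw [map_sum]
        obtain ⟨c0⟩ : Nonempty (Fin q) := ⟨⟨0, hq⟩⟩
        have heq : ∀ c, mass (k c) = mass (k c0) := by
          intro c
          obtain ⟨n, hn⟩ := hkd c
          obtain ⟨n0, hn0⟩ := hkd c0
          have hqe : (0 : ℤ) < (q : ℤ) ^ e := by positivity
          have e1 : mass (f c) = mass (g c) + mass (k c) := by rw [← map_add, ← hgk]
          have e2 : mass (f c0) = mass (g c0) + mass (k c0) := by rw [← map_add, ← hgk]
          have e3 := h3 hz c c0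
          have b1 : n < p := by
            have := hlt' c; have := hg0 c
            exact lt_of_mul_lt_mul_left (a := (q : ℤ) ^ e) (by linarith) hqe.le
          have b2 : n0 < p := by
            have := hlt' c0; have := hg0 c0
            exact lt_of_mul_lt_mul_left (a := (q : ℤ) ^ e) (by linarith) hqe.le
          have b3 : 0 ≤ n := by
            have := hpos _ (hk c); rw [hn] at this; exact nonneg_of_mul_nonneg_right this hqe
          have b4 : 0 ≤ n0 := by
            have := hpos _ (hk c0); rw [hn0] at this; exact nonneg_of_mul_nonneg_right this hqe
          have d1 : (p : ℤ) ∣ (q : ℤ) ^ e * (n - n0) := by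
            have : (q : ℤ) ^ e * (n - n0) = mass (g c0) - mass (g c) := by
              rw [mul_sub, ← hn, ← hn0]; linarith
            rw [this]
            exact dvd_sub (hD' _ (hg c0)) (hD' _ (hg c))
          have d2 : (p : ℤ) ∣ n - n0 := by
            refine IsCoprime.dvd_of_dvd_mul_left ?_ d1
            exact (Nat.isCoprime_iff_coprime.mpr hpq).pow_right
          have : n - n0 = 0 := Int.eq_zero_of_abs_lt_dvd d2 (by rw [abs_lt]; constructor <;> linarith)
          rw [hn, hn0, show n = n0 by linarith]
        rw [Finset.sum_congr rfl (fun c _ => heq c)]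
        simp only [Finset.sum_const, Finset.card_univ, Fintype.card_fin, nsmul_eq_mul]
        rw [← he, pow_succ, mul_comm]
        exact mul_dvd_mul dvd_rfl (hkd c0)
    by_cases hy : Y b = true
    · rw [List.countP_cons_of_pos (by simp [hy])] at hlt ⊢
      obtain ⟨c0, hc0⟩ := exists_min_child hq (fun c => mass (f c))
      have hm := card_mul_le_sum _ c0 hc0
      rw [← map_sum, ← h1] at hm
      rw [← he, pow_succ] at hlt
      have hl : mass (f c0) < p * (q : ℤ) ^ e :=
        lt_of_mul_lt_mul_left (a := (q : ℤ)) (by linarith) hqz.le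
      obtain ⟨g, k, hgk, hg, hk, hg0, hkd⟩ := ih (h2 c0) hl
      refine ⟨∑ c, (f c - f c0) + q • g, q • k, ?_, ?_, AddSubmonoid.nsmul_mem _ hk _, ?_, ?_⟩
      · rw [add_assoc, ← nsmul_add, ← hgk, h1]
        simp
      · exact add_mem (AddSubgroup.sum_mem _ fun c _ => h5 hy c c0) (AddSubgroup.nsmul_mem _ hg _)
      · rw [map_add, map_sum, map_nsmul]
        have : 0 ≤ ∑ c, mass (f c - f c0) := Finset.sum_nonneg fun c _ => by
          rw [map_sub]; linarith [hc0 c]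
        have := nsmul_nonneg hg0 q
        linarith
      · rw [map_nsmul, nsmul_eq_mul, ← he, pow_succ, mul_comm]
        exact mul_dvd_mul dvd_rfl hkd
    · rw [List.countP_cons_of_neg (by simp [hy, hz])] at hlt ⊢
      choose g k hgk hg hk hg0 hkd using fun c => ih (h2 c) ((hle c).trans_lt hlt)
      refine ⟨∑ c, g c, ∑ c, k c, ?_, AddSubgroup.sum_mem _ fun c _ => hg c,
        AddSubmonoid.sum_mem _ fun c _ => hk c, ?_, ?_⟩
      · rw [h1, ← Finset.sum_add_distrib]; exact Finset.sum_congr rfl fun c _ => hgk c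
      · rw [map_sum]; exact Finset.sum_nonneg fun c _ => hg0 c
      · rw [map_sum]; exact Finset.dvd_sum fun c _ => hkd c

theorem Good.both (hpq : Nat.Coprime p q)
    (hDD' : ∀ v ∈ D, v ∈ D' → (p : ℤ) ^ 2 ∣ mass v)
    {ts : List ℕ} {v : V} (h : Good q mass pos D D' Z X Y ts v) (hv : 0 < mass v)
    (h1 : v ∈ D) (h2 : v ∈ D') : (p : ℤ) ^ 2 * (q : ℤ) ^ (ts.countP Z) ≤ mass v :=
  Int.le_of_dvd hv (IsCoprime.mul_dvd ((Nat.isCoprime_iff_coprime.mpr hpq).pow)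
    (hDD' v h1 h2) h.dvd_mass)

theorem Good.flag (hp : p.Prime) (hq : 0 < q) (hpq : Nat.Coprime p q)
    (hpos : ∀ v ∈ pos, 0 ≤ mass v) (hpos0 : ∀ v ∈ pos, mass v = 0 → v = 0)
    (hD : ∀ v ∈ D, (p : ℤ) ∣ mass v) (hD' : ∀ v ∈ D', (p : ℤ) ∣ mass v)
    (hDD' : ∀ v ∈ D, v ∈ D' → (p : ℤ) ^ 2 ∣ mass v)
    {ts : List ℕ} {v : V} (h : Good q mass pos D D' Z X Y ts v) (hv : 0 < mass v) (h1 : v ∈ D) :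
    p * (q : ℤ) ^ (ts.countP (fun b => Z b || Y b)) ≤ mass v ∨
      (p : ℤ) ^ 2 * (q : ℤ) ^ (ts.countP Z) ≤ mass v := by
  by_contra! hc
  obtain ⟨hc1, hc2⟩ := hc
  obtain ⟨g, k, hgk, hg, hk, hg0, n, hn⟩ := h.decomp hp hq hpq hpos hD' hc1
  have e1 : mass v = mass g + mass k := by rw [← map_add, ← hgk]
  have hqe : (0 : ℤ) < (q : ℤ) ^ (ts.countP (fun b => Z b || Y b)) := by
    have : (0 : ℤ) < q := by exact_mod_cast hq
    positivity
  have b1 : n < p := lt_of_mul_lt_mul_left (by linarith) hqe.le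
  have b3 : 0 ≤ n := by
    have := hpos _ hk; rw [hn] at this; exact nonneg_of_mul_nonneg_right this hqe
  have d1 : (p : ℤ) ∣ n := by
    have : (p : ℤ) ∣ mass k := by
      rw [show mass k = mass v - mass g by linarith]
      exact dvd_sub (hD _ h1) (hD' _ hg)
    rw [hn] at this
    exact IsCoprime.dvd_of_dvd_mul_left ((Nat.isCoprime_iff_coprime.mpr hpq).pow_right) this
  have n0 : n = 0 := Int.eq_zero_of_abs_lt_dvd d1 (by rw [abs_lt]; constructor <;> linarith)
  have k0 : k = 0 := hpos0 _ hk (by rw [hn, n0, mul_zero])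
  have : v = g := by rw [hgk, k0, add_zero]
  have := h.both hpq hDD' hv h1 (this ▸ hg)
  linarith

theorem Good.main (hp : p.Prime) (hq : 0 < q) (hpq : Nat.Coprime p q)
    (hpos : ∀ v ∈ pos, 0 ≤ mass v) (hpos0 : ∀ v ∈ pos, mass v = 0 → v = 0)
    (hD : ∀ v ∈ D, (p : ℤ) ∣ mass v) (hD' : ∀ v ∈ D', (p : ℤ) ∣ mass v)
    (hDD' : ∀ v ∈ D, v ∈ D' → (p : ℤ) ^ 2 ∣ mass v)
    {ts : List ℕ} {v : V} (h : Good q mass pos D D' Z X Y ts v) (hv : 0 < mass v) :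
    (q : ℤ) ^ (ts.countP (fun b => Z b || (X b || Y b))) ≤ mass v ∨
    p * (q : ℤ) ^ (ts.countP (fun b => Z b || X b)) ≤ mass v ∨
    p * (q : ℤ) ^ (ts.countP (fun b => Z b || Y b)) ≤ mass v ∨
      (p : ℤ) ^ 2 * (q : ℤ) ^ (ts.countP Z) ≤ mass v := by
  have hqz : (0 : ℤ) < q := by exact_mod_cast hq
  have hq1 : (1 : ℤ) ≤ q := hqz
  induction ts generalizing v with
  | nil => left; simp; omega
  | cons b ts ih =>
    have hfull := h
    obtain ⟨f, h1, h2, h3, h4, h5⟩ := h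
    have hf0 : ∀ c, 0 ≤ mass (f c) := fun c => hpos _ (h2 c).mem_pos
    have hsum : mass v = ∑ c, mass (f c) := by rw [h1, map_sum]
    have hle : ∀ c, mass (f c) ≤ mass v := by
      intro c
      rw [hsum]
      exact Finset.single_le_sum (f := fun c => mass (f c)) (fun c _ => hf0 c) (Finset.mem_univ c)
    obtain ⟨c1, hc1⟩ : ∃ c, 0 < mass (f c) := by
      by_contra! hcon
      have : ∑ c, mass (f c) ≤ 0 := Finset.sum_nonpos fun c _ => hcon c
      linarith
    obtain ⟨c0, hc0⟩ := exists_min_child hq (fun c => mass (f c))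
    have hm := card_mul_le_sum _ c0 hc0
    rw [← hsum] at hm
    -- the minimal child, if nonzero, gives everything up to a factor `q`
    have key : 0 < mass (f c0) →
        (q : ℤ) ^ (ts.countP (fun b => Z b || (X b || Y b)) + 1) ≤ mass v ∨
        p * (q : ℤ) ^ (ts.countP (fun b => Z b || X b) + 1) ≤ mass v ∨
        p * (q : ℤ) ^ (ts.countP (fun b => Z b || Y b) + 1) ≤ mass v ∨
        (p : ℤ) ^ 2 * (q : ℤ) ^ (ts.countP Z + 1) ≤ mass v := by
      intro h0
      simp only [pow_succ, ← mul_assoc] at *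
      rcases ih (h2 c0) h0 with h | h | h | h
      · left; nlinarith
      · right; left; nlinarith
      · right; right; left; nlinarith
      · right; right; right; nlinarith
    have drop : ∀ {a : ℤ} {n : ℕ}, 0 ≤ a → a * (q : ℤ) ^ (n + 1) ≤ mass v →
        a * (q : ℤ) ^ n ≤ mass v := by
      intro a n ha h
      refine le_trans ?_ h
      exact mul_le_mul_of_nonneg_left (pow_le_pow_right₀ hq1 (Nat.le_succ n)) ha
    have hp0 : (0 : ℤ) ≤ p := by positivity
    have hp20 : (0 : ℤ) ≤ (p : ℤ) ^ 2 := by positivity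
    by_cases hz : Z b = true
    · rw [List.countP_cons_of_pos (by simp [hz]), List.countP_cons_of_pos (by simp [hz]),
        List.countP_cons_of_pos (by simp [hz]), List.countP_cons_of_pos hz]
      exact key (by rw [h3 hz c0 c1]; exact hc1)
    by_cases hx : X b = true <;> by_cases hy : Y b = true
    · rw [List.countP_cons_of_pos (by simp [hx]), List.countP_cons_of_pos (by simp [hx]),
        List.countP_cons_of_pos (by simp [hy]), List.countP_cons_of_neg hz]
      rcases (hf0 c0).lt_or_eq with h0 | h0
      · rcases key h0 with h | h | h | h
        · exact Or.inl h
        · exact Or.inr (Or.inl h)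
        · exact Or.inr (Or.inr (Or.inl h))
        · exact Or.inr (Or.inr (Or.inr (drop hp20 h)))
      · have z0 : f c0 = 0 := hpos0 _ (h2 c0).mem_pos h0.symm
        have m1 : f c1 ∈ D := by simpa [z0] using h4 hx c1 c0
        have m2 : f c1 ∈ D' := by simpa [z0] using h5 hy c1 c0
        have := (h2 c1).both hpq hDD' hc1 m1 m2
        exact Or.inr (Or.inr (Or.inr (this.trans (hle c1))))
    · rw [List.countP_cons_of_pos (by simp [hx]), List.countP_cons_of_pos (by simp [hx]),
        List.countP_cons_of_neg (by simp [hy, hz]), List.countP_cons_of_neg hz]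
      rcases (hf0 c0).lt_or_eq with h0 | h0
      · rcases key h0 with h | h | h | h
        · exact Or.inl h
        · exact Or.inr (Or.inl h)
        · exact Or.inr (Or.inr (Or.inl (drop hp0 h)))
        · exact Or.inr (Or.inr (Or.inr (drop hp20 h)))
      · have z0 : f c0 = 0 := hpos0 _ (h2 c0).mem_pos h0.symm
        have m1 : f c1 ∈ D := by simpa [z0] using h4 hx c1 c0
        rcases (h2 c1).flag hp hq hpq hpos hpos0 hD hD' hDD' hc1 m1 with h | h
        · exact Or.inr (Or.inr (Or.inl (h.trans (hle c1))))
        · exact Or.inr (Or.inr (Or.inr (h.trans (hle c1))))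
    · rw [List.countP_cons_of_pos (by simp [hy]), List.countP_cons_of_neg (by simp [hx, hz]),
        List.countP_cons_of_pos (by simp [hy]), List.countP_cons_of_neg hz]
      rcases (hf0 c0).lt_or_eq with h0 | h0
      · rcases key h0 with h | h | h | h
        · exact Or.inl h
        · exact Or.inr (Or.inl (drop hp0 h))
        · exact Or.inr (Or.inr (Or.inl h))
        · exact Or.inr (Or.inr (Or.inr (drop hp20 h)))
      · have z0 : f c0 = 0 := hpos0 _ (h2 c0).mem_pos h0.symm
        have m1 : f c1 ∈ D' := by simpa [z0] using h5 hy c1 c0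
        rcases (h2 c1).swap.flag hp hq hpq hpos hpos0 hD' hD (fun v a b => hDD' v b a) hc1 m1
          with h | h
        · exact Or.inr (Or.inl (h.trans (hle c1)))
        · exact Or.inr (Or.inr (Or.inr (h.trans (hle c1))))
    · rw [List.countP_cons_of_neg (by simp [hx, hy, hz]), List.countP_cons_of_neg (by simp [hx, hz]),
        List.countP_cons_of_neg (by simp [hy, hz]), List.countP_cons_of_neg hz]
      rcases ih (h2 c1) hc1 with h | h | h | h
      · exact Or.inl (h.trans (hle c1))
      · exact Or.inr (Or.inl (h.trans (hle c1)))
      · exact Or.inr (Or.inr (Or.inl (h.trans (hle c1))))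
      · exact Or.inr (Or.inr (Or.inr (h.trans (hle c1))))

end Abs

/-! ### Upper bound for `FIB` -/

theorem maskPoly_build (p : ℕ) (hp : 0 < p) (E : Finset ℕ) (N : ℕ) :
    ∃ B : Finset ℕ, B.Nonempty ∧ (∀ x ∈ B, x < p ^ N) ∧
      B.card = p ^ (E.filter (fun a => 1 ≤ a ∧ a ≤ N)).card ∧
      ∀ a ∈ E, 1 ≤ a → a ≤ N →
        (∑ j ∈ Finset.range p, (X : Polynomial ℤ) ^ (j * p ^ (a - 1))) ∣ maskPoly B := by
  induction N with
  | zero =>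
    refine ⟨{0}, by simp, by simp, ?_, fun a _ h1 h2 => by omega⟩
    rw [Finset.filter_false_of_mem (fun a _ => by omega)]
    simp
  | succ N ih =>
    obtain ⟨B, hB, hlt, hcard, hdvd⟩ := ih
    by_cases hE : N + 1 ∈ E
    · have hinj : Set.InjOn (fun t : ℕ × ℕ => t.1 * p ^ N + t.2)
          (Finset.range p ×ˢ B : Finset (ℕ × ℕ)) := by
        rintro ⟨j, x⟩ h1 ⟨j', x'⟩ h2 h
        simp only [Finset.coe_product, Set.mem_prod, Finset.mem_coe] at h1 h2
        have l1 := hlt _ h1.2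
        have l2 := hlt _ h2.2
        simp only at h
        have hP : 0 < p ^ N := by positivity
        have e1 : j = j' := by
          have := congrArg (· / p ^ N) h
          simpa [Nat.mul_add_div, mul_comm _ (p ^ N), Nat.mul_add_div hP, Nat.div_eq_of_lt l1,
            Nat.div_eq_of_lt l2] using this
        subst e1
        simp only [Nat.add_left_cancel_iff] at h
        rw [h]
      have hmask : maskPoly ((Finset.range p ×ˢ B).image (fun t : ℕ × ℕ => t.1 * p ^ N + t.2)) =
          (∑ j ∈ Finset.range p, (X : Polynomial ℤ) ^ (j * p ^ N)) * maskPoly B := by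
        unfold maskPoly
        rw [Finset.sum_image hinj, Finset.sum_product, Finset.sum_mul_sum]
        simp only [pow_add]
      refine ⟨(Finset.range p ×ˢ B).image (fun t : ℕ × ℕ => t.1 * p ^ N + t.2), ?_, ?_, ?_, ?_⟩
      · exact ((Finset.nonempty_range_iff.mpr hp.ne').product hB).image _
      · intro x hx
        simp only [Finset.mem_image, Finset.mem_product, Finset.mem_range] at hx
        obtain ⟨⟨j, y⟩, ⟨h1, h2⟩, rfl⟩ := hx
        have := hlt _ h2
        have : (j + 1) * p ^ N ≤ p * p ^ N := Nat.mul_le_mul_right _ h1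
        simp only at *
        rw [pow_succ']
        linarith
      · rw [Finset.card_image_of_injOn hinj, Finset.card_product, hcard, Finset.card_range]
        have : E.filter (fun a => 1 ≤ a ∧ a ≤ N + 1) =
            insert (N + 1) (E.filter (fun a => 1 ≤ a ∧ a ≤ N)) := by
          ext a
          simp only [Finset.mem_filter, Finset.mem_insert]
          constructor
          · rintro ⟨h1, h2, h3⟩
            by_cases h : a = N + 1
            · exact Or.inl h
            · exact Or.inr ⟨h1, h2, by omega⟩
          · rintro (rfl | ⟨h1, h2, h3⟩)
            · exact ⟨hE, by omega, le_rfl⟩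
            · exact ⟨h1, h2, by omega⟩
        rw [this, Finset.card_insert_of_notMem (by simp), pow_succ']
      · intro a ha h1 h2
        rw [hmask]
        by_cases h : a = N + 1
        · subst h
          exact Dvd.intro _ rfl
        · exact Dvd.dvd.mul_left (hdvd a ha h1 (by omega)) _
    · refine ⟨B, hB, fun x hx => (hlt x hx).trans_le (Nat.pow_le_pow_right hp (Nat.le_succ N)), ?_,
        ?_⟩
      · rw [hcard]
        congr 2
        apply Finset.filter_congr
        intro a ha
        have : a ≠ N + 1 := fun h => hE (h ▸ ha)
        omega
      · intro a ha h1 h2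
        have : a ≠ N + 1 := fun h => hE (h ▸ ha)
        exact hdvd a ha h1 (by omega)

theorem dvd_expand_of_dvd (n : ℕ) {f g : Polynomial ℤ} (h : f ∣ g) :
    expand ℤ n f ∣ expand ℤ n g := by
  obtain ⟨k, rfl⟩ := h
  rw [map_mul]
  exact Dvd.intro _ rfl

theorem cyclo_dvd_expand (p q : ℕ) (hp : p.Prime) (hq : q.Prime) (hpq : p ≠ q) (k : ℕ) :
    cyclotomic p ℤ ∣ expand ℤ (q ^ k) (cyclotomic p ℤ) := by
  induction k with
  | zero => simp
  | succ k ih =>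
    rw [pow_succ, ← expand_expand, cyclotomic_expand_eq_cyclotomic_mul hq
      (fun h => hpq ((Nat.prime_dvd_prime_iff_eq hq hp).mp h).symm), map_mul]
    exact ih.mul_left _

theorem fiber_dvd (p q : ℕ) (hp : p.Prime) (hq : q.Prime) (hpq : p ≠ q) (α β N : ℕ)
    (hα : 1 ≤ α) (hβ : β ≤ N) :
    fiberPoly (p ^ α * q ^ β) p ∣
      expand ℤ (q ^ N) (∑ j ∈ Finset.range p, (X : Polynomial ℤ) ^ (j * p ^ (α - 1))) := by
  have : Fact p.Prime := ⟨hp⟩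
  have e1 : fiberPoly (p ^ α * q ^ β) p = expand ℤ (p ^ (α - 1) * q ^ β) (cyclotomic p ℤ) := by
    rw [cyclotomic_prime, fiberPoly]
    obtain ⟨a, rfl⟩ := Nat.exists_eq_add_of_le' hα
    have : p ^ (a + 1) * q ^ β / p = p ^ a * q ^ β := by
      rw [pow_succ', mul_assoc, Nat.mul_div_cancel_left _ hp.pos]
    simp only [map_sum, map_pow, expand_X, this, Nat.add_sub_cancel, ← pow_mul]
    exact Finset.sum_congr rfl fun j _ => by rw [mul_comm]
  have e2 : expand ℤ (q ^ N) (∑ j ∈ Finset.range p, (X : Polynomial ℤ) ^ (j * p ^ (α - 1))) =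
      expand ℤ (p ^ (α - 1) * q ^ β) (expand ℤ (q ^ (N - β)) (cyclotomic p ℤ)) := by
    rw [expand_expand, mul_assoc, ← pow_add, Nat.add_sub_cancel' hβ, cyclotomic_prime]
    simp only [map_sum, map_pow, expand_X, ← pow_mul]
    exact Finset.sum_congr rfl fun j _ => by congr 1; ring
  rw [e1, e2]
  exact dvd_expand_of_dvd _ (cyclo_dvd_expand p q hp hq hpq (N - β))

theorem FIBs_le (p q : ℕ) (hp : p.Prime) (hq : q.Prime) (hpq : p ≠ q) (N₁ N₂ : ℕ)
    (S : Finset ℕ) (E₁ E₂ : Finset ℕ)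
    (hS : ∀ s ∈ S, ∃ α β, s = p ^ α * q ^ β ∧ α ≤ N₁ ∧ β ≤ N₂ ∧
      ((1 ≤ α ∧ α ∈ E₁) ∨ (1 ≤ β ∧ β ∈ E₂))) :
    FIBs S ≤ p ^ E₁.card * q ^ E₂.card := by
  obtain ⟨B, hB, hlt, hcard, hdvd⟩ := maskPoly_build p hp.pos E₁ N₁
  obtain ⟨B', hB', hlt', hcard', hdvd'⟩ := maskPoly_build q hq.pos E₂ N₂
  have hcop : Nat.Coprime (p ^ N₁) (q ^ N₂) := Nat.Coprime.pow _ _ ((Nat.coprime_primes hp hq).mpr hpq)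
  have hinj : Set.InjOn (fun t : ℕ × ℕ => q ^ N₂ * t.1 + p ^ N₁ * t.2)
      (B ×ˢ B' : Finset (ℕ × ℕ)) := by
    rintro ⟨x, y⟩ h1 ⟨x', y'⟩ h2 h
    simp only [Finset.coe_product, Set.mem_prod, Finset.mem_coe] at h1 h2
    simp only at h
    have m1 : x ≡ x' [MOD p ^ N₁] := by
      have h3 : q ^ N₂ * x ≡ q ^ N₂ * x' [MOD p ^ N₁] := by
        have := congrArg (· % p ^ N₁) h
        simpa [Nat.ModEq, Nat.add_mul_mod_self_left] using this
      exact Nat.ModEq.cancel_left_of_coprime hcop h3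
    have e1 : x = x' := Nat.ModEq.eq_of_lt_of_lt m1 (hlt _ h1.1) (hlt _ h2.1)
    subst e1
    have : y = y' := by
      have hP : 0 < p ^ N₁ := pow_pos hp.pos _
      exact Nat.eq_of_mul_eq_mul_left hP (Nat.add_left_cancel h)
    rw [this]
  have hmask : maskPoly ((B ×ˢ B').image (fun t : ℕ × ℕ => q ^ N₂ * t.1 + p ^ N₁ * t.2)) =
      expand ℤ (q ^ N₂) (maskPoly B) * expand ℤ (p ^ N₁) (maskPoly B') := by
    unfold maskPoly
    rw [Finset.sum_image hinj, Finset.sum_product, map_sum, map_sum, Finset.sum_mul_sum]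
    simp only [pow_add, pow_mul, map_pow, expand_X]
  have hle : FIBs S ≤ p ^ (E₁.filter (fun a => 1 ≤ a ∧ a ≤ N₁)).card *
      q ^ (E₂.filter (fun a => 1 ≤ a ∧ a ≤ N₂)).card := by
    apply Nat.sInf_le
    refine ⟨(B ×ˢ B').image (fun t : ℕ × ℕ => q ^ N₂ * t.1 + p ^ N₁ * t.2),
      (hB.product hB').image _, ?_, ?_⟩
    · rw [Finset.card_image_of_injOn hinj, Finset.card_product, hcard, hcard']
    · intro s hs
      obtain ⟨α, β, rfl, hα, hβ, h | h⟩ := hS s hs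
      · refine ⟨p, hp, Dvd.dvd.mul_right (dvd_pow_self p (by omega)) _, ?_⟩
        rw [hmask]
        refine Dvd.dvd.mul_right ((fiber_dvd p q hp hq hpq α β N₂ h.1 hβ).trans ?_) _
        exact dvd_expand_of_dvd _ (hdvd α h.2 h.1 hα)
      · refine ⟨q, hq, Dvd.dvd.mul_left (dvd_pow_self q (by omega)) _, ?_⟩
        rw [hmask, mul_comm (p ^ α)]
        refine Dvd.dvd.mul_left ((fiber_dvd q p hq hp hpq.symm β α N₁ h.1 hα).trans ?_) _
        exact dvd_expand_of_dvd _ (hdvd' β h.2 h.1 hβ)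
  refine hle.trans (Nat.mul_le_mul ?_ ?_)
  · exact Nat.pow_le_pow_right hp.pos (Finset.card_filter_le _ _)
  · exact Nat.pow_le_pow_right hq.pos (Finset.card_filter_le _ _)

/-! ### Cyclotomic divisibility in terms of fibers -/

/-- The part of the mask polynomial supported on a residue class. -/
noncomputable def partPoly (M : ℕ) (w : ZMod M → ℕ) (m j : ℕ) : Polynomial ℤ :=
  ∑ i ∈ (Finset.range M).filter (fun i => i ≡ j [MOD m]), C ((w (i : ZMod M)) : ℤ) * X ^ i

theorem root_sum (N : ℕ) (hN : 0 < N) (ω : ℂ) (hω : IsPrimitiveRoot ω N) (e : ℕ) :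
    ∑ k ∈ Finset.range N, (ω ^ e) ^ k = if N ∣ e then (N : ℂ) else 0 := by
  split_ifs with h
  · rw [(hω.pow_eq_one_iff_dvd e).mpr h]
    simp
  · have h1 : ω ^ e ≠ 1 := fun h' => h ((hω.pow_eq_one_iff_dvd e).mp h')
    rw [geom_sum_eq h1, ← pow_mul, mul_comm, pow_mul, hω.pow_eq_one]
    simp

theorem dvd_iff_modEq (N : ℕ) (hN : 0 < N) (x j : ℕ) : N ∣ x + (N - 1) * j ↔ x ≡ j [MOD N] := by
  obtain ⟨n, rfl⟩ := Nat.exists_eq_add_of_le' hN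
  rw [Nat.add_sub_cancel, ← Nat.modEq_zero_iff_dvd]
  have h0 : j + n * j ≡ 0 [MOD (n + 1)] := by
    rw [Nat.modEq_zero_iff_dvd]; exact ⟨j, by ring⟩
  constructor
  · intro h
    exact Nat.ModEq.add_right_cancel' (n * j) (h.trans h0.symm)
  · intro h
    exact (h.add_right _).trans h0

theorem part_eval (N M : ℕ) (hN : 0 < N) (w : ZMod M → ℕ) (ζ ω : ℂ) (hω : IsPrimitiveRoot ω N)
    (j : ℕ) : (N : ℂ) * aeval ζ (partPoly M w N j) =
      ∑ k ∈ Finset.range N, (ω ^ k) ^ ((N - 1) * j) * aeval (ζ * ω ^ k) (wmaskPoly M w) := by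
  have e1 : ∀ k, (ω ^ k) ^ ((N - 1) * j) * aeval (ζ * ω ^ k) (wmaskPoly M w) =
      ∑ i ∈ Finset.range M, (w (i : ZMod M) : ℂ) * ζ ^ i * (ω ^ (i + (N - 1) * j)) ^ k := by
    intro k
    simp only [wmaskPoly, map_sum, map_mul, map_pow, aeval_X, aeval_C, Finset.mul_sum]
    refine Finset.sum_congr rfl fun i _ => ?_
    have : (ω ^ (i + (N - 1) * j)) ^ k = (ω ^ k) ^ i * (ω ^ k) ^ ((N - 1) * j) := by
      rw [← pow_add, ← pow_mul, ← pow_mul, mul_comm]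
    rw [this, mul_pow]
    simp
    ring
  rw [Finset.sum_congr rfl fun k _ => e1 k, Finset.sum_comm]
  simp only [← Finset.mul_sum, root_sum N hN ω hω, dvd_iff_modEq N hN]
  simp only [partPoly, map_sum, map_mul, map_pow, aeval_X, aeval_C, Finset.mul_sum,
    Finset.sum_filter]
  refine Finset.sum_congr rfl fun i _ => ?_
  split_ifs
  · simp; ring
  · simp

theorem cyclo_dvd_diff (p q : ℕ) (hp : p.Prime) (hq : q.Prime) (hpq : p ≠ q) (M : ℕ)
    (w : ZMod M → ℕ) (a b : ℕ) (hdvd : cyclotomic (p ^ a * q ^ (b + 1)) ℤ ∣ wmaskPoly M w)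
    (j j' : ℕ) (hj : j ≡ j' [MOD q ^ b]) :
    cyclotomic (p ^ a) ℤ ∣ partPoly M w (q ^ (b + 1)) j - partPoly M w (q ^ (b + 1)) j' := by
  have hP : 0 < p ^ a := pow_pos hp.pos _
  have hN : 0 < q ^ (b + 1) := pow_pos hq.pos _
  have hζ := Complex.isPrimitiveRoot_exp (p ^ a) hP.ne'
  have hω := Complex.isPrimitiveRoot_exp (q ^ (b + 1)) hN.ne'
  set ζ := Complex.exp (2 * Real.pi * Complex.I / (p ^ a : ℕ))
  set ω := Complex.exp (2 * Real.pi * Complex.I / (q ^ (b + 1) : ℕ))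
  rw [cyclotomic_eq_minpoly hζ hP]
  apply minpoly.isIntegrallyClosed_dvd (hζ.isIntegral hP)
  have hNC : ((q ^ (b + 1) : ℕ) : ℂ) ≠ 0 := by exact_mod_cast hN.ne'
  apply mul_left_cancel₀ hNC
  rw [map_sub, mul_sub, part_eval _ M hN w ζ ω hω, part_eval _ M hN w ζ ω hω, mul_zero, sub_eq_zero]
  refine Finset.sum_congr rfl fun k _ => ?_
  have hk1 : (ω ^ k) ^ q ^ (b + 1) = 1 := by
    rw [← pow_mul, mul_comm, pow_mul, hω.pow_eq_one, one_pow]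
  by_cases hk : (ω ^ k) ^ q ^ b = 1
  · congr 1
    have hm : (q ^ (b + 1) - 1) * j ≡ (q ^ (b + 1) - 1) * j' [MOD q ^ b] := hj.mul_left _
    rw [pow_eq_pow_mod _ hk, hm, ← pow_eq_pow_mod _ hk]
  · have : Fact q.Prime := ⟨hq⟩
    have ho : orderOf (ω ^ k) = q ^ (b + 1) := orderOf_eq_prime_pow hk hk1
    have ho' : orderOf ζ = p ^ a := hζ.eq_orderOf.symm
    have hcop : Nat.Coprime (orderOf ζ) (orderOf (ω ^ k)) := by
      rw [ho, ho']
      exact Nat.Coprime.pow _ _ ((Nat.coprime_primes hp hq).mpr hpq)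
    have hprim : IsPrimitiveRoot (ζ * ω ^ k) (p ^ a * q ^ (b + 1)) := by
      rw [← ho, ← ho', ← (Commute.all ζ (ω ^ k)).orderOf_mul_eq_mul_orderOf_of_coprime hcop]
      exact IsPrimitiveRoot.orderOf _
    have hz : aeval (ζ * ω ^ k) (wmaskPoly M w) = 0 := by
      rw [cyclotomic_eq_minpoly hprim (Nat.mul_pos hP hN)] at hdvd
      exact aeval_eq_zero_of_dvd_aeval_eq_zero hdvd (minpoly.aeval _ _)
    rw [hz, mul_zero, mul_zero]

theorem partPoly_split (M : ℕ) (w : ZMod M → ℕ) (q : ℕ) (hq : 0 < q) (b j : ℕ) :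
    partPoly M w (q ^ b) j = ∑ c : Fin q, partPoly M w (q ^ (b + 1)) (j + c * q ^ b) := by
  have hqb : 0 < q ^ b := pow_pos hq _
  unfold partPoly
  rw [← Finset.sum_biUnion]
  · refine Finset.sum_congr ?_ fun _ _ => rfl
    ext i
    simp only [Finset.mem_filter, Finset.mem_biUnion, Finset.mem_univ, true_and]
    constructor
    · rintro ⟨hi, hm⟩
      -- digit of `i - j`, computed with integers
      have hm' : ((q ^ b : ℕ) : ℤ) ∣ (i : ℤ) - j := (Nat.modEq_iff_dvd.mp hm.symm)
      obtain ⟨t, ht⟩ := hm'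
      have hq' : (0 : ℤ) < q := by exact_mod_cast hq
      have h0 : 0 ≤ t % q := Int.emod_nonneg _ hq'.ne'
      have h1 : t % q < q := Int.emod_lt_of_pos _ hq'
      refine ⟨⟨(t % q).toNat, by omega⟩, hi, ?_⟩
      apply Nat.ModEq.symm
      rw [Nat.modEq_iff_dvd]
      push_cast
      rw [Int.toNat_of_nonneg h0]
      refine ⟨t / q, ?_⟩
      have h2 := Int.emod_add_mul_ediv t q
      push_cast at ht
      rw [pow_succ]
      linear_combination ht - (q : ℤ) ^ b * h2
    · rintro ⟨c, hi, hm⟩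
      refine ⟨hi, ?_⟩
      have := hm.of_dvd (pow_dvd_pow q (Nat.le_succ b))
      refine this.trans ?_
      simp [Nat.ModEq]
  · intro c _ c' _ hcc
    rw [Function.onFun, Finset.disjoint_left]
    intro i h1 h2
    simp only [Finset.mem_filter] at h1 h2
    have h3 := h1.2.symm.trans h2.2
    apply hcc
    have h4 : (c : ℕ) * q ^ b ≡ c' * q ^ b [MOD q * q ^ b] := by
      rw [← pow_succ']
      exact Nat.ModEq.add_left_cancel' j h3
    have h5 := Nat.ModEq.mul_right_cancel' hqb.ne' h4
    exact Fin.ext (Nat.ModEq.eq_of_lt_of_lt h5 c.2 c'.2)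

/-! ### Assembling -/

/-- Polynomials with nonnegative coefficients. -/
def posPoly : AddSubmonoid (Polynomial ℤ) where
  carrier := {f | ∀ n, 0 ≤ f.coeff n}
  add_mem' := by
    intro f g hf hg n
    rw [coeff_add]
    exact add_nonneg (hf n) (hg n)
  zero_mem' := by intro n; simp

/-- Evaluation at one. -/
noncomputable def massPoly : Polynomial ℤ →+ ℤ := (evalRingHom (1 : ℤ)).toAddMonoidHom

theorem massPoly_apply (f : Polynomial ℤ) : massPoly f = f.eval 1 := rfl

theorem massPoly_nonneg (f : Polynomial ℤ) (hf : f ∈ posPoly) : 0 ≤ massPoly f := by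
  rw [massPoly_apply, eval_eq_sum, Polynomial.sum]
  exact Finset.sum_nonneg fun n _ => by simpa using hf n

theorem massPoly_zero (f : Polynomial ℤ) (hf : f ∈ posPoly) (h : massPoly f = 0) : f = 0 := by
  rw [massPoly_apply, eval_eq_sum, Polynomial.sum,
    Finset.sum_eq_zero_iff_of_nonneg (fun n _ => by simpa using hf n)] at h
  ext n
  by_cases hn : n ∈ f.support
  · simpa using h n hn
  · simpa using hn

/-- Multiples of a polynomial. -/
def mulSub (g : Polynomial ℤ) : AddSubgroup (Polynomial ℤ) where
  carrier := {f | g ∣ f}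
  add_mem' := fun h1 h2 => dvd_add h1 h2
  zero_mem' := dvd_zero g
  neg_mem' := fun h => (dvd_neg).mpr h

theorem mem_mulSub (g f : Polynomial ℤ) : f ∈ mulSub g ↔ g ∣ f := Iff.rfl

theorem eval_cyc (p : ℕ) (hp : p.Prime) (a : ℕ) (ha : 1 ≤ a) :
    (cyclotomic (p ^ a) ℤ).eval 1 = p := by
  have : Fact p.Prime := ⟨hp⟩
  obtain ⟨k, rfl⟩ := Nat.exists_eq_add_of_le' ha
  exact eval_one_cyclotomic_prime_pow k

theorem mulSub_mass (p : ℕ) (hp : p.Prime) (a : ℕ) (ha : 1 ≤ a) (f : Polynomial ℤ)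
    (hf : f ∈ mulSub (cyclotomic (p ^ a) ℤ)) : (p : ℤ) ∣ massPoly f := by
  rw [← eval_cyc p hp a ha]
  exact eval_dvd hf

theorem mulSub_mass_two (p : ℕ) (hp : p.Prime) (a a' : ℕ) (ha : 1 ≤ a) (ha' : 1 ≤ a')
    (haa : a ≠ a') (f : Polynomial ℤ)
    (hf : f ∈ mulSub (cyclotomic (p ^ a) ℤ)) (hf' : f ∈ mulSub (cyclotomic (p ^ a') ℤ)) :
    (p : ℤ) ^ 2 ∣ massPoly f := by
  have i1 := cyclotomic.irreducible (pow_pos hp.pos a)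
  have i2 := cyclotomic.irreducible (pow_pos hp.pos a')
  obtain ⟨g, rfl⟩ := (mem_mulSub _ _).mp hf
  rw [mem_mulSub] at hf'
  rcases i2.prime.dvd_or_dvd hf' with h | h
  · exfalso
    have := i2.associated_of_dvd i1 h
    have := eq_of_monic_of_associated (cyclotomic.monic _ _) (cyclotomic.monic _ _) this
    have := cyclotomic_injective this
    exact haa (Nat.pow_right_injective hp.two_le this).symm
  · rw [massPoly_apply, eval_mul, eval_cyc p hp a ha, pow_two]
    apply mul_dvd_mul dvd_rfl
    rw [← eval_cyc p hp a' ha']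
    exact eval_dvd h

theorem partPoly_pos (M : ℕ) (w : ZMod M → ℕ) (m j : ℕ) : partPoly M w m j ∈ posPoly := by
  refine AddSubmonoid.sum_mem _ fun i _ n => ?_
  rw [coeff_C_mul_X_pow]
  split_ifs <;> simp

theorem good_part (p q : ℕ) (hp : p.Prime) (hq : q.Prime) (hpq : p ≠ q) (M : ℕ)
    (w : ZMod M → ℕ) (S : Finset ℕ) (hdvd : ∀ s ∈ S, cyclotomic s ℤ ∣ wmaskPoly M w)
    (a a' : ℕ) (m b j : ℕ) :
    Good q massPoly posPoly (mulSub (cyclotomic (p ^ a) ℤ)) (mulSub (cyclotomic (p ^ a') ℤ))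
      (fun b => decide (q ^ b ∈ S)) (fun b => decide (p ^ a * q ^ b ∈ S))
      (fun b => decide (p ^ a' * q ^ b ∈ S)) (List.range' (b + 1) m) (partPoly M w (q ^ b) j) := by
  induction m generalizing b j with
  | zero => exact partPoly_pos M w _ _
  | succ m ih =>
    rw [List.range'_succ]
    have hmod : ∀ c c' : Fin q, j + (c : ℕ) * q ^ b ≡ j + (c' : ℕ) * q ^ b [MOD q ^ b] := by
      intro c c'
      simp [Nat.ModEq]
    refine ⟨fun c => partPoly M w (q ^ (b + 1)) (j + c * q ^ b), partPoly_split M w q hq.pos b j,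
      fun c => ih (b + 1) _, ?_, ?_, ?_⟩
    · intro h c c'
      have h1 := cyclo_dvd_diff p q hp hq hpq M w 0 b (by simpa using hdvd _ (of_decide_eq_true h))
        _ _ (hmod c c')
      rw [pow_zero, cyclotomic_one] at h1
      have h2 := eval_dvd (x := 1) h1
      simp only [eval_sub, eval_X, eval_one, sub_self, zero_dvd_iff] at h2
      rw [massPoly_apply, massPoly_apply]
      linarith
    · intro h c c'
      exact cyclo_dvd_diff p q hp hq hpq M w a b (hdvd _ (of_decide_eq_true h)) _ _ (hmod c c')
    · intro h c c'
      exact cyclo_dvd_diff p q hp hq hpq M w a' b (hdvd _ (of_decide_eq_true h)) _ _ (hmod c c')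

theorem countP_range' (P : ℕ → Bool) (n : ℕ) :
    (List.range' 1 n).countP P = ((Finset.Icc 1 n).filter (fun b => P b = true)).card := by
  have h : (Finset.Icc 1 n).filter (fun b => P b = true) =
      ((List.range' 1 n).filter P).toFinset := by
    ext b
    simp only [Finset.mem_filter, Finset.mem_Icc, List.mem_toFinset, List.mem_filter,
      List.mem_range'_1]
    constructor
    · rintro ⟨h1, h2⟩
      exact ⟨by omega, h2⟩
    · rintro ⟨h1, h2⟩
      exact ⟨by omega, h2⟩
  rw [List.countP_eq_length_filter, h,
    List.toFinset_card_of_nodup (List.Nodup.filter _ List.nodup_range')]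

theorem exists_two (E : Set ℕ) (hfin : E.Finite) (h1 : ∀ α ∈ E, 1 ≤ α) (h2 : E.ncard ≤ 2) :
    ∃ a a', 1 ≤ a ∧ 1 ≤ a' ∧ a ≠ a' ∧ ∀ α ∈ E, α = a ∨ α = a' := by
  have : E.ncard = 0 ∨ E.ncard = 1 ∨ E.ncard = 2 := by omega
  rcases this with h | h | h
  · rw [Set.ncard_eq_zero hfin] at h
    exact ⟨1, 2, by norm_num, by norm_num, by norm_num, by simp [h]⟩
  · obtain ⟨u, rfl⟩ := Set.ncard_eq_one.mp h
    have := h1 u rfl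
    exact ⟨u, u + 1, this, by omega, by omega, fun α hα => Or.inl hα⟩
  · obtain ⟨u, v, huv, rfl⟩ := Set.ncard_eq_two.mp h
    exact ⟨u, v, h1 u (by simp), h1 v (by simp), huv, fun α hα => hα⟩

theorem core (p q : ℕ) (hp : p.Prime) (hq : q.Prime)
    (hpq : p ≠ q) (n₁ n₂ : ℕ)
    (M : ℕ) (hM : M = p ^ n₁ * q ^ n₂)
    (S : Finset ℕ) (hSdvd : ∀ s ∈ S, s ∣ M ∧ 2 ≤ s)
    (w : ZMod M → ℕ) (hw : 0 < wmass M w)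
    (hdvd : ∀ s ∈ S, cyclotomic s ℤ ∣ wmaskPoly M w)
    (hexp : Set.ncard (ExpSet S p) ≤ 2) :
    FIBs S ≤ wmass M w := by
  have hcop : Nat.Coprime p q := (Nat.coprime_primes hp hq).mpr hpq
  have hform : ∀ s ∈ S, ∃ α β, s = p ^ α * q ^ β ∧ α ≤ n₁ ∧ β ≤ n₂ := by
    intro s hs
    have h := (hSdvd s hs).1
    rw [hM] at h
    obtain ⟨x, y, hx, hy, rfl⟩ := exists_dvd_and_dvd_of_dvd_mul h
    obtain ⟨α, h1, rfl⟩ := (Nat.dvd_prime_pow hp).mp hx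
    obtain ⟨β, h2, rfl⟩ := (Nat.dvd_prime_pow hq).mp hy
    exact ⟨α, β, rfl, h1, h2⟩
  have hexpmem : ∀ α β, 1 ≤ α → p ^ α * q ^ β ∈ S → α ∈ ExpSet S p := by
    intro α β hα h
    refine ⟨hα, _, h, Dvd.intro _ rfl, ?_⟩
    rw [pow_succ, Nat.mul_dvd_mul_iff_left (pow_pos hp.pos α)]
    intro h'
    exact hpq ((Nat.prime_dvd_prime_iff_eq hp hq).mp (hp.dvd_of_dvd_pow h'))
  have hfin : (ExpSet S p).Finite := by
    refine (Set.finite_Iic n₁).subset ?_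
    rintro α ⟨-, s, hs, h1, -⟩
    have h := h1.trans (hSdvd s hs).1
    rw [hM] at h
    have := (Nat.Coprime.pow α n₂ hcop).dvd_of_dvd_mul_right h
    exact (Nat.pow_dvd_pow_iff_le_right hp.one_lt).mp this
  obtain ⟨a, a', ha, ha', haa, hE⟩ := exists_two _ hfin (fun α h => h.1) hexp
  have hpart : partPoly M w (q ^ 0) 0 = wmaskPoly M w := by
    unfold partPoly wmaskPoly
    congr 1
    simp [Nat.modEq_one]
  have hmass : massPoly (wmaskPoly M w) = (wmass M w : ℤ) := by
    simp [massPoly_apply, wmaskPoly, wmass, eval_finsetSum]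
  have hgood := good_part p q hp hq hpq M w S hdvd a a' n₂ 0 0
  rw [hpart, zero_add] at hgood
  have hv : 0 < massPoly (wmaskPoly M w) := by rw [hmass]; exact_mod_cast hw
  have hD := mulSub_mass p hp a ha
  have hD' := mulSub_mass p hp a' ha'
  have hDD' := mulSub_mass_two p hp a a' ha ha' haa
  -- every element of `S` falls under one of these cases
  have hcase : ∀ s ∈ S, ∃ α β, s = p ^ α * q ^ β ∧ α ≤ n₁ ∧ β ≤ n₂ ∧
      ((α = 0 ∧ 1 ≤ β ∧ q ^ β ∈ S) ∨ (α = a ∧ p ^ a * q ^ β ∈ S ∧ (β = 0 → p ^ a ∈ S)) ∨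
        (α = a' ∧ p ^ a' * q ^ β ∈ S ∧ (β = 0 → p ^ a' ∈ S))) := by
    intro s hs
    obtain ⟨α, β, rfl, h1, h2⟩ := hform s hs
    refine ⟨α, β, rfl, h1, h2, ?_⟩
    rcases Nat.eq_zero_or_pos α with h0 | h0
    · subst h0
      left
      refine ⟨rfl, ?_, by simpa using hs⟩
      by_contra hβ
      have := (hSdvd _ hs).2
      simp [show β = 0 by omega] at this
    · rcases hE α (hexpmem α β h0 hs) with rfl | rfl
      · right; left; exact ⟨rfl, hs, fun h => by simpa [h] using hs⟩
      · right; right; exact ⟨rfl, hs, fun h => by simpa [h] using hs⟩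
  have hIcc : ∀ β, 1 ≤ β → β ≤ n₂ → β ∈ Finset.Icc 1 n₂ := fun β h1 h2 => Finset.mem_Icc.mpr ⟨h1, h2⟩
  -- the four covers
  have c4 : (p : ℤ) ^ 2 * (q : ℤ) ^ ((List.range' 1 n₂).countP (fun b => decide (q ^ b ∈ S))) ≤
      massPoly (wmaskPoly M w) → FIBs S ≤ wmass M w := by
    intro h
    rw [hmass, countP_range'] at h
    have h' := FIBs_le p q hp hq hpq n₁ n₂ S {a, a'}
      ((Finset.Icc 1 n₂).filter (fun b => decide (q ^ b ∈ S) = true)) (by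
        intro s hs
        obtain ⟨α, β, rfl, h1, h2, h3⟩ := hcase s hs
        refine ⟨α, β, rfl, h1, h2, ?_⟩
        rcases h3 with ⟨rfl, h3, h4⟩ | ⟨rfl, -⟩ | ⟨rfl, -⟩
        · right; exact ⟨h3, by simp [h2, h3, h4]⟩
        · left; exact ⟨ha, by simp⟩
        · left; exact ⟨ha', by simp⟩)
    rw [Finset.card_pair haa] at h'
    exact h'.trans (by exact_mod_cast h)
  have c3 : p ^ a' ∉ S → (p : ℤ) * (q : ℤ) ^ ((List.range' 1 n₂).countP
      (fun b => decide (q ^ b ∈ S) || decide (p ^ a' * q ^ b ∈ S))) ≤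
      massPoly (wmaskPoly M w) → FIBs S ≤ wmass M w := by
    intro hn h
    rw [hmass, countP_range'] at h
    have h' := FIBs_le p q hp hq hpq n₁ n₂ S {a}
      ((Finset.Icc 1 n₂).filter (fun b => (decide (q ^ b ∈ S) ||
        decide (p ^ a' * q ^ b ∈ S)) = true)) (by
        intro s hs
        obtain ⟨α, β, rfl, h1, h2, h3⟩ := hcase s hs
        refine ⟨α, β, rfl, h1, h2, ?_⟩
        rcases h3 with ⟨rfl, h3, h4⟩ | ⟨rfl, -⟩ | ⟨rfl, h3, h4⟩
        · right; exact ⟨h3, by simp [h2, h3, h4]⟩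
        · left; exact ⟨ha, by simp⟩
        · right
          have : 1 ≤ β := Nat.one_le_iff_ne_zero.mpr fun h => hn (h4 h)
          exact ⟨this, by simp [h2, this, h3]⟩)
    rw [Finset.card_singleton, pow_one] at h'
    exact h'.trans (by exact_mod_cast h)
  have c2 : p ^ a ∉ S → (p : ℤ) * (q : ℤ) ^ ((List.range' 1 n₂).countP
      (fun b => decide (q ^ b ∈ S) || decide (p ^ a * q ^ b ∈ S))) ≤
      massPoly (wmaskPoly M w) → FIBs S ≤ wmass M w := by
    intro hn h
    rw [hmass, countP_range'] at h
    have h' := FIBs_le p q hp hq hpq n₁ n₂ S {a'}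
      ((Finset.Icc 1 n₂).filter (fun b => (decide (q ^ b ∈ S) ||
        decide (p ^ a * q ^ b ∈ S)) = true)) (by
        intro s hs
        obtain ⟨α, β, rfl, h1, h2, h3⟩ := hcase s hs
        refine ⟨α, β, rfl, h1, h2, ?_⟩
        rcases h3 with ⟨rfl, h3, h4⟩ | ⟨rfl, h3, h4⟩ | ⟨rfl, -⟩
        · right; exact ⟨h3, by simp [h2, h3, h4]⟩
        · right
          have : 1 ≤ β := Nat.one_le_iff_ne_zero.mpr fun h => hn (h4 h)
          exact ⟨this, by simp [h2, this, h3]⟩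
        · left; exact ⟨ha', by simp⟩)
    rw [Finset.card_singleton, pow_one] at h'
    exact h'.trans (by exact_mod_cast h)
  by_cases f1 : p ^ a ∈ S <;> by_cases f2 : p ^ a' ∈ S
  · exact c4 (hgood.both hcop hDD' hv (hdvd _ f1) (hdvd _ f2))
  · rcases hgood.flag hp hq.pos hcop massPoly_nonneg massPoly_zero hD hD' hDD' hv (hdvd _ f1) with
      h | h
    · exact c3 f2 h
    · exact c4 h
  · rcases hgood.swap.flag hp hq.pos hcop massPoly_nonneg massPoly_zero hD' hD
      (fun v x y => hDD' v y x) hv (hdvd _ f2) with h | h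
    · exact c2 f1 h
    · exact c4 h
  · rcases hgood.main hp hq.pos hcop massPoly_nonneg massPoly_zero hD hD' hDD' hv with
      h | h | h | h
    · rw [hmass, countP_range'] at h
      have h' := FIBs_le p q hp hq hpq n₁ n₂ S ∅
        ((Finset.Icc 1 n₂).filter (fun b => (decide (q ^ b ∈ S) ||
          (decide (p ^ a * q ^ b ∈ S) || decide (p ^ a' * q ^ b ∈ S))) = true)) (by
          intro s hs
          obtain ⟨α, β, rfl, h1, h2, h3⟩ := hcase s hs
          refine ⟨α, β, rfl, h1, h2, Or.inr ?_⟩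
          rcases h3 with ⟨rfl, h3, h4⟩ | ⟨rfl, h3, h4⟩ | ⟨rfl, h3, h4⟩
          · exact ⟨h3, by simp [h2, h3, h4]⟩
          · have : 1 ≤ β := Nat.one_le_iff_ne_zero.mpr fun h => f1 (h4 h)
            exact ⟨this, by simp [h2, this, h3]⟩
          · have : 1 ≤ β := Nat.one_le_iff_ne_zero.mpr fun h => f2 (h4 h)
            exact ⟨this, by simp [h2, this, h3]⟩)
      rw [Finset.card_empty, pow_zero, one_mul] at h'
      exact h'.trans (by exact_mod_cast h)
    · exact c2 f1 h
    · exact c3 f2 h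
    · exact c4 h

/-- Corollary 7.3: if `#EXP_p(S) ≤ 2` or `#EXP_q(S) ≤ 2`, then any multiset `A` with
`Φ_s ∣ A(X)` for all `s ∈ S` satisfies `|A| ≥ FIB(S)`. -/
theorem mass_ge_fib_of_two_exponents (p q : ℕ) (hp : p.Prime) (hq : q.Prime)
    (hpq : p ≠ q) (n₁ n₂ : ℕ) (hn₁ : 1 ≤ n₁) (hn₂ : 1 ≤ n₂)
    (M : ℕ) (hM : M = p ^ n₁ * q ^ n₂)
    (S : Finset ℕ) (hS : S.Nonempty) (hSdvd : ∀ s ∈ S, s ∣ M ∧ 2 ≤ s)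
    (w : ZMod M → ℕ) (hw : 0 < wmass M w)
    (hdvd : ∀ s ∈ S, cyclotomic s ℤ ∣ wmaskPoly M w)
    (hexp : Set.ncard (ExpSet S p) ≤ 2 ∨ Set.ncard (ExpSet S q) ≤ 2) :
    FIBs S ≤ wmass M w := by
  rcases hexp with h | h
  · exact core p q hp hq hpq n₁ n₂ M hM S hSdvd w hw hdvd h
  · exact core q p hq hp hpq.symm n₂ n₁ M (by rw [hM, mul_comm]) S hSdvd w hw hdvd h
end

section
/- Let M = p^{n_1} q^{n_2} with p, q distinct primes, and let A : ℤ_M → ℕ be a multiset with positive total mass. Suppose that Φ_{p^{m_1}}(X) ⋯ Φ_{p^{m_r}}(X) · Φ_{p^α q^β}(X) · Φ_{q^γ}(X) divides A(X), where 1 ≤ α < m_1 < ⋯ < m_r ≤ n_1, 1 ≤ β ≤ n_2, 1 ≤ γ ≤ n_2, and β ≠ γ. Then |A| ≥ p^r · q · min(p, q). -/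
open Polynomial

/-- Linear functional: sum of the coefficients of indices congruent to `c` mod `n`. -/
noncomputable def foldL (n : ℕ) (c : ℤ) : ℤ[X] →ₗ[ℤ] ℤ :=
  Polynomial.lsum (fun i => if (n : ℤ) ∣ (i : ℤ) - c then LinearMap.id else 0)

lemma foldL_monomial (n : ℕ) (c : ℤ) (i : ℕ) (a : ℤ) :
    foldL n c (monomial i a) = if (n : ℤ) ∣ (i : ℤ) - c then a else 0 := by
  unfold foldL
  rw [Polynomial.lsum_apply, Polynomial.sum_monomial_index]
  · split_ifs <;> simp
  · simp

lemma foldL_X_pow_mul (n : ℕ) (c : ℤ) (k : ℕ) (F : ℤ[X]) :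
    foldL n c (X ^ k * F) = foldL n (c - k) F := by
  induction F using Polynomial.induction_on' with
  | add f g hf hg => rw [mul_add, map_add, map_add, hf, hg]
  | monomial i a =>
    rw [X_pow_mul_monomial, foldL_monomial, foldL_monomial]
    have : ((i + k : ℕ) : ℤ) - c = (i : ℤ) - (c - k) := by push_cast; ring
    rw [this]

lemma foldL_congr (n : ℕ) (c d : ℤ) (h : (n : ℤ) ∣ c - d) : foldL n c = foldL n d := by
  unfold foldL
  congr 1
  funext i
  have : ((n : ℤ) ∣ (i : ℤ) - c) ↔ ((n : ℤ) ∣ (i : ℤ) - d) := by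
    have e : (i : ℤ) - d = ((i : ℤ) - c) + (c - d) := by ring
    rw [e]
    exact (dvd_add_left h).symm
  simp only [this]

lemma foldL_eq_zero (n : ℕ) (c : ℤ) (F : ℤ[X]) (h : (X ^ n - 1 : ℤ[X]) ∣ F) :
    foldL n c F = 0 := by
  obtain ⟨G, rfl⟩ := h
  rw [sub_mul, one_mul, map_sub, foldL_X_pow_mul, foldL_congr n (c - n) c (by simp), sub_self]

/-- Masses of residue classes. -/
def foldW (M : ℕ) (w : ℕ → ℤ) (n : ℕ) (c : ℤ) : ℤ :=
  ∑ i ∈ Finset.range M, if (n : ℤ) ∣ (i : ℤ) - c then w i else 0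

lemma foldL_mask (M : ℕ) (w : ℕ → ℤ) (n : ℕ) (c : ℤ) :
    foldL n c (∑ i ∈ Finset.range M, C (w i) * X ^ i) = foldW M w n c := by
  unfold foldW
  rw [map_sum]
  refine Finset.sum_congr rfl fun i _ => ?_
  rw [C_mul_X_pow_eq_monomial, foldL_monomial]

lemma foldW_congr (M : ℕ) (w : ℕ → ℤ) (n : ℕ) (c d : ℤ) (h : (n : ℤ) ∣ c - d) :
    foldW M w n c = foldW M w n d := by
  rw [← foldL_mask, ← foldL_mask, foldL_congr n c d h]

lemma foldW_nonneg (M : ℕ) (w : ℕ → ℤ) (hw : ∀ i, 0 ≤ w i) (n : ℕ) (c : ℤ) :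
    0 ≤ foldW M w n c := by
  unfold foldW
  refine Finset.sum_nonneg fun i _ => ?_
  split_ifs
  · exact hw i
  · exact le_rfl

lemma foldW_split (M : ℕ) (w : ℕ → ℤ) (n k : ℕ) (hn : 0 < n) (hk : 0 < k) (c : ℤ) :
    foldW M w n c = ∑ j ∈ Finset.range k, foldW M w (n * k) (c + n * j) := by
  unfold foldW
  rw [Finset.sum_comm]
  refine Finset.sum_congr rfl fun i _ => ?_
  have hn' : (n : ℤ) ≠ 0 := by positivity
  have hk' : (k : ℤ) ≠ 0 := by positivity
  by_cases h : (n : ℤ) ∣ (i : ℤ) - c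
  · obtain ⟨d, hd⟩ := h
    have key : ∀ j ∈ Finset.range k,
        (if ((n * k : ℕ) : ℤ) ∣ (i : ℤ) - (c + n * j) then w i else 0)
          = if (d % k).toNat = j then w i else 0 := by
      intro j hj
      have hj := Finset.mem_range.1 hj
      have e : (i : ℤ) - (c + n * j) = n * (d - j) := by linear_combination hd
      have h1 := Int.emod_nonneg d hk'
      have : ((n * k : ℕ) : ℤ) ∣ (i : ℤ) - (c + n * j) ↔ (d % k).toNat = j := by
        rw [e]
        push_cast
        rw [mul_dvd_mul_iff_left hn']
        constructor
        · intro hh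
          have : d % k = (j : ℤ) % k :=
            Int.emod_eq_emod_iff_emod_sub_eq_zero.2 (Int.emod_eq_zero_of_dvd hh)
          rw [Int.emod_eq_of_lt (a := (j : ℤ)) (by positivity) (by exact_mod_cast hj)] at this
          simp [this]
        · intro hh
          have : d % k = (j : ℤ) := by omega
          rw [← this]
          exact Int.dvd_self_sub_emod
      simp only [this]
    rw [Finset.sum_congr rfl key, Finset.sum_ite_eq, if_pos ⟨d, hd⟩, if_pos]
    rw [Finset.mem_range]
    have h1 := Int.emod_nonneg d hk'
    have h2 := Int.emod_lt_of_pos d (show (0 : ℤ) < k by positivity)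
    omega
  · rw [if_neg h]
    symm
    refine Finset.sum_eq_zero fun j _ => if_neg fun hh => h ?_
    have h3 : (n : ℤ) ∣ (i : ℤ) - (c + n * j) := by
      refine dvd_trans ?_ hh
      push_cast
      exact dvd_mul_right _ _
    have e : (i : ℤ) - c = ((i : ℤ) - (c + n * j)) + n * j := by ring
    rw [e]
    exact dvd_add h3 (dvd_mul_right _ _)

/-- Invariance of class masses from a prime-power cyclotomic divisor. -/
lemma foldW_inv (M : ℕ) (w : ℕ → ℤ) (p : ℕ) (hp : p.Prime) (m : ℕ) (hm : 1 ≤ m)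
    (h : cyclotomic (p ^ m) ℤ ∣ ∑ i ∈ Finset.range M, C (w i) * X ^ i) (c : ℤ) :
    foldW M w (p ^ m) (c - (p ^ (m - 1) : ℕ)) = foldW M w (p ^ m) c := by
  obtain ⟨k, rfl⟩ : ∃ k, m = k + 1 := ⟨m - 1, by omega⟩
  haveI := Fact.mk hp
  have h0 : (X ^ p ^ (k + 1) - 1 : ℤ[X]) ∣
      (X ^ p ^ k - 1) * ∑ i ∈ Finset.range M, C (w i) * X ^ i := by
    rw [← cyclotomic_prime_pow_mul_X_pow_sub_one ℤ p k, mul_comm]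
    exact mul_dvd_mul_left _ h
  have := foldL_eq_zero _ c _ h0
  rw [sub_mul, one_mul, map_sub, foldL_X_pow_mul, foldL_mask, foldL_mask] at this
  simpa using sub_eq_zero.1 this

/-- Four-term relation from a two-prime cyclotomic divisor. -/
lemma foldW_four (M : ℕ) (w : ℕ → ℤ) (p q : ℕ) (hp : p.Prime) (hq : q.Prime) (hpq : p ≠ q)
    (a b : ℕ)
    (h : cyclotomic (p ^ (a + 1) * q ^ (b + 1)) ℤ ∣ ∑ i ∈ Finset.range M, C (w i) * X ^ i)
    (c : ℤ) :
    foldW M w (p ^ (a + 1) * q ^ (b + 1)) c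
      - foldW M w (p ^ (a + 1) * q ^ (b + 1)) (c - (p ^ a * q ^ (b + 1) : ℕ))
      - foldW M w (p ^ (a + 1) * q ^ (b + 1)) (c - (p ^ (a + 1) * q ^ b : ℕ))
      + foldW M w (p ^ (a + 1) * q ^ (b + 1))
          (c - (p ^ a * q ^ (b + 1) : ℕ) - (p ^ (a + 1) * q ^ b : ℕ)) = 0 := by
  set N := p ^ (a + 1) * q ^ (b + 1) with hN
  set u := p ^ a * q ^ (b + 1) with hu
  set v := p ^ (a + 1) * q ^ b with hv
  have hp0 := hp.pos
  have hq0 := hq.pos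
  have hN0 : 0 < N := by positivity
  have hu0 : 0 < u := by positivity
  have hv0 : 0 < v := by positivity
  have hNu : N = p * u := by rw [hN, hu]; ring
  have hNv : N = q * v := by rw [hN, hv]; ring
  have hprop : N.properDivisors ⊆ u.divisors ∪ v.divisors := by
    intro d hd
    rw [Nat.mem_properDivisors] at hd
    obtain ⟨⟨e, he⟩, hlt⟩ := hd
    rw [Finset.mem_union, Nat.mem_divisors, Nat.mem_divisors]
    have he1 : e ≠ 1 := by rintro rfl; omega
    obtain ⟨s, hs, hse⟩ := Nat.exists_prime_and_dvd he1
    have hsN : s ∣ N := he ▸ Dvd.dvd.mul_left hse d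
    obtain ⟨f, rfl⟩ := hse
    rcases (Nat.Prime.dvd_mul hs).1 hsN with h1 | h1
    · have := (Nat.prime_dvd_prime_iff_eq hs hp).1 (hs.dvd_of_dvd_pow h1)
      subst this
      left
      refine ⟨⟨f, ?_⟩, hu0.ne'⟩
      have : s * u = s * (d * f) := by rw [← hNu, he]; ring
      exact Nat.eq_of_mul_eq_mul_left hp0 this
    · have := (Nat.prime_dvd_prime_iff_eq hs hq).1 (hs.dvd_of_dvd_pow h1)
      subst this
      right
      refine ⟨⟨f, ?_⟩, hv0.ne'⟩
      have : s * v = s * (d * f) := by rw [← hNv, he]; ring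
      exact Nat.eq_of_mul_eq_mul_left hq0 this
  have h0 : (X ^ N - 1 : ℤ[X]) ∣
      ((X ^ u - 1) * (X ^ v - 1)) * ∑ i ∈ Finset.range M, C (w i) * X ^ i := by
    rw [← prod_cyclotomic_eq_X_pow_sub_one hN0, ← prod_cyclotomic_eq_X_pow_sub_one hu0,
      ← prod_cyclotomic_eq_X_pow_sub_one hv0, ← Nat.insert_self_properDivisors hN0.ne',
      Finset.prod_insert Nat.self_notMem_properDivisors, mul_comm]
    refine mul_dvd_mul ?_ h
    rw [← Finset.prod_union_inter]
    exact Dvd.dvd.mul_right (Finset.prod_dvd_prod_of_subset _ _ _ hprop) _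
  have := foldL_eq_zero _ c _ h0
  have e : ((X ^ u - 1) * (X ^ v - 1)) * (∑ i ∈ Finset.range M, C (w i) * X ^ i : ℤ[X])
    = X ^ u * (X ^ v * ∑ i ∈ Finset.range M, C (w i) * X ^ i)
      - X ^ u * (∑ i ∈ Finset.range M, C (w i) * X ^ i)
      - X ^ v * (∑ i ∈ Finset.range M, C (w i) * X ^ i)
      + ∑ i ∈ Finset.range M, C (w i) * X ^ i := by ring
  rw [e] at this
  simp only [map_add, map_sub, foldL_X_pow_mul, foldL_mask] at this
  linarith

/-- Divisibility of class masses. -/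
lemma foldW_dvd (M : ℕ) (w : ℕ → ℤ) (p : ℕ) (hp : p.Prime) (S : Finset ℕ)
    (hS : ∀ m ∈ S, ∀ c : ℤ, foldW M w (p ^ m) (c - (p ^ (m - 1) : ℕ)) = foldW M w (p ^ m) c) :
    ∀ e : ℕ, (∀ m ∈ S, e < m) → ∀ c : ℤ, (p : ℤ) ^ S.card ∣ foldW M w (p ^ e) c := by
  induction S using Finset.induction_on_min with
  | empty => simp
  | insert a s has ih =>
    intro e he c
    have hea : e < a := he a (Finset.mem_insert_self _ _)
    have hnot : a ∉ s := fun h => lt_irrefl _ (has a h)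
    obtain ⟨k, rfl⟩ : ∃ k, a = e + k + 1 := ⟨a - e - 1, by omega⟩
    rw [foldW_split M w (p ^ e) (p ^ k) (pow_pos hp.pos _) (pow_pos hp.pos _), ← pow_add]
    refine Finset.dvd_sum fun j _ => ?_
    rw [foldW_split M w (p ^ (e + k)) p (pow_pos hp.pos _) hp.pos, ← pow_succ]
    generalize c + ((p ^ e : ℕ) : ℤ) * (j : ℤ) = x
    have hinv := hS _ (Finset.mem_insert_self _ _)
    simp only [Nat.add_sub_cancel] at hinv
    have hall : ∀ t : ℕ, foldW M w (p ^ (e + k + 1)) (x + ((p ^ (e + k) : ℕ) : ℤ) * (t : ℤ))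
        = foldW M w (p ^ (e + k + 1)) x := by
      intro t
      induction t with
      | zero => simp
      | succ t iht =>
        rw [← iht, ← hinv]
        congr 1
        push_cast
        ring
    rw [Finset.sum_congr rfl fun t _ => hall t, Finset.sum_const, Finset.card_range,
      Finset.card_insert_of_notMem hnot, pow_succ', nsmul_eq_mul]
    exact mul_dvd_mul_left _ (ih (fun m hm => hS m (Finset.mem_insert_of_mem hm)) _ has x)

/-- Iterating a shift invariance. -/
lemma shift_iter (f : ℤ → ℤ) (s : ℤ) (h : ∀ c, f (c - s) = f c) (t : ℕ) (c : ℤ) :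
    f (c - t * s) = f c := by
  induction t with
  | zero => simp
  | succ t ih =>
    rw [← ih, ← h (c - t * s)]
    congr 1
    push_cast
    ring

/-- Solving `u * t ≡ j` modulo a prime. -/
lemma exists_mul_congr (p : ℕ) (hp : p.Prime) (u : ℕ) (hu : p.Coprime u) (j : ℤ) :
    ∃ t : ℕ, (p : ℤ) ∣ u * t - j := by
  haveI := Fact.mk hp
  have hu0 : (u : ZMod p) ≠ 0 := by
    rw [Ne, ZMod.natCast_eq_zero_iff]
    exact (Nat.Prime.coprime_iff_not_dvd hp).1 hu
  refine ⟨((j : ZMod p) / (u : ZMod p)).val, ?_⟩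
  rw [← ZMod.intCast_zmod_eq_zero_iff_dvd]
  push_cast
  rw [ZMod.natCast_zmod_val]
  field_simp
  simp

/-- A sum over `q * n` terms of an `n`-periodic function is divisible by `q`. -/
lemma dvd_sum_periodic (g : ℕ → ℤ) (n : ℕ) (hg : ∀ j, g (j + n) = g j) (q : ℕ) :
    (q : ℤ) ∣ ∑ j ∈ Finset.range (q * n), g j := by
  have key : ∀ q : ℕ, ∑ j ∈ Finset.range (q * n), g j = q * ∑ j ∈ Finset.range n, g j := by
    intro q
    induction q with
    | zero => simp
    | succ q ih =>
      rw [Nat.succ_mul, Finset.sum_range_add, ih]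
      have : ∀ j, g (q * n + j) = g j := by
        intro j
        clear ih
        induction q with
        | zero => simp
        | succ q ih2 =>
          rw [← ih2, ← hg (q * n + j)]
          congr 1
          ring
      simp only [this]
      push_cast
      ring
  rw [key]
  exact dvd_mul_right _ _

lemma mass_core (p q : ℕ) (hp : p.Prime) (hq : q.Prime) (hpq : p ≠ q)
    (M : ℕ) (w : ℕ → ℤ) (hw : ∀ i, 0 ≤ w i) (hpos : 0 < foldW M w 1 0)
    (S : Finset ℕ) (a b γ : ℕ) (hS : ∀ m ∈ S, a + 1 < m) (hγ : 1 ≤ γ) (hβγ : b + 1 ≠ γ)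
    (h1 : ∀ m ∈ S, cyclotomic (p ^ m) ℤ ∣ ∑ i ∈ Finset.range M, C (w i) * X ^ i)
    (h2 : cyclotomic (p ^ (a + 1) * q ^ (b + 1)) ℤ ∣ ∑ i ∈ Finset.range M, C (w i) * X ^ i)
    (h3 : cyclotomic (q ^ γ) ℤ ∣ ∑ i ∈ Finset.range M, C (w i) * X ^ i) :
    (p : ℤ) ^ S.card * q * min (p : ℤ) q ≤ foldW M w 1 0 := by
  have hp0 := hp.pos
  have hq0 := hq.pos
  have hcop : p.Coprime q := (Nat.coprime_primes hp hq).2 hpq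
  have hcopZ : IsCoprime (p : ℤ) (q : ℤ) := Nat.isCoprime_iff_coprime.2 hcop
  have hinvp : ∀ m ∈ S, ∀ c : ℤ,
      foldW M w (p ^ m) (c - (p ^ (m - 1) : ℕ)) = foldW M w (p ^ m) c :=
    fun m hm c => foldW_inv M w p hp m (by have := hS m hm; omega) (h1 m hm) c
  have hinvq := foldW_inv M w q hq γ hγ h3
  have hR := foldW_dvd M w p hp S hinvp (a + 1) hS
  have hT := foldW_dvd M w p hp S hinvp 0 (fun m hm => by have := hS m hm; omega) 0
  have hTq := foldW_dvd M w q hq {γ} (by simpa using hinvq) 0 (by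
    intro m hm
    rw [Finset.mem_singleton.1 hm]; omega) 0
  simp only [pow_zero, Finset.card_singleton, pow_one] at hT hTq
  have h4 := foldW_four M w p q hp hq hpq a b h2
  choose R' hR' using hR
  set P : ℤ := (p : ℤ) ^ S.card with hP
  have hP0 : 0 < P := by positivity
  have hPq : IsCoprime (q : ℤ) P := (hcopZ.pow_left).symm
  set N := p ^ (a + 1) * q ^ (b + 1) with hN
  set u := p ^ a * q ^ (b + 1) with hu
  set v := p ^ (a + 1) * q ^ b with hv
  have hreach : ∀ x j : ℤ, ∃ t : ℕ, ((p ^ (a + 1) : ℕ) : ℤ) ∣ (x - t * u) - (x + (p ^ a : ℕ) * j) := by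
    intro x j
    obtain ⟨t, ht⟩ := exists_mul_congr p hp (q ^ (b + 1)) (hcop.pow_right _) (-j)
    refine ⟨t, ?_⟩
    have e : (x - t * u) - (x + (p ^ a : ℕ) * j)
        = (p : ℤ) ^ a * (-(((q ^ (b + 1) : ℕ) : ℤ) * t - -j)) := by
      rw [hu]; push_cast; ring
    rw [e]
    push_cast
    rw [pow_succ]
    refine mul_dvd_mul_left _ (dvd_neg.2 ?_)
    exact_mod_cast ht
  have hRq1 : ∀ x : ℤ, (q : ℤ) ∣ foldW M w (p ^ (a + 1)) x - foldW M w (p ^ (a + 1)) (x - u) := by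
    intro x
    rw [foldW_split M w (p ^ (a + 1)) (q ^ (b + 1)) (by positivity) (by positivity) x,
      foldW_split M w (p ^ (a + 1)) (q ^ (b + 1)) (by positivity) (by positivity) (x - u),
      ← Finset.sum_sub_distrib, pow_succ' q b]
    apply dvd_sum_periodic
    intro j
    rw [← pow_succ' q b, ← hN]
    have := h4 (x + ((p ^ (a + 1) : ℕ) : ℤ) * ((j + q ^ b : ℕ) : ℤ))
    have e1 : x - u + ((p ^ (a + 1) : ℕ) : ℤ) * ((j + q ^ b : ℕ) : ℤ)
      = x + ((p ^ (a + 1) : ℕ) : ℤ) * ((j + q ^ b : ℕ) : ℤ) - u := by ring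
    have e2 : x + ((p ^ (a + 1) : ℕ) : ℤ) * (j : ℤ)
      = x + ((p ^ (a + 1) : ℕ) : ℤ) * ((j + q ^ b : ℕ) : ℤ) - v := by
      rw [hv]; push_cast; ring
    have e3 : x - u + ((p ^ (a + 1) : ℕ) : ℤ) * (j : ℤ)
      = x + ((p ^ (a + 1) : ℕ) : ℤ) * ((j + q ^ b : ℕ) : ℤ) - u - v := by
      rw [hv]; push_cast; ring
    rw [e1, e2, e3]
    linarith
  have hRq2 : ∀ (t : ℕ) (x : ℤ),
      (q : ℤ) ∣ foldW M w (p ^ (a + 1)) x - foldW M w (p ^ (a + 1)) (x - t * u) := by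
    intro t x
    induction t with
    | zero => simp
    | succ t ih =>
      have h5 := dvd_add ih (hRq1 (x - t * u))
      have e : x - ((t + 1 : ℕ) : ℤ) * u = x - t * u - u := by push_cast; ring
      rw [e]
      rwa [sub_add_sub_cancel] at h5
  have hRq : ∀ x j : ℤ, (q : ℤ) ∣ R' x - R' (x + (p ^ a : ℕ) * j) := by
    intro x j
    obtain ⟨t, ht⟩ := hreach x j
    have h5 := hRq2 t x
    rw [foldW_congr M w _ _ _ ht, hR', hR', ← mul_sub] at h5
    exact hPq.dvd_of_dvd_mul_left h5
  have hR'0 : ∀ x, 0 ≤ R' x := by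
    intro x
    have := foldW_nonneg M w hw (p ^ (a + 1)) x
    rw [hR'] at this
    exact nonneg_of_mul_nonneg_right this hP0
  have hmin : ∀ k : ℤ, ∃ j : ℕ, ∀ i ∈ Finset.range p,
      R' (k + (p ^ a : ℕ) * (j : ℤ)) ≤ R' (k + (p ^ a : ℕ) * (i : ℤ)) := by
    intro k
    obtain ⟨j, _, hj⟩ := Finset.exists_min_image (Finset.range p)
      (fun i : ℕ => R' (k + (p ^ a : ℕ) * (i : ℤ))) ⟨0, by simpa using hp0⟩
    exact ⟨j, hj⟩
  choose J hJ using hmin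
  set ρ : ℤ → ℤ := fun k => R' (k + (p ^ a : ℕ) * (J k : ℤ)) with hρ
  have hρ0 : ∀ k, 0 ≤ ρ k := fun k => hR'0 _
  have htot : foldW M w 1 0 = P * ∑ k ∈ Finset.range (p ^ a), ∑ j ∈ Finset.range p,
      R' (k + (p ^ a : ℕ) * (j : ℤ)) := by
    rw [foldW_split M w 1 (p ^ a) one_pos (by positivity), Finset.mul_sum]
    refine Finset.sum_congr rfl fun k _ => ?_
    rw [foldW_split M w _ p (by positivity) hp0, Finset.mul_sum]
    refine Finset.sum_congr rfl fun j _ => ?_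
    rw [← hR', one_mul, ← pow_succ]
    simp
  set T' : ℤ := ∑ k ∈ Finset.range (p ^ a), ∑ j ∈ Finset.range p,
      R' (k + (p ^ a : ℕ) * (j : ℤ)) with hT'
  set s : ℤ := ∑ k ∈ Finset.range (p ^ a), ρ k with hs
  have hps : (p : ℤ) * s = ∑ k ∈ Finset.range (p ^ a), ∑ j ∈ Finset.range p, ρ k := by
    simp [hs, Finset.mul_sum]
  have hle : (p : ℤ) * s ≤ T' := by
    rw [hps]
    exact Finset.sum_le_sum fun k _ => Finset.sum_le_sum fun j hj => hJ k j hj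
  have hqT' : (q : ℤ) ∣ T' := by
    rw [htot] at hTq
    exact hPq.dvd_of_dvd_mul_left hTq
  have hqd : (q : ℤ) ∣ T' - p * s := by
    rw [hps, hT', ← Finset.sum_sub_distrib]
    refine Finset.dvd_sum fun k _ => ?_
    rw [← Finset.sum_sub_distrib]
    refine Finset.dvd_sum fun j _ => ?_
    have h5 := dvd_sub (hRq k (J k)) (hRq k j)
    rwa [sub_sub_sub_cancel_left] at h5
  have hqs : (q : ℤ) ∣ s := by
    have : (q : ℤ) ∣ p * s := by
      have := dvd_sub hqT' hqd
      rwa [sub_sub_cancel] at this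
    exact hcopZ.symm.dvd_of_dvd_mul_left this
  have hs0 : 0 ≤ s := Finset.sum_nonneg fun k _ => hρ0 k
  rcases hs0.eq_or_lt with hs00 | hspos
  · skip
    have hρz : ∀ k : ℕ, k < p ^ a → ρ k = 0 := by
      intro k hk
      exact (Finset.sum_eq_zero_iff_of_nonneg (f := fun k : ℕ => ρ (k : ℤ)) fun k _ => hρ0 k).1 hs00.symm k
        (Finset.mem_range.2 hk)
    have hzero : ∀ x c : ℤ, foldW M w (p ^ (a + 1)) x = 0 → ((p ^ (a + 1) : ℕ) : ℤ) ∣ c - x →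
        foldW M w N c = 0 := by
      intro x c hx hc
      rw [← foldW_congr M w _ _ _ hc,
        foldW_split M w (p ^ (a + 1)) (q ^ (b + 1)) (by positivity) (by positivity) c,
        Finset.sum_eq_zero_iff_of_nonneg (fun j _ => foldW_nonneg M w hw _ _)] at hx
      have := hx 0 (Finset.mem_range.2 (by positivity))
      simpa using this
    have hE : ∀ c : ℤ, foldW M w N c - foldW M w N (c - v) = 0 := by
      intro c
      set k := (c % (p ^ a : ℕ)).toNat with hk
      have hpa : (0 : ℤ) < ((p ^ a : ℕ) : ℤ) := by positivity
      have hk1 : (k : ℤ) = c % (p ^ a : ℕ) := by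
        rw [hk]; exact Int.toNat_of_nonneg (Int.emod_nonneg _ hpa.ne')
      have hk2 : k < p ^ a := by
        have := Int.emod_lt_of_pos c hpa
        rw [← hk1] at this
        exact_mod_cast this
      have hdiv := Int.emod_add_mul_ediv c (p ^ a : ℕ)
      rw [← hk1] at hdiv
      have hz : foldW M w (p ^ (a + 1)) (k + (p ^ a : ℕ) * (J k : ℤ)) = 0 := by
        rw [hR']
        have := hρz k hk2
        simp only [hρ] at this
        rw [this, mul_zero]
      obtain ⟨t, ht⟩ := hreach c ((J k : ℤ) - c / (p ^ a : ℕ))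
      have e : c + (p ^ a : ℕ) * ((J k : ℤ) - c / (p ^ a : ℕ))
          = k + (p ^ a : ℕ) * (J k : ℤ) := by
        linear_combination -hdiv
      rw [e] at ht
      have hE1 := shift_iter (fun c => foldW M w N c - foldW M w N (c - v)) u
        (fun c => by have := h4 c; linarith) t c
      rw [← hE1, hzero _ _ hz ht, hzero _ _ hz, sub_zero]
      have e2 : c - t * u - v - (k + (p ^ a : ℕ) * (J k : ℤ))
        = (c - t * u - (k + (p ^ a : ℕ) * (J k : ℤ))) - v := by ring
      rw [e2]
      refine dvd_sub ht ?_
      rw [hv]; push_cast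
      exact dvd_mul_right _ _
    have hQ1 : ∀ y : ℤ, foldW M w (q ^ (b + 1)) (y - v) = foldW M w (q ^ (b + 1)) y := by
      intro y
      rw [foldW_split M w (q ^ (b + 1)) (p ^ (a + 1)) (by positivity) (by positivity) y,
        foldW_split M w (q ^ (b + 1)) (p ^ (a + 1)) (by positivity) (by positivity) (y - v)]
      refine Finset.sum_congr rfl fun i _ => ?_
      rw [mul_comm (q ^ (b + 1)) (p ^ (a + 1)), ← hN, sub_add_eq_add_sub]
      exact (sub_eq_zero.1 (hE _)).symm
    have hQ2 : ∀ y : ℤ, foldW M w (q ^ (b + 1)) (y - (q ^ b : ℕ)) = foldW M w (q ^ (b + 1)) y := by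
      intro y
      obtain ⟨t, ht⟩ := exists_mul_congr q hq (p ^ (a + 1)) (hcop.symm.pow_right _) 1
      rw [← shift_iter _ _ hQ1 t y]
      apply foldW_congr
      have e : y - (q ^ b : ℕ) - (y - t * v)
          = (q : ℤ) ^ b * (((p ^ (a + 1) : ℕ) : ℤ) * t - 1) := by
        rw [hv]; push_cast; ring
      rw [e]
      push_cast
      rw [pow_succ]
      refine mul_dvd_mul_left _ ?_
      exact_mod_cast ht
    have hTq2 := foldW_dvd M w q hq {b + 1, γ} (by
      intro m hm
      rcases Finset.mem_insert.1 hm with rfl | hm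
      · simpa using hQ2
      · rw [Finset.mem_singleton.1 hm]; exact hinvq) 0 (by
      intro m hm
      rcases Finset.mem_insert.1 hm with rfl | hm
      · omega
      · rw [Finset.mem_singleton.1 hm]; omega) 0
    rw [Finset.card_pair hβγ, pow_zero] at hTq2
    have hd : P * (q : ℤ) ^ 2 ∣ foldW M w 1 0 := (hPq.pow_left).symm.mul_dvd hT hTq2
    have h6 := Int.le_of_dvd hpos hd
    have h7 : min (p : ℤ) q ≤ q := min_le_right _ _
    calc P * q * min (p : ℤ) q ≤ P * q * q := by gcongr
      _ = P * (q : ℤ) ^ 2 := by ring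
      _ ≤ _ := h6
  · have h6 := Int.le_of_dvd hspos hqs
    have h7 : min (p : ℤ) q ≤ p := min_le_left _ _
    rw [htot]
    calc P * q * min (p : ℤ) q ≤ P * q * p := by gcongr
      _ = P * (p * q) := by ring
      _ ≤ P * (p * s) := by gcongr
      _ ≤ P * T' := by gcongr

/-- Proposition 7.4: if `Φ_{p^{m_1}} ⋯ Φ_{p^{m_r}} Φ_{p^α q^β} Φ_{q^γ} ∣ A(X)` with
`1 ≤ α < m_1 < ⋯ < m_r ≤ n_1`, `1 ≤ β, γ ≤ n_2` and `β ≠ γ`, then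
`|A| ≥ p^r · q · min(p,q)`. -/
theorem mass_ge_three_divisors (p q : ℕ) (hp : p.Prime) (hq : q.Prime) (hpq : p ≠ q)
    (n₁ n₂ : ℕ) (hn₁ : 1 ≤ n₁) (hn₂ : 1 ≤ n₂)
    (M : ℕ) (hM : M = p ^ n₁ * q ^ n₂)
    (w : ZMod M → ℕ) (hw : 0 < wmass M w)
    (r : ℕ) (hr : 1 ≤ r) (m : Fin r → ℕ) (hmono : StrictMono m)
    (α β γ : ℕ) (hα : 1 ≤ α) (hαm : ∀ i, α < m i) (hmn : ∀ i, m i ≤ n₁)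
    (hβ1 : 1 ≤ β) (hβn : β ≤ n₂) (hγ1 : 1 ≤ γ) (hγn : γ ≤ n₂) (hβγ : β ≠ γ)
    (hdvd : ((∏ i, cyclotomic (p ^ m i) ℤ) * cyclotomic (p ^ α * q ^ β) ℤ *
        cyclotomic (q ^ γ) ℤ) ∣ wmaskPoly M w) :
    p ^ r * q * min p q ≤ wmass M w := by
  have hmass : foldW M (fun i => ((w (i : ZMod M) : ℕ) : ℤ)) 1 0 = (wmass M w : ℤ) := by
    simp [foldW, wmass]
  obtain ⟨a, rfl⟩ : ∃ a, α = a + 1 := ⟨α - 1, by omega⟩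
  obtain ⟨b, rfl⟩ : ∃ b, β = b + 1 := ⟨β - 1, by omega⟩
  have hcore := mass_core p q hp hq hpq M (fun i => ((w (i : ZMod M) : ℕ) : ℤ))
    (fun i => Int.natCast_nonneg _) (by rw [hmass]; exact_mod_cast hw)
    (Finset.univ.image m) a b γ (by simpa using hαm) hγ1 hβγ
    (by
      intro k hk
      obtain ⟨i, _, rfl⟩ := Finset.mem_image.1 hk
      refine dvd_trans ?_ hdvd
      exact Dvd.dvd.mul_right (Dvd.dvd.mul_right
        (Finset.dvd_prod_of_mem (fun i => cyclotomic (p ^ m i) ℤ) (Finset.mem_univ i)) _) _)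
    (dvd_trans (Dvd.dvd.mul_right (dvd_mul_left _ _) _) hdvd)
    (dvd_trans (dvd_mul_left _ _) hdvd)
  rw [hmass, Finset.card_image_of_injective _ hmono.injective, Finset.card_univ,
    Fintype.card_fin] at hcore
  exact_mod_cast hcore
end

section
/- Let M = p^{n_1} q^{n_2} with p, q distinct primes, and let A : ℤ_M → ℕ be a multiset with positive total mass. Suppose that Φ_{p^{m_1}}(X) ⋯ Φ_{p^{m_r}}(X) · Φ_{p^α q^β}(X) · Φ_{q^γ}(X) divides A(X), where 1 ≤ m_1 < ⋯ < m_r < α ≤ n_1 and 1 ≤ γ < β ≤ n_2. Then |A| ≥ p^r · q · min(p, q). -/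
open Polynomial

/-- `F` (viewed modulo `N`) has vanishing mask polynomial at all primitive `s`-th roots. -/
def Van (N : ℕ) (F : ℕ → ℕ) (s : ℕ) : Prop :=
  ∀ ζ : ℂ, IsPrimitiveRoot ζ s → ∑ x ∈ Finset.range N, (F x : ℂ) * ζ ^ x = 0

/-- Push a function of period `c * k` down to period `c`. -/
def pushDown (c k : ℕ) (F : ℕ → ℕ) (x : ℕ) : ℕ := ∑ j ∈ Finset.range k, F (x + j * c)

lemma sum_split {R : Type*} [AddCommMonoid R] (c k : ℕ) (H : ℕ → R) :
    ∑ i ∈ Finset.range (c * k), H i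
      = ∑ x ∈ Finset.range c, ∑ j ∈ Finset.range k, H (x + j * c) := by
  induction k with
  | zero => simp
  | succ k ih =>
    rw [Nat.mul_succ, Finset.sum_range_add, ih]
    simp_rw [Finset.sum_range_succ]
    rw [Finset.sum_add_distrib]
    congr 1
    refine Finset.sum_congr rfl fun x _ => ?_
    congr 1
    ring

lemma periodic_mul {R : Type*} {F : ℕ → R} {c : ℕ} (h : ∀ x, F (x + c) = F x) (x j : ℕ) :
    F (x + j * c) = F x := by
  induction j with
  | zero => simp
  | succ j ih => rw [show x + (j + 1) * c = (x + j * c) + c by ring, h, ih]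

lemma sum_periodic (c k : ℕ) (F : ℕ → ℕ) (h : ∀ x, F (x + c) = F x) :
    ∑ i ∈ Finset.range (c * k), F i = k * ∑ i ∈ Finset.range c, F i := by
  rw [sum_split, Finset.mul_sum]
  refine Finset.sum_congr rfl fun x _ => ?_
  simp [periodic_mul h]

lemma sum_shift_one {R : Type*} [AddCommGroup R] (N : ℕ) (H : ℕ → R) (h : ∀ x, H (x + N) = H x) :
    ∑ x ∈ Finset.range N, H (x + 1) = ∑ x ∈ Finset.range N, H x := by
  have h1 := Finset.sum_range_succ H N
  have h2 := Finset.sum_range_succ' H N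
  have h3 := h 0
  rw [zero_add] at h3
  rw [h1, h3] at h2
  exact (add_right_cancel h2).symm

lemma sum_shift {R : Type*} [AddCommGroup R] (N : ℕ) (c : ℕ) (H : ℕ → R)
    (h : ∀ x, H (x + N) = H x) :
    ∑ x ∈ Finset.range N, H (x + c) = ∑ x ∈ Finset.range N, H x := by
  induction c with
  | zero => simp
  | succ c ih =>
    rw [← ih, ← sum_shift_one N (fun x => H (x + c))]
    · refine Finset.sum_congr rfl fun x _ => ?_
      congr 1; ring
    · intro x
      show H (x + N + c) = _
      rw [show x + N + c = (x + c) + N by ring, h]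

lemma push_periodic (c k : ℕ) (F : ℕ → ℕ) (h : ∀ x, F (x + c * k) = F x) (x : ℕ) :
    pushDown c k F (x + c) = pushDown c k F x := by
  unfold pushDown
  have := Finset.sum_range_succ (fun j => F (x + j * c)) k
  have h2 := Finset.sum_range_succ' (fun j => F (x + j * c)) k
  rw [this] at h2
  have h3 : F (x + k * c) = F (x + 0 * c) := by
    rw [mul_comm k c, h]; simp
  rw [h3] at h2
  rw [add_right_cancel h2]
  refine Finset.sum_congr rfl fun j _ => ?_
  congr 1; ring

lemma sum_push (c k : ℕ) (F : ℕ → ℕ) :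
    ∑ x ∈ Finset.range c, pushDown c k F x = ∑ x ∈ Finset.range (c * k), F x :=
  (sum_split c k F).symm

lemma van_push (c k s : ℕ) (hs : s ∣ c) (F : ℕ → ℕ) (h : Van (c * k) F s) :
    Van c (pushDown c k F) s := by
  intro ζ hζ
  rw [← h ζ hζ, sum_split]
  refine Finset.sum_congr rfl fun x _ => ?_
  unfold pushDown
  push_cast
  rw [Finset.sum_mul]
  refine Finset.sum_congr rfl fun j _ => ?_
  have : ζ ^ c = 1 := (hζ.pow_eq_one_iff_dvd c).2 hs
  rw [pow_add, mul_comm j c, pow_mul, this]; simp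

lemma inversion (N : ℕ) (H : ℕ → ℂ)
    (h : ∀ ζ : ℂ, ζ ^ N = 1 → ∑ x ∈ Finset.range N, H x * ζ ^ x = 0) :
    ∀ x < N, H x = 0 := by
  intro x hx
  have hN : N ≠ 0 := by omega
  set P : ℂ[X] := ∑ x ∈ Finset.range N, C (H x) * X ^ x with hP
  have hprim := Complex.isPrimitiveRoot_exp N hN
  have hdeg : P.degree < N := by
    rw [hP]
    refine (Polynomial.degree_sum_le _ _).trans_lt ?_
    rw [Finset.sup_lt_iff (by exact WithBot.bot_lt_coe N)]
    intro i hi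
    refine (Polynomial.degree_C_mul_X_pow_le _ _).trans_lt ?_
    exact_mod_cast Finset.mem_range.1 hi
  have hz : P = 0 := by
    refine Polynomial.eq_zero_of_degree_lt_of_eval_finset_eq_zero
      (Polynomial.nthRootsFinset N (1 : ℂ)) ?_ ?_
    · rw [hprim.card_nthRootsFinset]; exact hdeg
    · intro ζ hζ
      rw [Polynomial.mem_nthRootsFinset (Nat.pos_of_ne_zero hN)] at hζ
      rw [hP, Polynomial.eval_finsetSum]
      simpa using h ζ hζ
  have hc : P.coeff x = H x := by
    rw [hP, Polynomial.finsetSum_coeff]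
    simp [Polynomial.coeff_C_mul, Polynomial.coeff_X_pow, hx]
  rw [← hc, hz]; simp

lemma diff_sum (N c : ℕ) (F : ℕ → ℂ) (hF : ∀ x, F (x + N) = F x) (ζ : ℂ) (hζ : ζ ^ N = 1) :
    ζ ^ c * ∑ x ∈ Finset.range N, (F (x + c) - F x) * ζ ^ x
      = (1 - ζ ^ c) * ∑ x ∈ Finset.range N, F x * ζ ^ x := by
  have h := sum_shift N c (fun x => F x * ζ ^ x) (by intro x; simp [hF, pow_add, hζ])
  try simp only at h
  rw [sub_mul, one_mul, ← h]
  simp_rw [sub_mul, Finset.sum_sub_distrib, mul_sub]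
  rw [h]
  congr 1
  rw [← h, Finset.mul_sum]
  refine Finset.sum_congr rfl fun x _ => ?_
  rw [pow_add]; ring

lemma zero_of_periodic {N : ℕ} (hN : 0 < N) {H : ℕ → ℂ} (hH : ∀ x, H (x + N) = H x)
    (h : ∀ x < N, H x = 0) (x : ℕ) : H x = 0 := by
  have := periodic_mul hH (x % N) (x / N)
  rw [mul_comm, Nat.mod_add_div] at this
  rw [this]
  exact h _ (Nat.mod_lt _ hN)

lemma prime_pow_periodic (p : ℕ) (hp : p.Prime) (n : ℕ) (F : ℕ → ℕ)
    (hF : ∀ x, F (x + p ^ (n + 1)) = F x) (hv : Van (p ^ (n + 1)) F (p ^ (n + 1))) :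
    ∀ x, F (x + p ^ n) = F x := by
  have hpos : 0 < p ^ (n + 1) := pow_pos hp.pos _
  intro x
  have key := zero_of_periodic hpos (H := fun x => (F (x + p ^ n) : ℂ) - F x) (by
    intro x
    try simp only
    rw [show x + p ^ (n + 1) + p ^ n = (x + p ^ n) + p ^ (n + 1) by ring, hF, hF])
    (inversion _ _ (by
      intro ζ hζ
      have h0 : ζ ≠ 0 := by
        rintro rfl
        rw [zero_pow hpos.ne'] at hζ
        exact zero_ne_one hζ
      have h1 := diff_sum (p ^ (n + 1)) (p ^ n) (fun x => (F x : ℂ)) (by intro x; simp [hF]) ζ hζ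
      have h2 : (1 - ζ ^ p ^ n) * ∑ x ∈ Finset.range (p ^ (n + 1)), (F x : ℂ) * ζ ^ x = 0 := by
        by_cases hc : ζ ^ p ^ n = 1
        · simp [hc]
        · have := Fact.mk hp
          have : orderOf ζ = p ^ (n + 1) := orderOf_eq_prime_pow hc hζ
          rw [hv ζ (this ▸ IsPrimitiveRoot.orderOf ζ), mul_zero]
      rw [h2] at h1
      exact (mul_eq_zero.1 h1).resolve_left (pow_ne_zero _ h0))) x
  try simp only at key
  exact_mod_cast sub_eq_zero.1 key

lemma order_cases (p q : ℕ) (hp : p.Prime) (hq : q.Prime) (a b d : ℕ)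
    (hd : d ∣ p ^ (a + 1) * q ^ (b + 1)) :
    d ∣ p ^ a * q ^ (b + 1) ∨ d ∣ p ^ (a + 1) * q ^ b ∨ d = p ^ (a + 1) * q ^ (b + 1) := by
  obtain ⟨u, v, hu, hv, rfl⟩ := Nat.dvd_mul.1 hd
  obtain ⟨i, hi, rfl⟩ := (Nat.dvd_prime_pow hp).1 hu
  obtain ⟨j, hj, rfl⟩ := (Nat.dvd_prime_pow hq).1 hv
  by_cases h1 : i ≤ a
  · exact Or.inl (mul_dvd_mul (pow_dvd_pow _ h1) hv)
  by_cases h2 : j ≤ b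
  · exact Or.inr (Or.inl (mul_dvd_mul hu (pow_dvd_pow _ h2)))
  right; right
  rw [show i = a + 1 by omega, show j = b + 1 by omega]

lemma cuboid (p q : ℕ) (hp : p.Prime) (hq : q.Prime) (a b : ℕ) (F : ℕ → ℕ)
    (hF : ∀ x, F (x + p ^ (a + 1) * q ^ (b + 1)) = F x)
    (hv : Van (p ^ (a + 1) * q ^ (b + 1)) F (p ^ (a + 1) * q ^ (b + 1))) (x : ℕ) :
    F (x + p ^ a * q ^ (b + 1) + p ^ (a + 1) * q ^ b) + F x
      = F (x + p ^ a * q ^ (b + 1)) + F (x + p ^ (a + 1) * q ^ b) := by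
  have hoc := order_cases p q hp hq a b
  have hpos : 0 < p ^ (a + 1) * q ^ (b + 1) := mul_pos (pow_pos hp.pos _) (pow_pos hq.pos _)
  generalize p ^ (a + 1) * q ^ (b + 1) = N at *
  generalize p ^ a * q ^ (b + 1) = c at *
  generalize p ^ (a + 1) * q ^ b = d at *
  have hFs : ∀ x e, F (x + N + e) = F (x + e) := by
    intro x e; rw [show x + N + e = (x + e) + N by ring, hF]
  have key := zero_of_periodic hpos
    (H := fun x => ((F (x + d + c) : ℂ) - F (x + d)) - ((F (x + c) : ℂ) - F x)) (by
    intro x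
    try simp only
    rw [add_assoc (x + N) d c, hFs, hFs, hFs, hF, add_assoc])
    (inversion _ _ (by
      intro ζ hζ
      have h0 : ζ ≠ 0 := by
        rintro rfl
        rw [zero_pow hpos.ne'] at hζ
        exact zero_ne_one hζ
      have h1 := diff_sum N c (fun x => (F x : ℂ)) (by intro x; simp [hF]) ζ hζ
      have h2 := diff_sum N d (fun x => (F (x + c) : ℂ) - F x)
        (by intro x; simp only [hF, hFs]) ζ hζ
      have h3 : (1 - ζ ^ d) * ((1 - ζ ^ c) * ∑ x ∈ Finset.range N, (F x : ℂ) * ζ ^ x) = 0 := by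
        rcases hoc _ (orderOf_dvd_of_pow_eq_one hζ) with h | h | h
        · rw [orderOf_dvd_iff_pow_eq_one.1 h]; simp
        · rw [orderOf_dvd_iff_pow_eq_one.1 h]; simp
        · rw [hv ζ (h ▸ IsPrimitiveRoot.orderOf ζ)]; simp
      rw [← h1] at h3
      have h4 : ζ ^ c * (ζ ^ d * ∑ x ∈ Finset.range N,
          (((F (x + d + c) : ℂ) - F (x + d)) - ((F (x + c) : ℂ) - F x)) * ζ ^ x) = 0 := by
        rw [h2, ← h3]; ring
      have h5 := (mul_eq_zero.1 h4).resolve_left (pow_ne_zero _ h0)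
      exact (mul_eq_zero.1 h5).resolve_left (pow_ne_zero _ h0))) x
  try simp only at key
  have e : x + d + c = x + c + d := by ring
  rw [e] at key
  have : (F (x + c + d) : ℂ) + F x = F (x + c) + F (x + d) := by linear_combination key
  exact_mod_cast this

/-- Decomposition into two nonnegative periodic functions. -/
lemma decomp (c d p : ℕ) (F : ℕ → ℕ) (hp : 0 < p) (hF : ∀ x, F (x + c * p) = F x)
    (hc : ∀ x, F (x + c + d) + F x = F (x + c) + F (x + d)) :
    ∃ f g : ℕ → ℕ, (∀ x, F x = f x + g x) ∧ (∀ x, f (x + c) = f x) ∧ (∀ x, g (x + d) = g x) := by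
  have hne : ∀ x, ((Finset.range p).image fun j => F (x + j * c)).Nonempty := fun x =>
    (Finset.nonempty_range_iff.2 hp.ne').image _
  let f : ℕ → ℕ := fun x => ((Finset.range p).image fun j => F (x + j * c)).min' (hne x)
  have hex : ∀ x, ∃ j, f x = F (x + j * c) := by
    intro x
    have := Finset.min'_mem _ (hne x)
    rw [Finset.mem_image] at this
    obtain ⟨j, _, hj⟩ := this
    exact ⟨j, hj.symm⟩
  have hle : ∀ x j, f x ≤ F (x + j * c) := by
    intro x j
    have h1 : F (x + j * c) = F (x + (j % p) * c) := by
      rw [← periodic_mul hF (x + (j % p) * c) (j / p)]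
      congr 1
      conv_lhs => rw [← Nat.mod_add_div j p]
      ring
    rw [h1]
    exact Finset.min'_le _ _ (Finset.mem_image.2
      ⟨j % p, Finset.mem_range.2 (Nat.mod_lt _ hp), rfl⟩)
  have hle0 : ∀ x, f x ≤ F x := fun x => by simpa using hle x 0
  have hcj : ∀ j x, F (x + j * c + d) + F x = F (x + j * c) + F (x + d) := by
    intro j x
    induction j with
    | zero => simp; ring
    | succ j ih =>
      have := hc (x + j * c)
      rw [show x + (j + 1) * c = x + j * c + c by ring]
      omega
  refine ⟨f, fun x => F x - f x, fun x => ?_, fun x => ?_, fun x => ?_⟩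
  · have := hle0 x; try simp only
    omega
  · apply le_antisymm
    · obtain ⟨j, hj⟩ := hex x
      have h2 := hle (x + c) (j + (p - 1))
      rw [hj, ← hF (x + j * c)]
      have e : x + c + (j + (p - 1)) * c = x + j * c + c * p := by
        obtain ⟨p', rfl⟩ : ∃ p', p = p' + 1 := ⟨p - 1, by omega⟩
        rw [Nat.add_sub_cancel]; ring
      rw [e] at h2
      exact h2
    · obtain ⟨j, hj⟩ := hex (x + c)
      rw [hj, show x + c + j * c = x + (j + 1) * c by ring]
      exact hle _ _
  · simp only
    have h0 := hle0 x
    have h0' := hle0 (x + d)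
    obtain ⟨j, hj⟩ := hex x
    obtain ⟨i, hi⟩ := hex (x + d)
    have h1 := hle x i
    have h2 := hle (x + d) j
    have h3 := hcj i x
    have h4 := hcj j x
    rw [show x + d + i * c = x + i * c + d by ring] at hi
    rw [show x + d + j * c = x + j * c + d by ring] at h2
    omega

lemma van_smaller (p : ℕ) (hp : p.Prime) (n m : ℕ) (hm : m ≤ n) (F : ℕ → ℕ)
    (hF : ∀ x, F (x + p ^ n) = F x) (hv : Van (p ^ (n + 1)) F (p ^ m)) :
    Van (p ^ n) F (p ^ m) := by
  rw [pow_succ] at hv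
  have h := van_push _ _ _ (pow_dvd_pow p hm) F hv
  intro ζ hζ
  have h2 := h ζ hζ
  have h3 : ∀ x, pushDown (p ^ n) p F x = p * F x := by
    intro x; unfold pushDown; simp [periodic_mul hF]
  simp_rw [h3] at h2
  push_cast at h2
  simp_rw [mul_assoc] at h2
  rw [← Finset.mul_sum] at h2
  exact (mul_eq_zero.1 h2).resolve_left (by exact_mod_cast hp.ne_zero)

lemma tree_bound (p : ℕ) (hp : p.Prime) (d n : ℕ) : ∀ (U : Finset ℕ) (F : ℕ → ℕ),
    (∀ m ∈ U, 1 ≤ m ∧ m ≤ n) → (∀ x, F (x + p ^ n) = F x) →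
    (∀ m ∈ U, Van (p ^ n) F (p ^ m)) → (∀ x, d ∣ F x) →
    (∀ x, F x * p ^ U.card ≤ ∑ x ∈ Finset.range (p ^ n), F x) ∧
      p ^ U.card * d ∣ ∑ x ∈ Finset.range (p ^ n), F x := by
  induction n with
  | zero =>
    intro U F hU hF _ hd
    have : U = ∅ := by
      apply Finset.eq_empty_of_forall_notMem
      intro m hm
      have := hU m hm
      omega
    subst this
    simp only [pow_zero] at *
    simp only [Finset.card_empty, pow_zero, Finset.range_one, Finset.sum_singleton, mul_one, one_mul]
    refine ⟨fun x => ?_, hd 0⟩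
    have := periodic_mul hF 0 x
    simp at this
    exact this.le
  | succ n ih =>
    intro U F hU hF hv hd
    by_cases hn : n + 1 ∈ U
    · have hper := prime_pow_periodic p hp n F hF (hv _ hn)
      have hU' : ∀ m ∈ U.erase (n + 1), 1 ≤ m ∧ m ≤ n := by
        intro m hm
        rw [Finset.mem_erase] at hm
        have := hU m hm.2
        omega
      obtain ⟨h1, h2⟩ := ih (U.erase (n + 1)) F hU' hper
        (fun m hm => van_smaller p hp n m (hU' m hm).2 F hper (hv m (Finset.mem_of_mem_erase hm))) hd
      have hs := sum_periodic (p ^ n) p F hper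
      rw [← pow_succ] at hs
      have hcard := Finset.card_erase_add_one hn
      rw [hs, ← hcard, pow_succ]
      refine ⟨fun x => ?_, ?_⟩
      · have := Nat.mul_le_mul_left p (h1 x)
        calc _ = p * (F x * p ^ (U.erase (n + 1)).card) := by ring
          _ ≤ _ := this
      · have := Nat.mul_dvd_mul_left p h2
        convert this using 1
        ring
    · have hU' : ∀ m ∈ U, 1 ≤ m ∧ m ≤ n := by
        intro m hm
        have := hU m hm
        have : m ≠ n + 1 := fun h => hn (h ▸ hm)
        omega
      rw [pow_succ] at hF hv ⊢
      obtain ⟨h1, h2⟩ := ih U (pushDown (p ^ n) p F) hU' (push_periodic _ _ F hF)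
        (fun m hm => van_push _ _ _ (pow_dvd_pow p (hU' m hm).2) F (hv m hm))
        (fun x => Finset.dvd_sum fun j _ => hd _)
      rw [sum_push] at h1 h2
      refine ⟨fun x => le_trans (Nat.mul_le_mul_right _ ?_) (h1 x), h2⟩
      unfold pushDown
      have := Finset.single_le_sum (f := fun j => F (x + j * p ^ n)) (fun _ _ => Nat.zero_le _)
        (Finset.mem_range.2 hp.pos)
      simpa using this

lemma split_unique (p q F F' G G' : ℕ) (hpq : Nat.Coprime p q) (h1 : p ∣ F) (h2 : p ∣ F')
    (h3 : q ∣ G) (h4 : q ∣ G') (he : F + G = F' + G') (hl : F + G < p * q) :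
    F = F' ∧ G = G' := by
  have hq : (q : ℤ) ∣ (F : ℤ) - F' := by
    have : (F : ℤ) - F' = G' - G := by omega
    rw [this]
    exact dvd_sub (by exact_mod_cast h4) (by exact_mod_cast h3)
  have hp : (p : ℤ) ∣ (F : ℤ) - F' := dvd_sub (by exact_mod_cast h1) (by exact_mod_cast h2)
  have hd : ((p * q : ℕ) : ℤ) ∣ (F : ℤ) - F' := by
    push_cast
    exact IsCoprime.mul_dvd (Nat.isCoprime_iff_coprime.2 hpq) hp hq
  have := Int.eq_zero_of_abs_lt_dvd hd (by rw [abs_lt]; omega)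
  omega

lemma tree_split (p q : ℕ) (hp : p.Prime) (hpq : Nat.Coprime p q) (n : ℕ) :
    ∀ (U : Finset ℕ) (F G : ℕ → ℕ),
    (∀ m ∈ U, 1 ≤ m ∧ m ≤ n) → (∀ x, F (x + p ^ n) = F x) → (∀ x, G (x + p ^ n) = G x) →
    (∀ m ∈ U, Van (p ^ n) (fun x => F x + G x) (p ^ m)) → (∀ x, p ∣ F x) → (∀ x, q ∣ G x) →
    ∑ x ∈ Finset.range (p ^ n), (F x + G x) < p ^ U.card * (p * q) →
      p ^ U.card * p ∣ ∑ x ∈ Finset.range (p ^ n), F x := by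
  induction n with
  | zero =>
    intro U F G hU hF hG _ hd _ _
    have : U = ∅ := by
      apply Finset.eq_empty_of_forall_notMem
      intro m hm
      have := hU m hm
      omega
    subst this
    simpa using hd 0
  | succ n ih =>
    intro U F G hU hF hG hv hpF hqG hlt
    by_cases hn : n + 1 ∈ U
    · have hB : ∀ x, (fun x => F x + G x) (x + p ^ (n + 1)) = (fun x => F x + G x) x := by
        intro x; simp only [hF, hG]
      have hper := prime_pow_periodic p hp n _ hB (hv _ hn)
      have hbd := (tree_bound p hp 1 (n + 1) U _ hU hB hv (fun _ => one_dvd _)).1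
      have hFG : ∀ x, F (x + p ^ n) = F x ∧ G (x + p ^ n) = G x := by
        intro x
        refine split_unique p q _ _ _ _ hpq (hpF _) (hpF _) (hqG _) (hqG _) (hper x) ?_
        have := (hbd (x + p ^ n)).trans_lt hlt
        rw [mul_comm] at this
        exact Nat.lt_of_mul_lt_mul_left this
      have hU' : ∀ m ∈ U.erase (n + 1), 1 ≤ m ∧ m ≤ n := by
        intro m hm
        rw [Finset.mem_erase] at hm
        have := hU m hm.2
        omega
      have hcard := Finset.card_erase_add_one hn
      have hsB := sum_periodic (p ^ n) p (fun x => F x + G x) hper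
      rw [← pow_succ] at hsB
      rw [hsB, ← hcard, pow_succ] at hlt
      have h2 := ih (U.erase (n + 1)) F G hU' (fun x => (hFG x).1) (fun x => (hFG x).2)
        (fun m hm => van_smaller p hp n m (hU' m hm).2 _ hper (hv m (Finset.mem_of_mem_erase hm)))
        hpF hqG (by
          refine Nat.lt_of_mul_lt_mul_left (a := p) (hlt.trans_eq ?_)
          ring)
      have hs := sum_periodic (p ^ n) p F (fun x => (hFG x).1)
      rw [← pow_succ] at hs
      rw [hs, ← hcard, pow_succ]
      have := Nat.mul_dvd_mul_left p h2
      convert this using 1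
      ring
    · have hU' : ∀ m ∈ U, 1 ≤ m ∧ m ≤ n := by
        intro m hm
        have := hU m hm
        have : m ≠ n + 1 := fun h => hn (h ▸ hm)
        omega
      rw [pow_succ] at hF hG hv hlt ⊢
      have hadd : (fun x => pushDown (p ^ n) p F x + pushDown (p ^ n) p G x)
          = pushDown (p ^ n) p (fun x => F x + G x) := by
        funext x; unfold pushDown; rw [Finset.sum_add_distrib]
      have h2 := ih U (pushDown (p ^ n) p F) (pushDown (p ^ n) p G) hU'
        (push_periodic _ _ F hF) (push_periodic _ _ G hG)
        (fun m hm => by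
          rw [hadd]
          exact van_push _ _ _ (pow_dvd_pow p (hU' m hm).2) _ (hv m hm))
        (fun x => Finset.dvd_sum fun j _ => hpF _) (fun x => Finset.dvd_sum fun j _ => hqG _)
        (by
          have e := congrArg (fun f => ∑ x ∈ Finset.range (p ^ n), f x) hadd
          try simp only at e
          rw [e, sum_push]; exact hlt)
      rw [sum_push] at h2
      exact h2

/-- Pushing down a function with a finer period yields multiples of `k`. -/
lemma push_dvd (c e k : ℕ) (f : ℕ → ℕ) (hf : ∀ x, f (x + c * e) = f x) (x : ℕ) :
    k ∣ pushDown c (e * k) f x := by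
  unfold pushDown
  rw [sum_periodic e k (fun j => f (x + j * c))]
  · exact dvd_mul_right _ _
  · intro j
    try simp only
    rw [← hf (x + j * c)]
    congr 1; ring

lemma core_s15 (p q : ℕ) (hp : p.Prime) (hq : q.Prime) (hpq : p ≠ q) (a b γ : ℕ) (U : Finset ℕ)
    (hU : ∀ m ∈ U, 1 ≤ m ∧ m ≤ a) (hγ1 : 1 ≤ γ) (hγ : γ ≤ b) (A : ℕ → ℕ)
    (hA : ∀ x, A (x + p ^ (a + 1) * q ^ (b + 1)) = A x)
    (hvU : ∀ m ∈ U, Van (p ^ (a + 1) * q ^ (b + 1)) A (p ^ m))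
    (hvγ : Van (p ^ (a + 1) * q ^ (b + 1)) A (q ^ γ))
    (hvN : Van (p ^ (a + 1) * q ^ (b + 1)) A (p ^ (a + 1) * q ^ (b + 1)))
    (hpos : 0 < ∑ x ∈ Finset.range (p ^ (a + 1) * q ^ (b + 1)), A x) :
    p ^ U.card * q * min p q ≤ ∑ x ∈ Finset.range (p ^ (a + 1) * q ^ (b + 1)), A x := by
  have hcop : Nat.Coprime p q := (Nat.coprime_primes hp hq).2 hpq
  by_contra hcon
  rw [not_le] at hcon
  obtain ⟨f, g, hfg, hf, hg⟩ := decomp (p ^ a * q ^ (b + 1)) (p ^ (a + 1) * q ^ b) p A hp.pos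
    (by intro x; rw [← hA x]; congr 1; ring) (cuboid p q hp hq a b A hA hvN)
  obtain rfl : A = fun x => f x + g x := funext hfg
  have hfN : ∀ x, f (x + p ^ (a + 1) * q ^ (b + 1)) = f x := by
    intro x; rw [← periodic_mul hf x p]; congr 1; ring
  have hgN : ∀ x, g (x + p ^ (a + 1) * q ^ (b + 1)) = g x := by
    intro x; rw [← periodic_mul hg x q]; congr 1; ring
  have eN : p ^ (a + 1) * q ^ (b + 1) = p ^ a * (q ^ (b + 1) * p) := by ring
  have eN' : q ^ (b + 1) * p = p * q ^ b * q := by ring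
  have eNq : p ^ (a + 1) * q ^ (b + 1) = q ^ b * (p ^ (a + 1) * q) := by ring
  set T := ∑ x ∈ Finset.range (p ^ (a + 1) * q ^ (b + 1)), (f x + g x) with hT
  -- the `p` side
  set F := pushDown (p ^ a) (q ^ (b + 1) * p) f with hFdef
  set G := pushDown (p ^ a) (q ^ (b + 1) * p) g with hGdef
  have hadd : (fun x => F x + G x)
      = pushDown (p ^ a) (q ^ (b + 1) * p) (fun x => f x + g x) := by
    funext x; simp only [hFdef, hGdef, pushDown]; rw [Finset.sum_add_distrib]
  have hFp : ∀ x, F (x + p ^ a) = F x := push_periodic _ _ f (by rw [← eN]; exact hfN)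
  have hGp : ∀ x, G (x + p ^ a) = G x := push_periodic _ _ g (by rw [← eN]; exact hgN)
  have hpF : ∀ x, p ∣ F x := push_dvd _ _ _ f hf
  have hqG : ∀ x, q ∣ G x := by
    rw [hGdef, eN']
    exact push_dvd _ _ _ g (by intro x; rw [← hg x]; congr 1; ring)
  have hvB : ∀ m ∈ U, Van (p ^ a) (fun x => F x + G x) (p ^ m) := by
    intro m hm
    rw [hadd]
    exact van_push _ _ _ (pow_dvd_pow p (hU m hm).2) _ (by rw [← eN]; exact hvU m hm)
  have hsT : ∑ x ∈ Finset.range (p ^ a), (F x + G x) = T := by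
    have e := congrArg (fun f => ∑ x ∈ Finset.range (p ^ a), f x) hadd
    try simp only at e
    rw [e, sum_push, ← eN]
  have hTlt : T < p ^ U.card * (p * q) := by
    refine hcon.trans_le ?_
    calc _ ≤ p ^ U.card * q * p := Nat.mul_le_mul_left _ (min_le_left _ _)
      _ = _ := by ring
  have hFdvd := tree_split p q hp hcop a U F G hU hFp hGp hvB hpF hqG (by rw [hsT]; exact hTlt)
  have hprT : p ^ U.card ∣ T := by
    have := (tree_bound p hp 1 a U (fun x => F x + G x) hU
      (by intro x; simp only [hFp, hGp]) hvB (fun _ => one_dvd _)).2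
    rw [hsT, mul_one] at this
    exact this
  -- the `q` side
  have hqside : ∀ d, (∀ x, d ∣ pushDown (q ^ b) (p ^ (a + 1) * q) (fun x => f x + g x) x) →
      q * d ∣ T := by
    intro d hd
    have := (tree_bound q hq d b {γ} (pushDown (q ^ b) (p ^ (a + 1) * q) (fun x => f x + g x))
      (by simpa using ⟨hγ1, hγ⟩) (push_periodic _ _ _ (by rw [← eNq]; exact hA))
      (by
        intro m hm
        rw [Finset.mem_singleton] at hm
        subst hm
        exact van_push _ _ _ (pow_dvd_pow q hγ) _ (by rw [← eNq]; exact hvγ)) hd).2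
    rw [sum_push, ← eNq] at this
    simpa using this
  have hqT : q ∣ T := by simpa using hqside 1 (fun _ => one_dvd _)
  rw [Finset.sum_add_distrib] at hsT
  have hqF : q ∣ ∑ x ∈ Finset.range (p ^ a), F x := by
    rw [← hsT] at hqT
    exact (Nat.dvd_add_left (Finset.dvd_sum fun x _ => hqG x)).1 hqT
  have hcopk : ∀ k, Nat.Coprime (p ^ k) q := fun k => Nat.Coprime.pow_left k hcop
  rw [← pow_succ] at hFdvd
  have hFd : p ^ (U.card + 1) * q ∣ ∑ x ∈ Finset.range (p ^ a), F x :=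
    (hcopk _).mul_dvd_of_dvd_of_dvd hFdvd hqF
  rcases Nat.eq_zero_or_pos (∑ x ∈ Finset.range (p ^ a), F x) with h0 | h0
  · -- `f = 0`
    have hf0 : ∀ x, f x = 0 := by
      rw [hFdef, sum_push, ← eN] at h0
      intro x
      have hNpos : 0 < p ^ (a + 1) * q ^ (b + 1) :=
        mul_pos (pow_pos hp.pos _) (pow_pos hq.pos _)
      rw [Finset.sum_eq_zero_iff] at h0
      have := periodic_mul hfN (x % (p ^ (a + 1) * q ^ (b + 1))) (x / (p ^ (a + 1) * q ^ (b + 1)))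
      rw [mul_comm (x / _), Nat.mod_add_div] at this
      rw [this]
      exact h0 _ (Finset.mem_range.2 (Nat.mod_lt _ hNpos))
    have hqq := hqside q (push_dvd _ _ _ _ (by
      intro x
      simp only [hf0]
      rw [← hg x]; congr 2; ring))
    have hd : p ^ U.card * (q * q) ∣ T :=
      (((hcopk _).mul_right (hcopk _))).mul_dvd_of_dvd_of_dvd hprT hqq
    have h1 := Nat.le_of_dvd hpos hd
    have h2 : p ^ U.card * q * min p q ≤ p ^ U.card * q * q :=
      Nat.mul_le_mul_left _ (min_le_right _ _)
    rw [← mul_assoc] at h1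
    omega
  · have h1 := Nat.le_of_dvd h0 hFd
    have h2 : p ^ (U.card + 1) * q = p ^ U.card * (p * q) := by ring
    omega

lemma van_of_dvd (M : ℕ) (w : ZMod M → ℕ) (s : ℕ) (hs : 0 < s)
    (h : cyclotomic s ℤ ∣ wmaskPoly M w) : Van M (fun x => w (x : ZMod M)) s := by
  intro ζ hζ
  obtain ⟨R, hR⟩ := h
  have h1 := congrArg (fun P => Polynomial.aeval ζ P) hR
  simp only [map_mul] at h1
  have h2 : Polynomial.aeval ζ (cyclotomic s ℤ) = 0 := by
    rw [Polynomial.aeval_def, Polynomial.eval₂_eq_eval_map, Polynomial.map_cyclotomic]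
    exact hζ.isRoot_cyclotomic hs
  rw [h2, zero_mul] at h1
  simpa [wmaskPoly] using h1

/-- Proposition 7.5: if `Φ_{p^{m_1}} ⋯ Φ_{p^{m_r}} Φ_{p^α q^β} Φ_{q^γ} ∣ A(X)` with
`1 ≤ m_1 < ⋯ < m_r < α ≤ n_1` and `1 ≤ γ < β ≤ n_2`, then
`|A| ≥ p^r · q · min(p,q)`. -/
theorem mass_ge_three_divisors' (p q : ℕ) (hp : p.Prime) (hq : q.Prime) (hpq : p ≠ q)
    (n₁ n₂ : ℕ) (hn₁ : 1 ≤ n₁) (hn₂ : 1 ≤ n₂)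
    (M : ℕ) (hM : M = p ^ n₁ * q ^ n₂)
    (w : ZMod M → ℕ) (hw : 0 < wmass M w)
    (r : ℕ) (hr : 1 ≤ r) (m : Fin r → ℕ) (hmono : StrictMono m)
    (α β γ : ℕ) (hm1 : ∀ i, 1 ≤ m i) (hmα : ∀ i, m i < α) (hαn : α ≤ n₁)
    (hγ1 : 1 ≤ γ) (hγβ : γ < β) (hβn : β ≤ n₂)
    (hdvd : ((∏ i, cyclotomic (p ^ m i) ℤ) * cyclotomic (p ^ α * q ^ β) ℤ *
        cyclotomic (q ^ γ) ℤ) ∣ wmaskPoly M w) :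
    p ^ r * q * min p q ≤ wmass M w := by
  have hα1 : 1 ≤ α := by have := hmα ⟨0, hr⟩; omega
  obtain ⟨a, rfl⟩ : ∃ a, α = a + 1 := ⟨α - 1, by omega⟩
  obtain ⟨b, rfl⟩ : ∃ b, β = b + 1 := ⟨β - 1, by omega⟩
  obtain ⟨k, hk⟩ : p ^ (a + 1) * q ^ (b + 1) ∣ M :=
    hM ▸ mul_dvd_mul (pow_dvd_pow _ hαn) (pow_dvd_pow _ hβn)
  have hd1 : ∀ i, cyclotomic (p ^ m i) ℤ ∣ wmaskPoly M w := fun i =>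
    ((Finset.dvd_prod_of_mem (fun i => cyclotomic (p ^ m i) ℤ) (Finset.mem_univ i)).trans
      ((dvd_mul_right _ _).trans (dvd_mul_right _ _))).trans hdvd
  have hd2 : cyclotomic (p ^ (a + 1) * q ^ (b + 1)) ℤ ∣ wmaskPoly M w :=
    ((dvd_mul_left _ _).trans (dvd_mul_right _ _)).trans hdvd
  have hd3 : cyclotomic (q ^ γ) ℤ ∣ wmaskPoly M w := (dvd_mul_left _ _).trans hdvd
  have hv1 := fun i => van_of_dvd M w _ (pow_pos hp.pos _) (hd1 i)
  have hv2 := van_of_dvd M w _ (mul_pos (pow_pos hp.pos _) (pow_pos hq.pos _)) hd2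
  have hv3 := van_of_dvd M w _ (pow_pos hq.pos _) hd3
  have hmass : wmass M w = ∑ x ∈ Finset.range M, (fun x : ℕ => w (x : ZMod M)) x := rfl
  have hper : ∀ x, (fun x : ℕ => w (x : ZMod M)) (x + M) = (fun x : ℕ => w (x : ZMod M)) x := by
    intro x; simp
  rw [hmass] at hw ⊢
  generalize (fun x : ℕ => w (x : ZMod M)) = W at *
  rw [hk] at hv1 hv2 hv3 hw hper
  have hcard : (Finset.univ.image m).card = r := by
    rw [Finset.card_image_of_injective _ hmono.injective]; simp
  have hmain := core_s15 p q hp hq hpq a b γ (Finset.univ.image m)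
    (by
      intro j hj
      obtain ⟨i, _, rfl⟩ := Finset.mem_image.1 hj
      have := hmα i
      exact ⟨hm1 i, by omega⟩) hγ1 (by omega)
    (pushDown (p ^ (a + 1) * q ^ (b + 1)) k W) (push_periodic _ _ _ hper)
    (by
      intro j hj
      obtain ⟨i, _, rfl⟩ := Finset.mem_image.1 hj
      exact van_push _ _ _ (dvd_mul_of_dvd_left (pow_dvd_pow _ (hmα i).le) _) _ (hv1 i))
    (van_push _ _ _ (dvd_mul_of_dvd_right (pow_dvd_pow _ hγβ.le) _) _ hv3)
    (van_push _ _ _ dvd_rfl _ hv2)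
    (by rw [sum_push]; exact hw)
  rw [hcard, sum_push, ← hk] at hmain
  exact hmain
end

section
/- Let M = 2^n · 3^m with n ≥ 9 and m ≥ 6. Then there exists a set A ⊆ ℤ_M with |A| = 2^3 · 3^3 = 216 such that the product Φ_{2^n}(X) Φ_{2^{n-1}}(X) Φ_{2^{n-2}}(X) Φ_{3^m}(X) Φ_{3^{m-1}}(X) Φ_{3^{m-2}}(X) Φ_6(X) divides A(X). -/
open Polynomial

/-- Mask polynomial of a finite subset of `ZMod M`: `A(X) = ∑_{a ∈ A} X^{a.val}`. -/
noncomputable def zmaskPoly (M : ℕ) (A : Finset (ZMod M)) : Polynomial ℤ :=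
  ∑ a ∈ A, X ^ a.val

/-- Base point (mod `2^(n-3)`) of the `c`-th coset: 12 even values, then 15 odd ones. -/
def baseTwo (c : ℕ) : ℕ := if c < 12 then 2 * c else 2 * (c - 12) + 1

/-- Base point (mod 3) of the `d`-th coset in the 3-part: four `0`s, two `1`s, two `2`s. -/
def baseThree (d : ℕ) : ℕ := if d < 4 then 0 else if d < 6 then 1 else 2

/-- The permutation of `{0,…,215}` matching the 2-part with the 3-part. -/
def matchPerm (t : ℕ) : ℕ :=
  if t < 50 then t else if t < 73 then t + 58 else if t < 96 then t + 89
  else if t < 154 then t - 46 else if t < 185 then t - 23 else t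

/-- Its inverse. -/
def matchInv (t : ℕ) : ℕ :=
  if t < 50 then t else if t < 108 then t + 46 else if t < 131 then t - 58
  else if t < 162 then t + 23 else if t < 185 then t - 89 else t

/-- The residue mod 6 of the `t`-th element. -/
def resSix (t : ℕ) : ℕ :=
  if t < 50 then 0 else if t < 73 then 4 else if t < 96 then 2
  else if t < 154 then 3 else if t < 185 then 1 else 5

lemma cyc_relPrime {a b : ℕ} (ha : 0 < a) (hb : 0 < b) (hab : a ≠ b) :
    IsRelPrime (cyclotomic a ℤ) (cyclotomic b ℤ) := by
  rw [(cyclotomic.irreducible ha).isRelPrime_iff_not_dvd]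
  intro h
  have h2 := (cyclotomic.irreducible ha).associated_of_dvd (cyclotomic.irreducible hb) h
  exact hab (cyclotomic_injective (R := ℤ)
    (eq_of_monic_of_associated (cyclotomic.monic a ℤ) (cyclotomic.monic b ℤ) h2))

lemma cyc_dvd_of_sum {s : ℕ} (hs : 0 < s) (P : ℤ[X])
    (h : ∀ z : ℂ, IsPrimitiveRoot z s → aeval z P = 0) : cyclotomic s ℤ ∣ P := by
  have hz := Complex.isPrimitiveRoot_exp s hs.ne'
  rw [cyclotomic_eq_minpoly hz hs]
  exact minpoly.isIntegrallyClosed_dvd (hz.isIntegral hs) (h _ hz)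

lemma sum_blocks (a b : ℕ) (f : ℕ → ℂ) (w : ℂ) (hw : w ^ b = 1) (hw1 : w ≠ 1) :
    ∑ t ∈ Finset.range (a * b), f (t / b) * w ^ (t % b) = 0 := by
  have hg : ∑ i ∈ Finset.range b, w ^ i = 0 := by
    rw [geom_sum_eq hw1, hw]; simp
  induction a with
  | zero => simp
  | succ a ih =>
    rw [add_mul, one_mul, Finset.sum_range_add, ih, zero_add]
    have : ∀ i ∈ Finset.range b, f ((a * b + i) / b) * w ^ ((a * b + i) % b) = f a * w ^ i := by
      intro i hi
      have hi := Finset.mem_range.mp hi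
      have hb : 0 < b := by omega
      rw [mul_comm a b, Nat.mul_add_div hb, Nat.div_eq_of_lt hi, Nat.mul_add_mod,
        Nat.mod_eq_of_lt hi, add_zero]
    rw [Finset.sum_congr rfl this, ← Finset.mul_sum, hg, mul_zero]

set_option maxRecDepth 10000 in
lemma inv_left : ∀ t < 216, matchInv (matchPerm t) = t := by decide

set_option maxRecDepth 10000 in
lemma inv_right : ∀ t < 216, matchPerm (matchInv t) = t := by decide

set_option maxRecDepth 10000 in
lemma resSix_spec : ∀ t < 216, resSix t % 6 = resSix t ∧ resSix t % 2 = baseTwo (t / 8) % 2 ∧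
    resSix t % 3 = baseThree (matchPerm t / 27) % 3 := by decide

lemma sum_matchPerm (F : ℕ → ℂ) :
    ∑ t ∈ Finset.range 216, F (matchPerm t) = ∑ t ∈ Finset.range 216, F t := by
  refine Finset.sum_nbij' matchPerm matchInv ?_ ?_ ?_ ?_ ?_
  · intro t ht; simp only [Finset.mem_range, matchPerm] at *; split_ifs <;> omega
  · intro t ht; simp only [Finset.mem_range, matchInv] at *; split_ifs <;> omega
  · intro t ht; exact inv_left t (Finset.mem_range.mp ht)
  · intro t ht; exact inv_right t (Finset.mem_range.mp ht)
  · intro t ht; rfl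

lemma pow_of_modEq {z : ℂ} {s a b : ℕ} (hz : z ^ s = 1) (h : a ≡ b [MOD s]) : z ^ a = z ^ b := by
  rw [pow_eq_pow_mod a hz, pow_eq_pow_mod b hz, h]

lemma sum_resSix {z : ℂ} (hz : IsPrimitiveRoot z 6) :
    ∑ t ∈ Finset.range 216, z ^ resSix t = 0 := by
  have h6 : z ^ 2 - z + 1 = 0 := by
    have := hz.isRoot_cyclotomic (by norm_num)
    rw [cyclotomic_six] at this
    simpa [IsRoot] using this
  have h1 : z ^ 3 = -1 := by linear_combination (z + 1) * h6
  have key : ∀ (a b r : ℕ), (∀ t, a ≤ t → t < a + b → resSix t = r) →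
      ∑ t ∈ Finset.range (a + b), z ^ resSix t
        = ∑ t ∈ Finset.range a, z ^ resSix t + b * z ^ r := by
    intro a b r h
    rw [Finset.sum_range_add]
    congr 1
    rw [Finset.sum_congr rfl (g := fun _ => z ^ r)]
    · simp
    · intro i hi
      have hi := Finset.mem_range.mp hi
      rw [h _ (by omega) (by omega)]
  have e1 := key 0 50 0 (by intro t _ _; simp only [resSix]; split_ifs <;> omega)
  have e2 := key 50 23 4 (by intro t _ _; simp only [resSix]; split_ifs <;> omega)
  have e3 := key 73 23 2 (by intro t _ _; simp only [resSix]; split_ifs <;> omega)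
  have e4 := key 96 58 3 (by intro t _ _; simp only [resSix]; split_ifs <;> omega)
  have e5 := key 154 31 1 (by intro t _ _; simp only [resSix]; split_ifs <;> omega)
  have e6 := key 185 31 5 (by intro t _ _; simp only [resSix]; split_ifs <;> omega)
  norm_num only [Finset.range_zero, Finset.sum_empty] at e1 e2 e3 e4 e5 e6
  rw [e6, e5, e4, e3, e2, e1]
  have h4 : z ^ 4 = -z := by linear_combination z * h1
  have h5 : z ^ 5 = -z ^ 2 := by linear_combination z ^ 2 * h1
  rw [h4, h5, h1]
  linear_combination (-8) * h6

theorem exists_small_set_two_three (n m : ℕ) (hn : 9 ≤ n) (hm : 6 ≤ m) :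
    ∃ A : Finset (ZMod (2 ^ n * 3 ^ m)),
      A.card = 216 ∧
      (cyclotomic (2 ^ n) ℤ * cyclotomic (2 ^ (n - 1)) ℤ * cyclotomic (2 ^ (n - 2)) ℤ *
        cyclotomic (3 ^ m) ℤ * cyclotomic (3 ^ (m - 1)) ℤ * cyclotomic (3 ^ (m - 2)) ℤ *
        cyclotomic 6 ℤ) ∣ zmaskPoly (2 ^ n * 3 ^ m) A := by
  obtain ⟨k, rfl⟩ : ∃ k, n = k + 3 := ⟨n - 3, by omega⟩
  obtain ⟨l, rfl⟩ : ∃ l, m = l + 3 := ⟨m - 3, by omega⟩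
  have hk : 6 ≤ k := by omega
  have hl : 3 ≤ l := by omega
  have hu : 2 ^ 6 ≤ 2 ^ k := Nat.pow_le_pow_right (by norm_num) hk
  have hv : 3 ^ 3 ≤ 3 ^ l := Nat.pow_le_pow_right (by norm_num) hl
  have hvo : 3 ^ l % 2 = 1 := by simp [Nat.pow_mod]
  have co : Nat.Coprime (2 ^ (k + 3)) (3 ^ (l + 3)) := Nat.Coprime.pow _ _ (by norm_num)
  set M := 2 ^ (k + 3) * 3 ^ (l + 3) with hM
  have hMpos : 0 < M := by positivity
  have : NeZero M := ⟨hMpos.ne'⟩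
  let x : ℕ → ℕ := fun t => baseTwo (t / 8) + 2 ^ k * (t % 8)
  let y : ℕ → ℕ := fun p => baseThree (p / 27) + 3 ^ l * (p % 27)
  let e : ℕ → ℕ := fun t => (Nat.chineseRemainder co (x t) (y (matchPerm t))).1
  have he2 : ∀ t, e t ≡ x t [MOD 2 ^ (k + 3)] := fun t =>
    (Nat.chineseRemainder co (x t) (y (matchPerm t))).2.1
  have he3 : ∀ t, e t ≡ y (matchPerm t) [MOD 3 ^ (l + 3)] := fun t =>
    (Nat.chineseRemainder co (x t) (y (matchPerm t))).2.2
  have hinj : ∀ s < 216, ∀ t < 216, ((e s : ℕ) : ZMod M) = ((e t : ℕ) : ZMod M) → s = t := by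
    intro s hs t ht h
    rw [ZMod.natCast_eq_natCast_iff] at h
    have h2 : x s ≡ x t [MOD 2 ^ (k + 3)] :=
      (he2 s).symm.trans ((h.of_dvd (Dvd.intro _ rfl)).trans (he2 t))
    have hb : ∀ t < 216, baseTwo (t / 8) < 2 ^ k := by
      intro t ht; simp only [baseTwo]; split_ifs <;> omega
    have hlt : ∀ t < 216, x t < 2 ^ (k + 3) := by
      intro t ht
      have h1 := hb t ht
      have h2 : 2 ^ k * (t % 8) ≤ 2 ^ k * 7 := Nat.mul_le_mul_left _ (by omega)
      simp only [x, pow_succ]; omega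
    have h3 : x s = x t := Nat.ModEq.eq_of_lt_of_lt h2 (hlt s hs) (hlt t ht)
    have hmod : ∀ t < 216, x t % 2 ^ k = baseTwo (t / 8) := by
      intro t ht; simp only [x]; rw [Nat.add_mul_mod_self_left, Nat.mod_eq_of_lt (hb t ht)]
    have h4 : baseTwo (s / 8) = baseTwo (t / 8) := by rw [← hmod s hs, ← hmod t ht, h3]
    have h5 : s % 8 = t % 8 := by
      simp only [x, h4] at h3
      exact Nat.eq_of_mul_eq_mul_left (by positivity : 0 < 2 ^ k) (Nat.add_left_cancel h3)
    have h6 : s / 8 = t / 8 := by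
      simp only [baseTwo] at h4; split_ifs at h4 <;> omega
    omega
  have hinj' : Set.InjOn (fun t => ((e t : ℕ) : ZMod M)) (Finset.range 216 : Finset ℕ) := by
    intro s hs t ht h
    exact hinj s (by simpa using hs) t (by simpa using ht) h
  refine ⟨(Finset.range 216).image (fun t => ((e t : ℕ) : ZMod M)), ?_, ?_⟩
  · rw [Finset.card_image_of_injOn hinj', Finset.card_range]
  generalize hP : zmaskPoly M ((Finset.range 216).image (fun t => ((e t : ℕ) : ZMod M))) = P
  have hev : ∀ z : ℂ, z ^ M = 1 → aeval z P = ∑ t ∈ Finset.range 216, z ^ e t := by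
    intro z hz
    rw [← hP, zmaskPoly, Finset.sum_image hinj', map_sum]
    refine Finset.sum_congr rfl fun t _ => ?_
    rw [map_pow, aeval_X, ZMod.val_natCast, ← pow_eq_pow_mod _ hz]
  have htwo : ∀ j, k < j → j ≤ k + 3 → cyclotomic (2 ^ j) ℤ ∣ P := by
    intro j h1 h2
    refine cyc_dvd_of_sum (by positivity) _ fun z hz => ?_
    have hz2 : z ^ (2 ^ (k + 3)) = 1 := (hz.pow_eq_one_iff_dvd _).2 (pow_dvd_pow _ h2)
    rw [hev z (by rw [hM, pow_mul, hz2, one_pow])]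
    rw [← sum_blocks 27 8 (fun c => z ^ baseTwo c) (z ^ 2 ^ k)
      (by rw [← pow_mul, ← hz2, pow_add]; norm_num)
      (by rw [Ne, hz.pow_eq_one_iff_dvd, Nat.pow_dvd_pow_iff_le_right (by norm_num)]; omega)]
    refine Finset.sum_congr rfl fun t _ => ?_
    rw [pow_of_modEq hz2 (he2 t), ← pow_mul, ← pow_add]
  have hthree : ∀ j, l < j → j ≤ l + 3 → cyclotomic (3 ^ j) ℤ ∣ P := by
    intro j h1 h2
    refine cyc_dvd_of_sum (by positivity) _ fun z hz => ?_
    have hz2 : z ^ (3 ^ (l + 3)) = 1 := (hz.pow_eq_one_iff_dvd _).2 (pow_dvd_pow _ h2)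
    rw [hev z (by rw [hM, mul_comm, pow_mul, hz2, one_pow])]
    rw [← sum_blocks 8 27 (fun c => z ^ baseThree c) (z ^ 3 ^ l)
      (by rw [← pow_mul, ← hz2, pow_add]; norm_num)
      (by rw [Ne, hz.pow_eq_one_iff_dvd, Nat.pow_dvd_pow_iff_le_right (by norm_num)]; omega)]
    refine Eq.trans ?_ (sum_matchPerm (fun p => z ^ baseThree (p / 27) * (z ^ 3 ^ l) ^ (p % 27)))
    refine Finset.sum_congr rfl fun t _ => ?_
    rw [pow_of_modEq hz2 (he3 t), ← pow_mul, ← pow_add]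
  have hsix : cyclotomic 6 ℤ ∣ P := by
    refine cyc_dvd_of_sum (by positivity) _ fun z hz => ?_
    have h6M : 6 ∣ M := mul_dvd_mul (dvd_pow_self 2 (by omega)) (dvd_pow_self 3 (by omega))
    rw [hev z ((hz.pow_eq_one_iff_dvd _).2 h6M), ← sum_resSix hz]
    refine Finset.sum_congr rfl fun t ht => ?_
    have ht := Finset.mem_range.mp ht
    refine pow_of_modEq hz.pow_eq_one ?_
    have a2 : e t % 2 = baseTwo (t / 8) % 2 := by
      have h1 := (he2 t).of_dvd (dvd_pow_self 2 (by omega : k + 3 ≠ 0))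
      have h2 : x t ≡ baseTwo (t / 8) [MOD 2] := by
        have : 2 ∣ 2 ^ k * (t % 8) := Dvd.dvd.mul_right (dvd_pow_self 2 (by omega)) _
        simp only [x, Nat.ModEq]; omega
      exact h1.trans h2
    have a3 : e t % 3 = baseThree (matchPerm t / 27) % 3 := by
      have h1 := (he3 t).of_dvd (dvd_pow_self 3 (by omega : l + 3 ≠ 0))
      have h2 : y (matchPerm t) ≡ baseThree (matchPerm t / 27) [MOD 3] := by
        have : 3 ∣ 3 ^ l * (matchPerm t % 27) := Dvd.dvd.mul_right (dvd_pow_self 3 (by omega)) _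
        simp only [y, Nat.ModEq]; omega
      exact h1.trans h2
    have b := resSix_spec t ht
    simp only [Nat.ModEq]
    omega
  have E1 : k + 3 - 1 = k + 2 := rfl
  have E2 : k + 3 - 2 = k + 1 := rfl
  have E3 : l + 3 - 1 = l + 2 := rfl
  have E4 : l + 3 - 2 = l + 1 := rfl
  rw [E1, E2, E3, E4]
  have d1 := htwo (k + 3) (by omega) (by omega)
  have d2 := htwo (k + 2) (by omega) (by omega)
  have d3 := htwo (k + 1) (by omega) (by omega)
  have d4 := hthree (l + 3) (by omega) (by omega)
  have d5 := hthree (l + 2) (by omega) (by omega)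
  have d6 := hthree (l + 1) (by omega) (by omega)
  clear_value M
  clear hP hev htwo hthree
  have p2 : ∀ j, 2 ^ k * 2 ^ j = 2 ^ (k + j) := fun j => (pow_add _ _ _).symm
  have p3 : ∀ j, 3 ^ l * 3 ^ j = 3 ^ (l + j) := fun j => (pow_add _ _ _).symm
  have q1 := p2 1
  have q2 := p2 2
  have q3 := p2 3
  have r1 := p3 1
  have r2 := p3 2
  have r3 := p3 3
  norm_num only at q1 q2 q3 r1 r2 r3 hu hv
  refine IsRelPrime.mul_dvd ?_ (IsRelPrime.mul_dvd ?_ (IsRelPrime.mul_dvd ?_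
    (IsRelPrime.mul_dvd ?_ (IsRelPrime.mul_dvd ?_ (IsRelPrime.mul_dvd ?_ d1 d2) d3) d4) d5) d6) hsix
  all_goals
    repeat' apply IsRelPrime.mul_left
  all_goals exact cyc_relPrime (by omega) (by omega) (by omega)
end

section
/- Let M = p^n q^m with p, q distinct primes, let 1 ≤ a < n and 1 ≤ b < m, and assume p > q^b. Let A : ℤ_M → ℕ be a multiset with positive total mass such that the product Φ_{p^n}(X) Φ_{p^{n-1}}(X) ⋯ Φ_{p^{n-a+1}}(X) · Φ_{q^m}(X) Φ_{q^{m-1}}(X) ⋯ Φ_{q^{m-b+1}}(X) · Φ_{pq}(X) divides A(X). Then |A| > p^a q^b. -/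
open Polynomial

/-- Sum of the coefficients of `f` at exponents congruent to `t` modulo `N`. -/
noncomputable def LL (N : ℕ) (t : ZMod N) : Polynomial ℤ →ₗ[ℤ] ℤ :=
  Polynomial.lsum (fun k => if (k : ZMod N) = t then LinearMap.id else 0)

lemma LL_mono (N : ℕ) (t : ZMod N) (k : ℕ) (c : ℤ) :
    LL N t (monomial k c) = if (k : ZMod N) = t then c else 0 := by
  simp only [LL, Polynomial.lsum_apply]
  rw [Polynomial.sum_monomial_index]
  · split_ifs <;> simp
  · simp

lemma LL_shift (N : ℕ) (t : ZMod N) (s : ℕ) (f : Polynomial ℤ) :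
    LL N t (X ^ s * f) = LL N (t - s) f := by
  induction f using Polynomial.induction_on' with
  | add f g hf hg => rw [mul_add, map_add, map_add, hf, hg]
  | monomial k c =>
    rw [X_pow_mul_monomial, LL_mono, LL_mono]
    have : ((k + s : ℕ) : ZMod N) = t ↔ (k : ZMod N) = t - s := by
      push_cast; exact eq_sub_iff_add_eq.symm
    simp only [this]

lemma LL_X_sub (N : ℕ) (t : ZMod N) (s : ℕ) (f : Polynomial ℤ) :
    LL N t ((X ^ s - 1) * f) = LL N (t - s) f - LL N t f := by
  rw [sub_mul, map_sub, LL_shift, one_mul]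

lemma LL_total (N : ℕ) [NeZero N] (f : Polynomial ℤ) :
    ∑ t : ZMod N, LL N t f = f.eval 1 := by
  induction f using Polynomial.induction_on' with
  | add f g hf hg => simp only [map_add, Finset.sum_add_distrib, hf, hg, eval_add]
  | monomial k c => simp [LL_mono]

lemma LL_fiber (N d : ℕ) [NeZero N] (h : d ∣ N) (j : ZMod d) (f : Polynomial ℤ) :
    LL d j f = ∑ t : ZMod N, if ZMod.castHom h (ZMod d) t = j then LL N t f else 0 := by
  induction f using Polynomial.induction_on' with
  | add f g hf hg =>
    rw [map_add, hf, hg, ← Finset.sum_add_distrib]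
    refine Finset.sum_congr rfl fun t _ => ?_
    split_ifs <;> simp
  | monomial k c =>
    rw [LL_mono, Finset.sum_eq_single (k : ZMod N)]
    · rw [LL_mono, if_pos rfl, map_natCast]
    · intro t _ ht
      rw [LL_mono, if_neg (Ne.symm ht), ite_self]
    · simp

lemma LL_nonneg (N : ℕ) (t : ZMod N) (M : ℕ) (w : ZMod M → ℕ) :
    0 ≤ LL N t (wmaskPoly M w) := by
  unfold wmaskPoly
  rw [map_sum]
  refine Finset.sum_nonneg fun i _ => ?_
  rw [C_mul_X_pow_eq_monomial, LL_mono]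
  split_ifs <;> positivity

lemma eval_mask (M : ℕ) (w : ZMod M → ℕ) :
    (wmaskPoly M w).eval 1 = (wmass M w : ℤ) := by
  simp [wmaskPoly, wmass, eval_finsetSum]

lemma LL_cyc (p : ℕ) (hp : p.Prime) (k : ℕ) (hk : 1 ≤ k) (t : ZMod p) (f : Polynomial ℤ) :
    LL p t (cyclotomic (p ^ (k + 1)) ℤ * f) = p * LL p t f := by
  have := Fact.mk hp
  rw [cyclotomic_prime_pow_eq_geom_sum hp, Finset.sum_mul, map_sum]
  have : ∀ i ∈ Finset.range p, LL p t ((X ^ p ^ k) ^ i * f) = LL p t f := by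
    intro i _
    rw [← pow_mul, LL_shift]
    have : ((p ^ k * i : ℕ) : ZMod p) = 0 := by
      push_cast
      rw [ZMod.natCast_self, zero_pow (by omega), zero_mul]
    rw [this, sub_zero]
  rw [Finset.sum_congr rfl this]
  simp

lemma LL_prod (p : ℕ) (hp : p.Prime) (n : ℕ) (a : ℕ) (ha : a < n) (t : ZMod p)
    (f : Polynomial ℤ) :
    LL p t ((∏ j ∈ Finset.range a, cyclotomic (p ^ (n - j)) ℤ) * f) = p ^ a * LL p t f := by
  induction a generalizing f with
  | zero => simp
  | succ a ih =>
    rw [Finset.prod_range_succ, mul_assoc, ih (by omega)]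
    obtain ⟨k, hk⟩ : ∃ k, n - a = k + 1 := ⟨n - a - 1, by omega⟩
    rw [hk, LL_cyc p hp k (by omega)]
    ring

lemma cyc_pq (p q : ℕ) (hp : p.Prime) (hq : q.Prime) (hpq : p ≠ q) :
    (X ^ q - 1) * ((X ^ p - 1) * cyclotomic (p * q) ℤ) = (X ^ (p * q) - 1) * (X - 1) := by
  have h1 : cyclotomic (p * q) ℤ * cyclotomic q ℤ = expand ℤ p (cyclotomic q ℤ) := by
    rw [cyclotomic_expand_eq_cyclotomic_mul hp
      (fun h => hpq ((Nat.prime_dvd_prime_iff_eq hp hq).1 h)), mul_comm q p]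
  have := Fact.mk hq
  have h2 : cyclotomic q ℤ * (X - 1) = X ^ q - 1 := cyclotomic_prime_mul_X_sub_one ℤ q
  have h3 : expand ℤ p (cyclotomic q ℤ) * (X ^ p - 1) = X ^ (p * q) - 1 := by
    have := congrArg (expand ℤ p) h2
    simpa [← pow_mul] using this
  rw [← h2, ← h3, ← h1]
  ring

lemma shift_inv {N : ℕ} (s : ZMod N) (g : ZMod N → ℤ) (h : ∀ t, g (t - s) = g t)
    (k : ℕ) (t : ZMod N) : g (t - k * s) = g t := by
  induction k with
  | zero => simp
  | succ k ih =>
    rw [← ih, ← h (t - k * s)]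
    congr 1
    push_cast
    ring

lemma exists_mul_eq (p q : ℕ) (hp : p.Prime) (hq : q.Prime) (hpq : p ≠ q) (x : ZMod p) :
    ∃ k : ℕ, (k : ZMod p) * (q : ZMod p) = x := by
  have := Fact.mk hp
  have h0 : (q : ZMod p) ≠ 0 := by
    rw [Ne, ZMod.natCast_eq_zero_iff]
    exact fun h => hpq ((Nat.prime_dvd_prime_iff_eq hp hq).1 h)
  refine ⟨(x * (q : ZMod p)⁻¹).val, ?_⟩
  rw [ZMod.natCast_zmod_val, mul_assoc, inv_mul_cancel₀ h0, mul_one]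

theorem mass_gt_of_large_p (p q : ℕ) (hp : p.Prime) (hq : q.Prime) (hpq : p ≠ q)
    (n m a b : ℕ) (ha1 : 1 ≤ a) (han : a < n) (hb1 : 1 ≤ b) (hbm : b < m)
    (hlarge : q ^ b < p)
    (w : ZMod (p ^ n * q ^ m) → ℕ) (hw : 0 < wmass (p ^ n * q ^ m) w)
    (hdvd : ((∏ j ∈ Finset.range a, cyclotomic (p ^ (n - j)) ℤ) *
        (∏ j ∈ Finset.range b, cyclotomic (q ^ (m - j)) ℤ) *
        cyclotomic (p * q) ℤ) ∣ wmaskPoly (p ^ n * q ^ m) w) :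
    p ^ a * q ^ b < wmass (p ^ n * q ^ m) w := by
  by_contra hcon
  push Not at hcon
  have hnn := fun N t => LL_nonneg N t (p ^ n * q ^ m) w
  have hev := eval_mask (p ^ n * q ^ m) w
  set A := wmaskPoly (p ^ n * q ^ m) w with hA
  set W := wmass (p ^ n * q ^ m) w with hW
  clear_value A W
  have := Fact.mk hp
  have := Fact.mk hq
  have : NeZero (p * q) := ⟨mul_ne_zero hp.ne_zero hq.ne_zero⟩
  obtain ⟨H, hH⟩ := hdvd
  have hP : ∀ t : ZMod p, (p : ℤ) ^ a ∣ LL p t A := by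
    intro t
    rw [hH, mul_assoc, mul_assoc, LL_prod p hp n a han]
    exact dvd_mul_right _ _
  have hQ : ∀ t : ZMod q, (q : ℤ) ^ b ∣ LL q t A := by
    intro t
    rw [hH, mul_comm (∏ j ∈ Finset.range a, _), mul_assoc, mul_assoc, LL_prod q hq m b hbm]
    exact dvd_mul_right _ _
  have hpa : (0 : ℤ) < (p : ℤ) ^ a := pow_pos (by exact_mod_cast hp.pos) _
  -- an empty class modulo `p`
  obtain ⟨i, hi⟩ : ∃ i : ZMod p, LL p i A = 0 := by
    by_contra hne
    push Not at hne
    have h1 : ∀ t ∈ (Finset.univ : Finset (ZMod p)), (p : ℤ) ^ a ≤ LL p t A := fun t _ =>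
      Int.le_of_dvd (lt_of_le_of_ne (hnn p t) (Ne.symm (hne t))) (hP t)
    have h2 := Finset.card_nsmul_le_sum _ _ _ h1
    rw [LL_total, hev, Finset.card_univ, ZMod.card, nsmul_eq_mul] at h2
    have h3 : (W : ℤ) ≤ (p : ℤ) ^ a * (q : ℤ) ^ b := by exact_mod_cast hcon
    have h4 : (q : ℤ) ^ b < p := by exact_mod_cast hlarge
    nlinarith
  have hrow : ∀ t : ZMod (p * q), ZMod.castHom (dvd_mul_right p q) (ZMod p) t = i →
      LL (p * q) t A = 0 := by
    intro t ht
    rw [LL_fiber (p * q) p (dvd_mul_right p q), Finset.sum_eq_zero_iff_of_nonneg] at hi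
    · simpa [ht] using hi t (Finset.mem_univ _)
    · intro s _
      split_ifs
      · exact hnn _ _
      · exact le_rfl
  have hE : ∀ t : ZMod (p * q), LL (p * q) (t - (q : ZMod (p * q))) ((X ^ p - 1) * A)
      = LL (p * q) t ((X ^ p - 1) * A) := by
    intro t
    rw [← sub_eq_zero, ← LL_X_sub]
    have : (X ^ q - 1) * ((X ^ p - 1) * A) = (X ^ (p * q) - 1) * ((X - 1) *
        ((∏ j ∈ Finset.range a, cyclotomic (p ^ (n - j)) ℤ) *
        (∏ j ∈ Finset.range b, cyclotomic (q ^ (m - j)) ℤ) * H)) := by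
      rw [← mul_assoc _ (X - 1 : ℤ[X]), ← cyc_pq p q hp hq hpq, hH]
      ring
    rw [this, LL_X_sub, ZMod.natCast_self, sub_zero, sub_self]
  have hE0 : ∀ t : ZMod (p * q), LL (p * q) t ((X ^ p - 1) * A) = 0 := by
    intro t
    obtain ⟨k, hk⟩ := exists_mul_eq p q hp hq hpq
      (ZMod.castHom (dvd_mul_right p q) (ZMod p) t - i)
    rw [← shift_inv _ (fun t => LL (p * q) t ((X ^ p - 1) * A)) hE k t]
    rw [LL_X_sub, hrow, hrow, sub_zero]
    · rw [map_sub, map_mul, map_natCast, map_natCast, hk]; ring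
    · rw [map_sub, map_sub, map_mul, map_natCast, map_natCast, map_natCast, hk,
        ZMod.natCast_self]; ring
  have hq0 : ∀ j : ZMod q, LL q (j - (p : ZMod q)) A = LL q j A := by
    intro j
    rw [← sub_eq_zero, ← LL_X_sub, LL_fiber (p * q) q (dvd_mul_left q p)]
    simp [hE0]
  have hconst : ∀ j : ZMod q, LL q j A = LL q 0 A := by
    intro j
    obtain ⟨k, hk⟩ := exists_mul_eq q p hq hp hpq.symm j
    rw [← shift_inv _ (fun t => LL q t A) hq0 k j]
    simp only [hk, sub_self]
  have htot : (W : ℤ) = q * LL q 0 A := by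
    rw [← hev, ← LL_total q, Finset.sum_congr rfl (fun j _ => hconst j)]
    simp
  have hd1 : q ^ (b + 1) ∣ W := by
    have : (q : ℤ) ^ (b + 1) ∣ W := by
      rw [htot, pow_succ']
      exact mul_dvd_mul_left _ (hQ 0)
    exact_mod_cast this
  have hd2 : p ^ a ∣ W := by
    have : (p : ℤ) ^ a ∣ W := by
      rw [← hev, ← LL_total p]
      exact Finset.dvd_sum fun t _ => hP t
    exact_mod_cast this
  have hcop : Nat.Coprime (p ^ a) (q ^ (b + 1)) :=
    Nat.Coprime.pow _ _ ((Nat.coprime_primes hp hq).2 hpq)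
  have hle := Nat.le_of_dvd hw (hcop.mul_dvd_of_dvd_of_dvd hd2 hd1)
  have hlt : p ^ a * q ^ b < p ^ a * q ^ (b + 1) :=
    Nat.mul_lt_mul_of_pos_left (Nat.pow_lt_pow_right hq.one_lt (Nat.lt_succ_self b))
      (pow_pos hp.pos _)
  omega
end

section
/- Let p be a prime and let S = {p^{α_1}, …, p^{α_m}}, where α_1, …, α_m ∈ ℕ are distinct positive integers. Then MIN(S) = FIB(S) = p^m. -/
open Polynomial

/-- `MIN(S)`: the minimal size of a nonempty finite `A ⊆ ℕ` with `Φ_s ∣ A(X)` for all `s ∈ S`. -/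
noncomputable def MINs (S : Finset ℕ) : ℕ :=
  sInf {k | ∃ A : Finset ℕ, A.Nonempty ∧ A.card = k ∧
    ∀ s ∈ S, cyclotomic s ℤ ∣ maskPoly A}

theorem maskPoly_eval_one (A : Finset ℕ) : (maskPoly A).eval 1 = (A.card : ℤ) := by
  simp [maskPoly, eval_finsetSum]

theorem fiberPoly_prime_pow (p : ℕ) (hp : p.Prime) (k : ℕ) (hk : 1 ≤ k) :
    fiberPoly (p ^ k) p = cyclotomic (p ^ k) ℤ := by
  obtain ⟨n, rfl⟩ : ∃ n, k = n + 1 := ⟨k - 1, by omega⟩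
  rw [cyclotomic_prime_pow_eq_geom_sum hp, fiberPoly, pow_succ, Nat.mul_div_cancel _ hp.pos]
  refine Finset.sum_congr rfl fun i _ => ?_
  rw [← pow_mul, mul_comm]

theorem isFibered_iff (p : ℕ) (hp : p.Prime) (k : ℕ) (hk : 1 ≤ k) (A : Finset ℕ) :
    IsFibered A (p ^ k) ↔ cyclotomic (p ^ k) ℤ ∣ maskPoly A := by
  rw [← fiberPoly_prime_pow p hp k hk]
  constructor
  · rintro ⟨q, hq, hqd, h⟩
    have : q = p := (Nat.prime_dvd_prime_iff_eq hq hp).1 (hq.dvd_of_dvd_pow hqd)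
    rwa [this] at h
  · intro h
    exact ⟨p, hp, dvd_pow_self p (by omega), h⟩

theorem prod_eval_one (p : ℕ) (hp : p.Prime) (T : Finset ℕ) (hT : ∀ t ∈ T, 1 ≤ t) :
    (∏ t ∈ T, cyclotomic (p ^ t) ℤ).eval 1 = (p : ℤ) ^ T.card := by
  rw [eval_prod]
  refine Finset.prod_eq_pow_card fun t ht => ?_
  obtain ⟨n, rfl⟩ : ∃ n, t = n + 1 := ⟨t - 1, by have := hT t ht; omega⟩
  have := Fact.mk hp
  exact eval_one_cyclotomic_prime_pow n

theorem lower_bound (p : ℕ) (hp : p.Prime) (T : Finset ℕ) (hT : ∀ t ∈ T, 1 ≤ t)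
    (A : Finset ℕ) (hA : A.Nonempty) (h : ∀ t ∈ T, cyclotomic (p ^ t) ℤ ∣ maskPoly A) :
    p ^ T.card ≤ A.card := by
  have hd : (∏ t ∈ T, cyclotomic (p ^ t) ℤ) ∣ maskPoly A := by
    refine Finset.prod_dvd_of_isRelPrime ?_ h
    intro s _ t _ hst
    have is := cyclotomic.irreducible (pow_pos hp.pos s)
    have it := cyclotomic.irreducible (pow_pos hp.pos t)
    refine (Irreducible.isRelPrime_iff_not_dvd is).2 fun hdvd => hst ?_
    have ha := is.associated_of_dvd it hdvd
    have he := eq_of_monic_of_associated (cyclotomic.monic _ ℤ) (cyclotomic.monic _ ℤ) ha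
    exact Nat.pow_right_injective hp.two_le (cyclotomic_injective he)
  have h1 := eval_dvd (x := 1) hd
  rw [prod_eval_one p hp T hT, maskPoly_eval_one] at h1
  exact Nat.le_of_dvd hA.card_pos (by exact_mod_cast h1)

theorem exists_set (p : ℕ) (hp : p.Prime) (T : Finset ℕ) :
    (∀ t ∈ T, 1 ≤ t) → ∃ A : Finset ℕ, maskPoly A = ∏ t ∈ T, cyclotomic (p ^ t) ℤ ∧
      ∀ k, (∀ t ∈ T, t ≤ k) → ∀ a ∈ A, a < p ^ k := by
  induction T using Finset.induction_on_max with
  | empty =>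
    intro _
    refine ⟨{0}, by simp [maskPoly], ?_⟩
    intro k _ a ha
    rw [Finset.mem_singleton.1 ha]
    exact pow_pos hp.pos k
  | insert k T hlt ih =>
    intro hT
    obtain ⟨A, hA, hb⟩ := ih fun t ht => hT t (Finset.mem_insert_of_mem ht)
    have hk := hT k (Finset.mem_insert_self _ _)
    obtain ⟨n, rfl⟩ : ∃ n, k = n + 1 := ⟨k - 1, by omega⟩
    have hb' := hb n fun t ht => by have := hlt t ht; omega
    have hq : 0 < p ^ n := pow_pos hp.pos n
    refine ⟨(A ×ˢ Finset.range p).image fun x => x.1 + p ^ n * x.2, ?_, ?_⟩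
    · rw [Finset.prod_insert (fun h => lt_irrefl _ (hlt _ h)), ← hA, maskPoly, Finset.sum_image,
        cyclotomic_prime_pow_eq_geom_sum hp, Finset.sum_product, mul_comm, maskPoly,
        Finset.sum_mul_sum]
      · simp only [pow_add, pow_mul]
      · rintro ⟨a, i⟩ hx ⟨b, j⟩ hy hxy
        simp only [Finset.coe_product, Set.mem_prod, Finset.mem_coe] at hx hy
        have ha := hb' a hx.1
        have hb2 := hb' b hy.1
        simp only at hxy
        have e1 := congrArg (· % p ^ n) hxy
        simp only [Nat.add_mul_mod_self_left, Nat.mod_eq_of_lt ha, Nat.mod_eq_of_lt hb2] at e1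
        subst e1
        have e2 := Nat.eq_of_mul_eq_mul_left hq (Nat.add_left_cancel hxy)
        rw [e2]
    · intro k hk' a ha
      obtain ⟨⟨b, j⟩, hx, rfl⟩ := Finset.mem_image.1 ha
      rw [Finset.mem_product, Finset.mem_range] at hx
      have h1 := hb' b hx.1
      have h2 : p ^ n * (j + 1) ≤ p ^ n * p := Nat.mul_le_mul_left _ hx.2
      have h3 : p ^ (n + 1) ≤ p ^ k :=
        Nat.pow_le_pow_right hp.pos (hk' _ (Finset.mem_insert_self _ _))
      rw [pow_succ] at h3
      rw [mul_add] at h2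
      simp only
      omega

/-- Lemma 1.2: for a prime `p` and `S = {p^{α_1}, …, p^{α_m}}` with distinct positive
exponents, `MIN(S) = FIB(S) = p^m`. -/
theorem min_eq_fib_prime_powers (p : ℕ) (hp : p.Prime) (m : ℕ) (hm : 0 < m)
    (α : Fin m → ℕ) (hinj : Function.Injective α) (hpos : ∀ i, 1 ≤ α i) :
    MINs (Finset.image (fun i => p ^ α i) Finset.univ) = p ^ m ∧
    FIBs (Finset.image (fun i => p ^ α i) Finset.univ) = p ^ m := by
  set T : Finset ℕ := Finset.univ.image α with hTdef
  have hT : ∀ t ∈ T, 1 ≤ t := by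
    intro t ht
    obtain ⟨i, _, rfl⟩ := Finset.mem_image.1 ht
    exact hpos i
  have hc : T.card = m := by simp [hTdef, Finset.card_image_of_injective _ hinj]
  have hS : Finset.image (fun i => p ^ α i) Finset.univ = T.image (fun t => p ^ t) := by
    rw [hTdef, Finset.image_image]
    rfl
  have hmin : MINs (T.image fun t => p ^ t) = p ^ m := by
    obtain ⟨A, hA, -⟩ := exists_set p hp T hT
    have hcard : A.card = p ^ m := by
      have := maskPoly_eval_one A
      rw [hA, prod_eval_one p hp T hT, hc] at this
      exact_mod_cast this.symm
    refine IsLeast.csInf_eq ⟨⟨A, ?_, hcard, ?_⟩, ?_⟩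
    · rw [← Finset.card_pos, hcard]
      exact pow_pos hp.pos m
    · intro s hs
      obtain ⟨t, ht, rfl⟩ := Finset.mem_image.1 hs
      rw [hA]
      exact Finset.dvd_prod_of_mem (fun t => cyclotomic (p ^ t) ℤ) ht
    · rintro k ⟨B, hB, rfl, h⟩
      rw [← hc]
      exact lower_bound p hp T hT B hB fun t ht => h _ (Finset.mem_image_of_mem _ ht)
  have hfib : FIBs (T.image fun t => p ^ t) = MINs (T.image fun t => p ^ t) := by
    unfold FIBs MINs
    have key : ∀ A : Finset ℕ, (∀ s ∈ T.image (fun t => p ^ t), IsFibered A s) ↔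
        ∀ s ∈ T.image (fun t => p ^ t), cyclotomic s ℤ ∣ maskPoly A := by
      intro A
      refine forall₂_congr fun s hs => ?_
      obtain ⟨t, ht, rfl⟩ := Finset.mem_image.1 hs
      exact isFibered_iff p hp t (hT t ht) A
    simp only [key]
  rw [hS]
  exact ⟨hmin, hfib.trans hmin⟩
end
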